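/- arXiv:2312.15833 — 4 statements merged into one kernel-verified Lean document; each statement's English description precedes it below -/
import Mathlib

section
/- Let (β_n)_{n≥1} be a sequence of positive real numbers with lim_{n→∞} n^{1/2} β_n = 0, and let (s_n)_{n≥1} be a deterministic sequence with s_n ∈ [n] for every n. If for each n the random permutation σ^{(n)} has law P_{n,β_n}, then |C_{s_n}(σ^{(n)})| / n converges in distribution to the uniform distribution on [0,1]; equivalently, for every x ∈ [0,1], lim_{n→∞} P_{n,β_n}({σ ∈ S_n : |C_{s_n}(σ)| ≤ x·n}) = x. -/
/-!
Since `∑ |σ i - i| = 2 ∑ (σ i - i)₊`, the Mallows weight of `σ` is, with `q = exp (-2 β)`, the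
probability that independent random barriers `a v ≤ v`, with `v - a v` a truncated geometric variable
of ratio `q`, satisfy `a (σ i) ≤ i` for all `i` (`mallowsWeight_eq`). So a Mallows permutation is a
mixture of uniform permutations respecting given barriers, where the law of the barriers is the
product law tilted by the number `cnt a ∅` of permutations respecting them.

Given barriers, the point `0` is sent to a uniform point of `{v | a v = 0}`, and splicing it out leaves
a uniform permutation of the remaining points respecting shifted barriers. This gives a recursion for
the number `cnt a T` of those permutations that have a set `T` of points in one cycle (`cnt_map`,
`cnt_insert`): the least element of `T` jumps to a uniform available point, and the event fails if it
closes up on itself before it meets the rest of `T`. When every larger value is available the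
probability `1 / #T` is preserved exactly. Otherwise the step creates an error of order the
inverse of the number of available points, and a concave potential function of the distance to the
right end sums these errors (`cnt_approx`). For typical barriers (`Good K L`, with `L` at most
`1 / β`) the total error is of order `1 / K + n / L ^ 2`. This is where `√n β_n → 0` enters.

A Chernoff bound shows that independent barriers are typical with high probability (`bad_prob`), and
the FKG inequality carries this over to the tilted law, as both `cnt a ∅` and the typical event are
decreasing in `a` (`fkg_good`). Hence under the Mallows model any fixed set `T` lies in one cycle with
probability close to `1 / #T` (`oneCycle_approx`). Summing over `m`-tuples of points, the
`m`-th moment of the normalized length of the cycle of `s` tends to `1 / (m + 1)`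
(`tendsto_moment`), which is the `m`-th moment of the uniform law; the method of moments concludes
(`tendsto_cdf`).
-/

open scoped BigOperators Classical

/-- The (unnormalized) Mallows weight `exp(-β ∑ᵢ |σ(i) - i|)` for the `L¹` distance.
Permutations of `[n] = {1, …, n}` are modeled as permutations of `Fin n`; the
displacements `|σ(i) - i|` are unchanged by this re-indexing. -/
noncomputable def mallowsWeight (n : ℕ) (β : ℝ) (σ : Equiv.Perm (Fin n)) : ℝ :=
  Real.exp (-β * ∑ i : Fin n, |((σ i : ℕ) : ℝ) - ((i : ℕ) : ℝ)|)

/-- The probability of `σ` under the Mallows permutation model `P_{n,β}`. -/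
noncomputable def mallowsProb (n : ℕ) (β : ℝ) (σ : Equiv.Perm (Fin n)) : ℝ :=
  mallowsWeight n β σ / ∑ τ : Equiv.Perm (Fin n), mallowsWeight n β τ

/-- The probability of the event `p` under the Mallows permutation model `P_{n,β}`. -/
noncomputable def mallowsP (n : ℕ) (β : ℝ) (p : Equiv.Perm (Fin n) → Prop) : ℝ :=
  ∑ σ : Equiv.Perm (Fin n), if p σ then mallowsProb n β σ else 0

/-- The set of points of the cycle of `σ` containing `s`: `{σ^k(s) : k ≥ 0}`. -/
noncomputable def cycleFinset (n : ℕ) (σ : Equiv.Perm (Fin n)) (s : Fin n) :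
    Finset (Fin n) :=
  Finset.univ.filter fun x => ∃ k : ℕ, (σ ^ k) s = x

namespace MallowsCycle

open Equiv Finset

/-! ### Permutations respecting barriers -/

/-- `σ` respects the lower barriers `a`: the value `v` sits at a position `≥ a v`. -/
def Allowed {n : ℕ} (a : Fin n → ℕ) (σ : Perm (Fin n)) : Prop :=
  ∀ i, a (σ i) ≤ (i : ℕ)

/-- All points of `T` lie in one cycle of `σ` (vacuous if `T` is empty). -/
def OneCycle {n : ℕ} (σ : Perm (Fin n)) (T : Finset (Fin n)) : Prop :=
  ∀ x ∈ T, ∀ y ∈ T, σ.SameCycle x y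

/-- The number of permutations respecting `a` that have all of `T` in one cycle; `cnt a ∅` counts
all permutations respecting `a`. -/
noncomputable def cnt {n : ℕ} (a : Fin n → ℕ) (T : Finset (Fin n)) : ℝ :=
  ∑ σ : Perm (Fin n), if Allowed a σ ∧ OneCycle σ T then 1 else 0

/-- The barriers seen by the points `1, …, n` once the point `0` has been spliced out. -/
def shift {n : ℕ} (a : Fin (n + 1) → ℕ) : Fin n → ℕ := fun v => a v.succ - 1

/-- The values available to position `i` once the points below `i` have been spliced out: those
`v ≥ i` whose barrier is at most `i`. -/
noncomputable def avail {n : ℕ} (a : Fin n → ℕ) (i : Fin n) : Finset (Fin n) :=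
  univ.filter fun v => i ≤ v ∧ a v ≤ (i : ℕ)

/-! ### Splicing out a point -/

lemma sameCycle_rel {α : Type*} [Finite α] (σ : Perm α) (r : α → α → Prop) (hr : Equivalence r)
    (h : ∀ z, r z (σ z)) {x y : α} (hxy : σ.SameCycle x y) : r x y := by
  obtain ⟨k, rfl⟩ := hxy.exists_nat_pow_eq
  clear hxy
  induction k with
  | zero => simpa using hr.refl x
  | succ k ih => rw [pow_succ', Perm.mul_apply]; exact hr.trans ih (h _)

lemma sameCycle_equivalence {α : Type*} (σ : Perm α) : Equivalence σ.SameCycle :=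
  ⟨Perm.SameCycle.refl σ, fun h => h.symm, fun h h' => h.trans h'⟩

lemma decomp_lift {n : ℕ} (p : Fin (n + 1)) (e : Perm (Fin n)) (x y : Fin n)
    (h : e.SameCycle x y) :
    (Perm.decomposeFin.symm (p, e)).SameCycle x.succ y.succ := by
  set σ := Perm.decomposeFin.symm (p, e) with hσ
  refine sameCycle_rel e (fun x y => σ.SameCycle x.succ y.succ) ⟨fun _ => .refl _ _, fun h => h.symm,
    fun h h' => h.trans h'⟩ ?_ h
  intro z
  have h1 : σ z.succ = swap 0 p (e z).succ := by simp [hσ]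
  by_cases hp : p = (e z).succ
  · rw [hp, swap_apply_right] at h1
    refine ⟨2, ?_⟩
    have h0 : σ 0 = p := by simp [hσ]
    rw [zpow_two, Perm.mul_apply, h1, h0, hp]
  · refine ⟨1, ?_⟩
    rw [zpow_one, h1, swap_apply_of_ne_of_ne (Fin.succ_ne_zero _) (Ne.symm hp)]

lemma decomp_sameCycle_zero {n : ℕ} (y : Fin n) (e : Perm (Fin n)) :
    (Perm.decomposeFin.symm (y.succ, e)).SameCycle 0 y.succ :=
  ⟨1, by simp⟩

/-- Splicing out `0` leaves the cycle partition of the other points unchanged; here `0` is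
identified with its image `y.succ`. -/
lemma decomp_collapse {n : ℕ} (y : Fin n) (e : Perm (Fin n)) (x z : Fin (n + 1))
    (h : (Perm.decomposeFin.symm (y.succ, e)).SameCycle x z) :
    e.SameCycle (Fin.cases y id x : Fin n) (Fin.cases y id z : Fin n) := by
  refine sameCycle_rel _ (fun x z => e.SameCycle (Fin.cases y id x : Fin n) (Fin.cases y id z : Fin n))
    ((sameCycle_equivalence e).comap _) ?_ h
  intro w
  refine Fin.cases ?_ (fun x => ?_) w
  · simp [Perm.SameCycle.refl]
  · simp only [Perm.decomposeFin_symm_apply_succ, Fin.cases_succ, id]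
    by_cases hp : e x = y
    · rw [hp, swap_apply_right]
      exact ⟨1, by simp [hp]⟩
    · rw [swap_apply_of_ne_of_ne (Fin.succ_ne_zero _) (by simpa using hp)]
      exact ⟨1, by simp⟩

lemma decomp_zero_rel {n : ℕ} (e : Perm (Fin n)) (x z : Fin (n + 1))
    (h : (Perm.decomposeFin.symm (0, e)).SameCycle x z) :
    (x = 0 ∧ z = 0) ∨ ∃ x' z', x = Fin.succ x' ∧ z = Fin.succ z' ∧ e.SameCycle x' z' := by
  refine sameCycle_rel _ (fun x z => (x = 0 ∧ z = 0) ∨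
    ∃ x' z', x = Fin.succ x' ∧ z = Fin.succ z' ∧ e.SameCycle x' z') ⟨?_, ?_, ?_⟩ ?_ h
  · intro x
    refine Fin.cases (by simp) (fun x => Or.inr ⟨x, x, rfl, rfl, .refl _ _⟩) x
  · rintro x y (⟨h, h'⟩ | ⟨x', y', h, h', h''⟩)
    · exact Or.inl ⟨h', h⟩
    · exact Or.inr ⟨y', x', h', h, h''.symm⟩
  · rintro x y z (⟨h, h'⟩ | ⟨x', y', h, h', h''⟩) (⟨k, k'⟩ | ⟨u', v', k, k', k''⟩)
    · exact Or.inl ⟨h, k'⟩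
    · subst h'; exact absurd k.symm (Fin.succ_ne_zero _)
    · subst k; exact absurd h'.symm (Fin.succ_ne_zero _)
    · rw [h'] at k
      have := Fin.succ_injective _ k
      subst this
      exact Or.inr ⟨x', v', h, k', h''.trans k''⟩
  · intro w
    refine Fin.cases (by simp) (fun x => Or.inr ⟨x, e x, rfl, by simp, 1, by simp⟩) w

lemma decomp_sameCycle_succ {n : ℕ} (p : Fin (n + 1)) (e : Perm (Fin n)) (x y : Fin n) :
    (Perm.decomposeFin.symm (p, e)).SameCycle x.succ y.succ ↔ e.SameCycle x y := by
  refine ⟨fun h => ?_, decomp_lift p e x y⟩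
  revert h
  refine Fin.cases (fun h => ?_) (fun q h => ?_) p
  · rcases decomp_zero_rel e _ _ h with ⟨h, -⟩ | ⟨x', y', h1, h2, h3⟩
    · exact absurd h (Fin.succ_ne_zero _)
    · rwa [Fin.succ_injective _ h1, Fin.succ_injective _ h2]
  · simpa using decomp_collapse q e _ _ h

lemma oneCycle_decomp_map {n : ℕ} (p : Fin (n + 1)) (e : Perm (Fin n)) (T : Finset (Fin n)) :
    OneCycle (Perm.decomposeFin.symm (p, e)) (T.map (Fin.succEmb n)) ↔ OneCycle e T := by
  simp [OneCycle, decomp_sameCycle_succ]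

lemma oneCycle_decomp_insert_succ {n : ℕ} (y : Fin n) (e : Perm (Fin n)) (T : Finset (Fin n)) :
    OneCycle (Perm.decomposeFin.symm (y.succ, e)) (insert 0 (T.map (Fin.succEmb n))) ↔
      OneCycle e (insert y T) := by
  rw [← oneCycle_decomp_map y.succ]
  set σ := Perm.decomposeFin.symm (y.succ, e)
  have h0 : σ.SameCycle 0 y.succ := decomp_sameCycle_zero y e
  have key : ∀ x, σ.SameCycle 0 x ↔ σ.SameCycle y.succ x :=
    fun x => ⟨fun h => h0.symm.trans h, fun h => h0.trans h⟩
  have key' : ∀ x, σ.SameCycle x 0 ↔ σ.SameCycle x y.succ :=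
    fun x => ⟨fun h => h.trans h0, fun h => h.trans h0.symm⟩
  simp [OneCycle, key, key', Perm.SameCycle.refl]

lemma not_oneCycle_decomp_insert_zero {n : ℕ} (e : Perm (Fin n)) (T : Finset (Fin n))
    (hT : T.Nonempty) :
    ¬ OneCycle (Perm.decomposeFin.symm (0, e)) (insert 0 (T.map (Fin.succEmb n))) := by
  obtain ⟨t, ht⟩ := hT
  intro h
  rcases decomp_zero_rel e 0 t.succ (h _ (by simp) _ (by simp [ht])) with ⟨_, h⟩ | ⟨x, _, h, _⟩
  · exact absurd h (Fin.succ_ne_zero _)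
  · exact absurd h.symm (Fin.succ_ne_zero _)

/-- As the value `0` has no barrier, splicing `0` in just before `p` respects `a` iff
`p` is available to position `0` and the rest respects the shifted barriers. -/
lemma allowed_decomp {n : ℕ} (a : Fin (n + 1) → ℕ) (ha : a 0 = 0) (p : Fin (n + 1))
    (e : Perm (Fin n)) :
    Allowed a (Perm.decomposeFin.symm (p, e)) ↔ a p = 0 ∧ Allowed (shift a) e := by
  simp only [Allowed, Fin.forall_fin_succ, Perm.decomposeFin_symm_apply_zero, Fin.val_zero,
    Perm.decomposeFin_symm_apply_succ, Fin.val_succ, shift, Nat.le_zero]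
  refine and_congr_right fun hp => forall_congr' fun i => ?_
  by_cases h : p = (e i).succ
  · rw [← h, swap_apply_right, ha, hp]; simp
  · rw [swap_apply_of_ne_of_ne (Fin.succ_ne_zero _) (Ne.symm h)]; omega

lemma cnt_succ {n : ℕ} (a : Fin (n + 1) → ℕ) (ha : a 0 = 0) (T : Finset (Fin (n + 1))) :
    cnt a T = ∑ p with a p = 0, ∑ e : Perm (Fin n),
      if Allowed (shift a) e ∧ OneCycle (Perm.decomposeFin.symm (p, e)) T then (1 : ℝ) else 0 := by
  rw [cnt, ← Perm.decomposeFin.symm.sum_comp, Fintype.sum_prod_type, sum_filter]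
  refine sum_congr rfl fun p _ => ?_
  by_cases hp : a p = 0
  · simp [allowed_decomp a ha, hp]
  · simp [allowed_decomp a ha, hp]

lemma cnt_map {n : ℕ} (a : Fin (n + 1) → ℕ) (ha : a 0 = 0) (T : Finset (Fin n)) :
    cnt a (T.map (Fin.succEmb n)) = #{p | a p = 0} * cnt (shift a) T := by
  simp only [cnt_succ a ha, oneCycle_decomp_map]
  rw [sum_const, nsmul_eq_mul]; rfl

lemma cnt_empty_succ {n : ℕ} (a : Fin (n + 1) → ℕ) (ha : a 0 = 0) :
    cnt a ∅ = #{p | a p = 0} * cnt (shift a) ∅ := by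
  simpa using cnt_map a ha ∅

lemma cnt_insert {n : ℕ} (a : Fin (n + 1) → ℕ) (ha : a 0 = 0) (T : Finset (Fin n))
    (hT : T.Nonempty) :
    cnt a (insert 0 (T.map (Fin.succEmb n))) =
      ∑ y with a (Fin.succ y) = 0, cnt (shift a) (insert y T) := by
  rw [cnt_succ a ha, sum_filter, Fin.sum_univ_succ, sum_filter]
  simp [ha, not_oneCycle_decomp_insert_zero, hT, oneCycle_decomp_insert_succ, cnt]

lemma cnt_singleton {n : ℕ} (a : Fin n → ℕ) (x : Fin n) : cnt a {x} = cnt a ∅ := by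
  simp [cnt, OneCycle, Perm.SameCycle.refl]

lemma cnt_nonneg {n : ℕ} (a : Fin n → ℕ) (T : Finset (Fin n)) : 0 ≤ cnt a T :=
  sum_nonneg fun _ _ => by split_ifs <;> norm_num

lemma cnt_le {n : ℕ} (a : Fin n → ℕ) (T : Finset (Fin n)) : cnt a T ≤ cnt a ∅ :=
  sum_le_sum fun σ _ => by
    by_cases h : Allowed a σ <;> simp [h, OneCycle]
    split_ifs <;> norm_num

/-! ### The potential argument -/

/-- `h` is a potential for the barriers `a`: it decreases on average along the random walk that
jumps from `i` to a uniform point of `avail a i`, stopping when it jumps to `i` itself, by at least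
`1 / #(avail a i)`, unless every value `≥ i` is available to `i`. The argument of `h` is the
number `n - i` of points from `i` on. -/
def Potential {n : ℕ} (a : Fin n → ℕ) (h : ℕ → ℝ) : Prop :=
  ∀ i : Fin n, (if ∀ v, i ≤ v → a v ≤ (i : ℕ) then (0 : ℝ) else 1)
    + ∑ v ∈ (avail a i).erase i, h (n - v) ≤ #(avail a i) * h (n - i)

lemma avail_shift {n : ℕ} (a : Fin (n + 1) → ℕ) (i : Fin n) :
    avail a i.succ = (avail (shift a) i).map (Fin.succEmb n) := by
  ext v
  refine Fin.cases ?_ (fun v => ?_) v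
  · simp [avail]
  · simp [avail, shift]

lemma Potential.shift {n : ℕ} {a : Fin (n + 1) → ℕ} {h : ℕ → ℝ} (H : Potential a h) :
    Potential (shift a) h := by
  intro i
  have := H i.succ
  rw [avail_shift, card_map, show i.succ = Fin.succEmb n i from rfl, ← map_erase, sum_map] at this
  simp only [Fin.coe_succEmb, Fin.val_succ, Nat.add_sub_add_right] at this
  refine le_trans (le_of_eq ?_) this
  congr 1
  refine if_congr ?_ rfl rfl
  rw [Fin.forall_fin_succ]
  simp [MallowsCycle.shift]

lemma exists_eq_map_succ {n : ℕ} (T : Finset (Fin (n + 1))) :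
    ∃ T' : Finset (Fin n), T = T'.map (Fin.succEmb n) ∨ T = insert 0 (T'.map (Fin.succEmb n)) := by
  refine ⟨univ.filter fun x => x.succ ∈ T, ?_⟩
  by_cases h : 0 ∈ T
  · right
    ext v
    refine Fin.cases ?_ (fun v => ?_) v <;> simp [h]
  · left
    ext v
    refine Fin.cases ?_ (fun v => ?_) v <;> simp [h]

/-- Given the barriers, the points of `T` lie in one cycle with probability about `1 / #T`, as they
do for a uniform permutation. -/
lemma cnt_approx : ∀ (n : ℕ) (a : Fin n → ℕ) (_ : ∀ v, a v ≤ (v : ℕ)) (h : ℕ → ℝ)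
    (_ : ∀ k, 0 ≤ h k) (_ : Potential a h) (T : Finset (Fin n)) (_ : T.Nonempty),
    |cnt a T - cnt a ∅ / #T| ≤ cnt a ∅ * ∑ t ∈ T, h (n - t)
  | 0, _, _, _, _, _, T, hT => by obtain ⟨x, -⟩ := hT; exact x.elim0
  | n + 1, a, ha, h, h0, H, T, hT => by
    have ha0 : a 0 = 0 := by simpa using ha 0
    have ha' : ∀ v, shift a v ≤ (v : ℕ) := fun v => by
      have := ha v.succ
      simp only [shift, Fin.val_succ] at *
      omega
    have IH := cnt_approx n (shift a) ha' h h0 H.shift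
    set W := cnt (shift a) ∅ with hW
    have hW0 : 0 ≤ W := cnt_nonneg _ _
    have hav : avail a 0 = univ.filter fun p => a p = 0 := by ext; simp [avail]
    set Y : Finset (Fin n) := univ.filter fun y => a y.succ = 0 with hY
    have hav' : (avail a 0).erase 0 = Y.map (Fin.succEmb n) := by
      ext v
      refine Fin.cases ?_ (fun v => ?_) v <;> simp [avail, hY]
    have hcard : (#(avail a 0) : ℝ) = #Y + 1 := by
      have := card_erase_add_one (s := avail a 0) (a := 0) (by simp [avail, ha0])
      rw [hav', card_map] at this
      exact_mod_cast this.symm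
    have htot : cnt a ∅ = (#Y + 1) * W := by
      rw [cnt_empty_succ a ha0, ← hav, hcard]
    obtain ⟨T', rfl | rfl⟩ := exists_eq_map_succ T
    · rw [cnt_map a ha0, cnt_empty_succ a ha0, card_map, sum_map, ← hW, mul_div_assoc, ← mul_sub,
        abs_mul, abs_of_nonneg (Nat.cast_nonneg _), mul_assoc]
      refine mul_le_mul_of_nonneg_left ?_ (Nat.cast_nonneg _)
      simpa using IH T' (by simpa using hT)
    · have hnot : (0 : Fin (n + 1)) ∉ T'.map (Fin.succEmb n) := by simp
      rcases T'.eq_empty_or_nonempty with rfl | hT'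
      · simp only [map_empty, insert_empty_eq, cnt_singleton, card_singleton, sum_singleton]
        simpa using mul_nonneg (cnt_nonneg _ _) (h0 _)
      · rw [cnt_insert a ha0 T' hT', card_insert_of_notMem hnot, sum_insert hnot, card_map, sum_map,
          htot]
        have Hi := H 0
        obtain ⟨E, hE⟩ : ∃ E : ℝ, E = if ∀ v : Fin (n + 1), 0 ≤ v → a v ≤ ((0 : Fin (n + 1)) : ℕ)
            then 0 else 1 := ⟨_, rfl⟩
        rw [← hE] at Hi
        rw [hav', sum_map, hcard] at Hi
        simp only [Fin.coe_succEmb, Fin.val_succ, Nat.add_sub_add_right, Fin.val_zero,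
          Nat.sub_zero] at Hi ⊢
        set S := ∑ t ∈ T', h (n - t) with hS
        set j : ℝ := (#T' : ℝ) with hj
        have hj0 : 0 < j := by simpa [hj] using hT'.card_pos
        set c : ℝ := (#(Y ∩ T') : ℝ) with hc
        have hcj : c ≤ j := by
          rw [hc, hj]; exact_mod_cast card_le_card inter_subset_right
        have hc0 : 0 ≤ c := by positivity
        -- each choice of the image of `0` is handled by the induction hypothesis
        have h1 : |∑ y ∈ Y, cnt (shift a) (insert y T') - ∑ y ∈ Y, W / #(insert y T')|
            ≤ ∑ y ∈ Y, W * (h (n - y) + S) := by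
          rw [← sum_sub_distrib]
          refine (abs_sum_le_sum_abs _ _).trans (sum_le_sum fun y _ => ?_)
          refine (IH _ (insert_nonempty _ _)).trans (mul_le_mul_of_nonneg_left ?_ hW0)
          by_cases hy : y ∈ T'
          · rw [insert_eq_of_mem hy]; linarith [h0 (n - y)]
          · rw [sum_insert hy]
        have h2 : ∑ y ∈ Y, W * (h (n - y) + S) = W * (∑ y ∈ Y, h (n - y) + #Y * S) := by
          rw [← mul_sum, sum_add_distrib, sum_const, nsmul_eq_mul]
        -- the main terms; `c` of the choices merge two of the points
        have h3 : ∑ y ∈ Y, W / #(insert y T') = W * (c / j + (#Y - c) / (j + 1)) := by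
          have e1 : ∑ y ∈ Y ∩ T', W / (#(insert y T') : ℝ) = c * (W / j) := by
            rw [hc, ← nsmul_eq_mul, ← sum_const]
            refine sum_congr rfl fun y hy => ?_
            rw [insert_eq_of_mem (mem_inter.1 hy).2]
          have e2 : ∑ y ∈ Y \ T', W / (#(insert y T') : ℝ) = (#Y - c) * (W / (j + 1)) := by
            have : (#Y : ℝ) - c = #(Y \ T') := by
              have := card_sdiff_add_card_inter Y T'
              rw [hc, ← this]; push_cast; ring
            rw [this, ← nsmul_eq_mul, ← sum_const]
            refine sum_congr rfl fun y hy => ?_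
            rw [card_insert_of_notMem (mem_sdiff.1 hy).2]; push_cast; rfl
          rw [← sum_inter_add_sum_sdiff Y T', e1, e2]; ring
        have h4 : |W * (c / j + (#Y - c) / (j + 1)) - (#Y + 1) * W / (j + 1)|
            ≤ W * E := by
          have e : W * (c / j + (#Y - c) / (j + 1)) - (#Y + 1) * W / (j + 1)
              = W * ((c - j) / (j * (j + 1))) := by field_simp; ring
          rw [e, abs_mul, abs_of_nonneg hW0]
          refine mul_le_mul_of_nonneg_left ?_ hW0
          rw [hE]
          split_ifs with hf
          · have : Y ∩ T' = T' := by
              refine inter_eq_right.2 fun y _ => ?_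
              simpa [hY] using hf y.succ
            rw [hc, this, ← hj]; simp
          · rw [abs_div, abs_of_nonpos (by linarith), abs_of_pos (by positivity),
              div_le_one (by positivity)]
            nlinarith
        rw [h2] at h1
        push_cast
        rw [h3] at h1
        have h5 := mul_le_mul_of_nonneg_left Hi hW0
        have h6 : 0 ≤ W * S := mul_nonneg hW0 (sum_nonneg fun _ _ => h0 _)
        calc _ ≤ _ := abs_sub_le _ (W * (c / j + (#Y - c) / (j + 1))) _
          _ ≤ _ := add_le_add h1 h4
          _ ≤ _ := by
            linarith

/-! ### Typical barriers and their potential -/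

lemma card_mul_le_two_sum (s : Finset ℕ) (hs : ∀ x ∈ s, 1 ≤ x) :
    #s * (#s + 1) ≤ 2 * ∑ x ∈ s, x := by
  induction s using Finset.induction_on_max with
  | empty => simp
  | insert m s hm ih =>
    have hm' : m ∉ s := fun h => (hm m h).false
    rw [card_insert_of_notMem hm', sum_insert hm']
    have ih' := ih fun x hx => hs x (mem_insert_of_mem hx)
    have h1 : #s ≤ m - 1 := by
      have : s ⊆ Icc 1 (m - 1) := fun x hx => by
        have := hm x hx
        have := hs x (mem_insert_of_mem hx)
        rw [mem_Icc]; omega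
      simpa using card_le_card this
    have h2 := hs m (mem_insert_self _ _)
    have h3 : #s + 1 ≤ m := by omega
    nlinarith

/-- Up to a constant, `step K L k` bounds the inverse square of the number of values available to
the position that has `k` points from it on, when this number is of order `min k L` for `k > K`. -/
noncomputable def step (K L k : ℕ) : ℝ := ((max k K : ℕ) ^ 2 : ℝ)⁻¹ + ((L : ℝ) ^ 2)⁻¹

/-- A concave potential with increments `4096 * step K L`. -/
noncomputable def pot (K L k : ℕ) : ℝ := 4096 * ∑ j ∈ range k, step K L (j + 1)

lemma step_nonneg (K L k : ℕ) : 0 ≤ step K L k := by unfold step; positivity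

lemma step_antitone {K : ℕ} (hK : 0 < K) (L : ℕ) : Antitone (step K L) := by
  intro a b hab
  unfold step
  have h : 0 < max a K := lt_max_of_lt_right hK
  gcongr

lemma pot_nonneg (K L k : ℕ) : 0 ≤ pot K L k :=
  mul_nonneg (by norm_num) (sum_nonneg fun _ _ => step_nonneg _ _ _)

lemma pot_sub {K : ℕ} (hK : 0 < K) (L : ℕ) {j k : ℕ} (hjk : j ≤ k) :
    4096 * ((k - j : ℕ) * step K L k) ≤ pot K L k - pot K L j := by
  unfold pot
  rw [← mul_sub, ← sum_Ico_eq_sub _ hjk]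
  refine mul_le_mul_of_nonneg_left ?_ (by norm_num)
  rw [← Nat.card_Ico, ← nsmul_eq_mul]
  refine card_nsmul_le_sum _ _ _ fun x hx => step_antitone hK L ?_
  rw [mem_Ico] at hx; omega

lemma pot_mono (K L : ℕ) : Monotone (pot K L) := by
  intro j k hjk
  unfold pot
  refine mul_le_mul_of_nonneg_left ?_ (by norm_num)
  exact sum_le_sum_of_subset_of_nonneg (range_mono hjk) fun _ _ _ => step_nonneg _ _ _

lemma inv_min_sq_le_step {K L k : ℕ} (hk : K ≤ k) :
    ((min k L : ℕ) ^ 2 : ℝ)⁻¹ ≤ step K L k := by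
  unfold step
  rw [max_eq_left hk]
  rcases min_choice k L with h | h <;> rw [h]
  · exact le_add_of_nonneg_right (by positivity)
  · exact le_add_of_nonneg_left (by positivity)

lemma sum_step_le {K : ℕ} (hK : 0 < K) (L n : ℕ) :
    ∑ j ∈ range n, step K L (j + 1) ≤ 2 / K + n / (L : ℝ) ^ 2 := by
  unfold step
  rw [sum_add_distrib, sum_const, card_range, nsmul_eq_mul, ← div_eq_mul_inv]
  refine add_le_add ?_ le_rfl
  have hK' : (0 : ℝ) < K := by exact_mod_cast hK
  have h1 : ∑ j ∈ range n, ((max (j + 1) K : ℕ) ^ 2 : ℝ)⁻¹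
      ≤ ∑ j ∈ range (n + K), ((max (j + 1) K : ℕ) ^ 2 : ℝ)⁻¹ :=
    sum_le_sum_of_subset_of_nonneg (range_mono (by omega)) fun _ _ _ => by positivity
  refine h1.trans ?_
  rw [← sum_range_add_sum_Ico _ (show K ≤ n + K by omega)]
  have h2 : ∑ j ∈ range K, ((max (j + 1) K : ℕ) ^ 2 : ℝ)⁻¹ = 1 / K := by
    rw [sum_congr rfl (g := fun _ => ((K : ℝ) ^ 2)⁻¹)]
    · rw [sum_const, card_range, nsmul_eq_mul]; field_simp
    · intro j hj
      rw [mem_range] at hj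
      rw [max_eq_right (by omega)]
  have h3 : ∑ j ∈ Ico K (n + K), ((max (j + 1) K : ℕ) ^ 2 : ℝ)⁻¹ ≤ 1 / K := by
    have h4 := sum_Ioc_inv_sq_le_sub (α := ℝ) hK.ne' (show K ≤ n + K by omega)
    have h5 : ∑ j ∈ Ico K (n + K), ((max (j + 1) K : ℕ) ^ 2 : ℝ)⁻¹
        = ∑ i ∈ Ioc K (n + K), ((i : ℝ) ^ 2)⁻¹ := by
      rw [← Finset.Ico_add_one_add_one_eq_Ioc, ← sum_Ico_add']
      refine sum_congr rfl fun j hj => ?_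
      rw [mem_Ico] at hj
      rw [max_eq_left (by omega)]
    rw [h5]
    refine h4.trans ?_
    rw [one_div]
    exact sub_le_self _ (by positivity)
  rw [h2]
  calc _ ≤ 1 / (K : ℝ) + 1 / K := by gcongr
    _ = _ := by ring

/-- The barriers are typical: everything is available to the last `K` positions, and order
`min k L` values are available to a position with `k > K` points from it on. -/
def Good (K L : ℕ) {n : ℕ} (a : Fin n → ℕ) : Prop :=
  (∀ v : Fin n, n - K ≤ (v : ℕ) → a v ≤ n - K) ∧
    ∀ i : Fin n, K < n - i → min (n - i) L ≤ 32 * #(avail a i)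

/-- Concavity of `pot` makes its average decrease over the `N` available points at least of order
`N * step`, which dominates `1 / N` when the barriers are typical. -/
lemma Good.potential {K L n : ℕ} (hK : 33 ≤ K) (hL : 33 ≤ L) (a : Fin n → ℕ)
    (ha : ∀ v, a v ≤ (v : ℕ)) (hG : Good K L a) : Potential a (pot K L) := by
  intro i
  have hi : i ∈ avail a i := by simp [avail, ha]
  set S := (avail a i).erase i with hS
  have hcard : #(avail a i) = #S + 1 := (card_erase_add_one hi).symm
  have hmem : ∀ v ∈ S, (i : ℕ) < v := fun v hv => by
    rw [hS, mem_erase] at hv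
    have := (mem_filter.1 hv.2).2.1
    exact lt_of_le_of_ne this (fun h => hv.1 (Fin.ext h.symm))
  rcases le_or_gt (n - (i : ℕ)) K with hik | hik
  · have hfull : ∀ v, i ≤ v → a v ≤ (i : ℕ) := fun v hv => by
      have h1 : (i : ℕ) ≤ v := hv
      have h2 := hG.1 v (by omega)
      omega
    rw [if_pos hfull, zero_add, hcard]
    have : ∑ v ∈ S, pot K L (n - v) ≤ #S • pot K L (n - i) :=
      sum_le_card_nsmul _ _ _ fun v hv => pot_mono K L (by have := hmem v hv; omega)
    rw [nsmul_eq_mul] at this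
    push_cast
    linarith [pot_nonneg K L (n - i)]
  · have hN := hG.2 i hik
    set k := n - (i : ℕ) with hk
    set N := #(avail a i) with hNdef
    have hm : 33 ≤ min k L := le_min (by omega) hL
    have hN2 : 2 ≤ N := by omega
    have hstep := inv_min_sq_le_step (K := K) (L := L) (k := k) hik.le
    have hsum : ∑ v ∈ S, 4096 * (((v : ℕ) - (i : ℕ) : ℕ) * step K L k)
        ≤ ∑ v ∈ S, (pot K L k - pot K L (n - v)) := by
      refine sum_le_sum fun v hv => ?_
      have h1 := hmem v hv
      have h2 := pot_sub (K := K) (by omega) L (show n - (v : ℕ) ≤ k by omega)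
      rwa [show k - (n - (v : ℕ)) = v - i by omega] at h2
    have hdist : #S * (#S + 1) ≤ 2 * ∑ v ∈ S, ((v : ℕ) - (i : ℕ)) := by
      have hinj : Set.InjOn (fun v : Fin n => (v : ℕ) - (i : ℕ)) S := by
        intro v hv w hw hvw
        have h1 := hmem v hv
        have h2 := hmem w hw
        simp only at hvw
        exact Fin.ext (by omega)
      have := card_mul_le_two_sum (S.image fun v : Fin n => (v : ℕ) - (i : ℕ)) (by
        intro x hx
        obtain ⟨v, hv, rfl⟩ := mem_image.1 hx
        have := hmem v hv
        omega)
      rwa [card_image_of_injOn hinj, sum_image hinj] at this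
    rw [← mul_sum, ← sum_mul, sum_sub_distrib, sum_const, nsmul_eq_mul, ← Nat.cast_sum] at hsum
    set D := ∑ v ∈ S, ((v : ℕ) - (i : ℕ)) with hD
    have hD' : (N : ℝ) ^ 2 ≤ 4 * D := by
      have : N ^ 2 ≤ 4 * D := by
        have : #S = N - 1 := by omega
        rw [this, show N - 1 + 1 = N by omega] at hdist
        obtain ⟨M, hM⟩ : ∃ M, N = M + 2 := ⟨N - 2, by omega⟩
        rw [hM] at hdist ⊢
        simp only [show M + 2 - 1 = M + 1 by omega] at hdist
        nlinarith
      exact_mod_cast this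
    have hNm : ((min k L : ℕ) : ℝ) ≤ 32 * N := by exact_mod_cast hN
    have hm0 : (0 : ℝ) < (min k L : ℕ) := by
      have : 0 < min k L := by omega
      exact_mod_cast this
    have key : 1 ≤ 4096 * ((D : ℝ) * step K L k) := by
      have h1 : (1 : ℝ) ≤ 4096 * (D * ((min k L : ℕ) ^ 2 : ℝ)⁻¹) := by
        rw [← div_eq_mul_inv, ← mul_div_assoc, le_div_iff₀ (by positivity)]
        nlinarith
      refine h1.trans ?_
      gcongr
    have hif : (if ∀ v, i ≤ v → a v ≤ (i : ℕ) then (0 : ℝ) else 1) ≤ 1 := by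
      split_ifs <;> norm_num
    have hp := pot_nonneg K L k
    rw [hcard]
    push_cast
    linarith

/-! ### The Mallows model as a mixture over random barriers -/

/-- The law of the barrier of the value `v`: the distance `v - a` is geometric with ratio `q`,
truncated at `v`. -/
noncomputable def bw (q : ℝ) (v a : ℕ) : ℝ :=
  if a = 0 then q ^ v else if a ≤ v then (1 - q) * q ^ (v - a) else 0

/-- The law of independent barriers. -/
noncomputable def bmu {n : ℕ} (q : ℝ) (a : Fin n → Fin n) : ℝ :=
  ∏ v : Fin n, bw q v (a v)

lemma bw_nonneg {q : ℝ} (hq0 : 0 ≤ q) (hq1 : q ≤ 1) (v a : ℕ) : 0 ≤ bw q v a := by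
  unfold bw
  have : 0 ≤ 1 - q := by linarith
  split_ifs <;> positivity

lemma sum_range_bw (q : ℝ) (v m : ℕ) : ∑ a ∈ range (m + 1), bw q v a = q ^ (v - m) := by
  induction m with
  | zero => simp [bw]
  | succ m ih =>
    rw [sum_range_succ, ih]
    unfold bw
    rw [if_neg (by omega)]
    split_ifs with h
    · rw [show v - m = v - (m + 1) + 1 by omega, pow_succ]; ring
    · rw [show v - m = 0 by omega, show v - (m + 1) = 0 by omega]; simp

lemma sum_bw_le (q : ℝ) {n : ℕ} (v : Fin n) (m : ℕ) :
    ∑ a : Fin n, bw q v a * (if (a : ℕ) ≤ m then 1 else 0) = q ^ ((v : ℕ) - m) := by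
  rw [Fin.sum_univ_eq_sum_range (fun a => bw q v a * (if a ≤ m then 1 else 0)), ← sum_range_bw]
  have hv := v.2
  have h1 : ∑ a ∈ range n, bw q v a * (if a ≤ m then 1 else 0)
      = ∑ a ∈ range (n + (m + 1)), bw q v a * (if a ≤ m then 1 else 0) := by
    refine sum_subset (range_mono (by omega)) fun a _ ha => ?_
    rw [mem_range] at ha
    unfold bw
    rw [if_neg (by omega), if_neg (by omega), zero_mul]
  have h2 : ∑ a ∈ range (m + 1), bw q v a
      = ∑ a ∈ range (m + 1), bw q v a * (if a ≤ m then 1 else 0) := by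
    refine sum_congr rfl fun a ha => ?_
    rw [mem_range] at ha
    rw [if_pos (by omega), mul_one]
  rw [h1, h2]
  symm
  refine sum_subset (range_mono (by omega)) fun a _ ha => ?_
  rw [mem_range] at ha
  rw [if_neg (by omega), mul_zero]

lemma sum_bw (q : ℝ) {n : ℕ} (v : Fin n) : ∑ a : Fin n, bw q v a = 1 := by
  have h := sum_bw_le q v n
  rw [Nat.sub_eq_zero_of_le v.2.le, pow_zero] at h
  rw [← h]
  refine sum_congr rfl fun a _ => ?_
  rw [if_pos a.2.le, mul_one]

lemma sum_bmu_mul_prod (q : ℝ) {n : ℕ} (φ : Fin n → Fin n → ℝ) :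
    ∑ a, bmu q a * ∏ v, φ v (a v) = ∏ v : Fin n, ∑ x : Fin n, bw q v x * φ v x := by
  rw [prod_univ_sum, Fintype.piFinset_univ]
  simp only [bmu, prod_mul_distrib]

lemma sum_bmu (q : ℝ) (n : ℕ) : ∑ a : Fin n → Fin n, bmu q a = 1 := by
  have := sum_bmu_mul_prod q (n := n) fun _ _ => 1
  simpa [sum_bw] using this

lemma bmu_nonneg {q : ℝ} (hq0 : 0 ≤ q) (hq1 : q ≤ 1) {n : ℕ} (a : Fin n → Fin n) :
    0 ≤ bmu q a := prod_nonneg fun _ _ => bw_nonneg hq0 hq1 _ _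

lemma le_of_bmu_ne_zero {q : ℝ} {n : ℕ} {a : Fin n → Fin n} (h : bmu q a ≠ 0) (v : Fin n) :
    (a v : ℕ) ≤ v := by
  by_contra hv
  refine h (prod_eq_zero (mem_univ v) ?_)
  unfold bw
  rw [if_neg (by omega), if_neg hv]

lemma sum_abs_eq {n : ℕ} (σ : Perm (Fin n)) :
    ∑ i : Fin n, |((σ i : ℕ) : ℝ) - ((i : ℕ) : ℝ)| = 2 * ∑ i : Fin n, (((σ i : ℕ) - (i : ℕ) : ℕ) : ℝ) := by
  have h1 : ∀ i : Fin n, |((σ i : ℕ) : ℝ) - ((i : ℕ) : ℝ)|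
      = 2 * (((σ i : ℕ) - (i : ℕ) : ℕ) : ℝ) - (((σ i : ℕ) : ℝ) - ((i : ℕ) : ℝ)) := by
    intro i
    rcases le_total (i : ℕ) (σ i : ℕ) with h | h
    · have h' : ((i : ℕ) : ℝ) ≤ (σ i : ℕ) := by exact_mod_cast h
      rw [abs_of_nonneg (by linarith), Nat.cast_sub h]; ring
    · have h' : ((σ i : ℕ) : ℝ) ≤ (i : ℕ) := by exact_mod_cast h
      rw [abs_of_nonpos (by linarith), Nat.sub_eq_zero_of_le h]; simp
  have h2 : ∑ i : Fin n, (((σ i : ℕ) : ℝ) - ((i : ℕ) : ℝ)) = 0 := by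
    rw [sum_sub_distrib, Equiv.sum_comp σ (fun i : Fin n => ((i : ℕ) : ℝ)), sub_self]
  rw [sum_congr rfl fun i _ => h1 i, sum_sub_distrib, h2, sub_zero, mul_sum]

/-- The Mallows weight is a mixture of indicators of barrier constraints. -/
lemma mallowsWeight_eq {n : ℕ} (β : ℝ) (σ : Perm (Fin n)) :
    mallowsWeight n β σ = ∑ a : Fin n → Fin n, bmu (Real.exp (-2 * β)) a *
      (if Allowed (fun v => (a v : ℕ)) σ then 1 else 0) := by
  set q := Real.exp (-2 * β) with hq
  have h1 : ∀ a : Fin n → Fin n, (if Allowed (fun v => (a v : ℕ)) σ then (1 : ℝ) else 0)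
      = ∏ v, (if (a v : ℕ) ≤ (σ⁻¹ v : Fin n) then 1 else 0) := by
    intro a
    rw [prod_ite_zero]
    simp only [prod_const_one]
    refine if_congr ?_ rfl rfl
    refine ⟨fun h v _ => by simpa using h (σ⁻¹ v), fun h i => by simpa using h (σ i) (mem_univ _)⟩
  simp only [h1]
  rw [sum_bmu_mul_prod q fun v x => if (x : ℕ) ≤ (σ⁻¹ v : Fin n) then 1 else 0]
  simp only [sum_bw_le]
  rw [← Equiv.prod_comp σ]
  simp only [Perm.inv_def, symm_apply_apply]
  rw [prod_pow_eq_pow_sum, hq, ← Real.exp_nat_mul, mallowsWeight, sum_abs_eq]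
  push_cast
  ring_nf

lemma sum_mallowsWeight_oneCycle {n : ℕ} (β : ℝ) (T : Finset (Fin n)) :
    ∑ σ, mallowsWeight n β σ * (if OneCycle σ T then 1 else 0)
      = ∑ a : Fin n → Fin n, bmu (Real.exp (-2 * β)) a * cnt (fun v => (a v : ℕ)) T := by
  simp only [mallowsWeight_eq, sum_mul, cnt, mul_sum]
  rw [sum_comm]
  refine sum_congr rfl fun a _ => sum_congr rfl fun σ _ => ?_
  by_cases h1 : Allowed (fun v => (a v : ℕ)) σ <;> by_cases h2 : OneCycle σ T <;> simp [h1, h2]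

lemma sum_mallowsWeight {n : ℕ} (β : ℝ) :
    ∑ σ, mallowsWeight n β σ
      = ∑ a : Fin n → Fin n, bmu (Real.exp (-2 * β)) a * cnt (fun v => (a v : ℕ)) ∅ := by
  rw [← sum_mallowsWeight_oneCycle]
  simp [OneCycle]

lemma cnt_empty_antitone {n : ℕ} {a b : Fin n → ℕ} (hab : a ≤ b) : cnt b ∅ ≤ cnt a ∅ := by
  refine sum_le_sum fun σ _ => ?_
  by_cases h : Allowed b σ
  · have : Allowed a σ := fun i => (hab _).trans (h i)
    simp [h, this, OneCycle]
  · simp only [h, false_and, if_false]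
    split_ifs <;> norm_num

lemma avail_antitone {n : ℕ} {a b : Fin n → ℕ} (hab : a ≤ b) (i : Fin n) :
    avail b i ⊆ avail a i := fun v hv => by
  simp only [avail, mem_filter, mem_univ, true_and] at hv ⊢
  exact ⟨hv.1, (hab v).trans hv.2⟩

lemma Good.antitone {K L n : ℕ} {a b : Fin n → ℕ} (hab : a ≤ b) (h : Good K L b) : Good K L a :=
  ⟨fun v hv => (hab v).trans (h.1 v hv), fun i hi => (h.2 i hi).trans
    (Nat.mul_le_mul_left _ (card_le_card (avail_antitone hab i)))⟩

/-- By the FKG inequality, reweighting the independent barriers by the number of permutations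
respecting them only makes typical barriers more likely. -/
lemma fkg_good {q : ℝ} (hq0 : 0 ≤ q) (hq1 : q ≤ 1) (K L n : ℕ) :
    ∑ a : Fin n → Fin n, bmu q a * (cnt (fun v => (a v : ℕ)) ∅ *
        (if Good K L (fun v => (a v : ℕ)) then 0 else 1))
      ≤ (∑ a : Fin n → Fin n, bmu q a * cnt (fun v => (a v : ℕ)) ∅) *
        ∑ a : Fin n → Fin n, bmu q a * (if Good K L (fun v => (a v : ℕ)) then 0 else 1) := by
  have key := fkg (α := (Fin n → Fin n)ᵒᵈ) (β := ℝ) (μ := fun a => bmu q (OrderDual.ofDual a))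
    (f := fun a => cnt (fun v => (OrderDual.ofDual a v : ℕ)) ∅)
    (g := fun a => if Good K L (fun v => (OrderDual.ofDual a v : ℕ)) then 1 else 0)
    (fun a => bmu_nonneg hq0 hq1 _) (fun a => cnt_nonneg _ _)
    (fun a => by dsimp only [Pi.zero_apply]; split_ifs <;> norm_num)
    (fun a b hab => cnt_empty_antitone fun v => hab v)
    (fun a b hab => by
      dsimp only
      by_cases h : Good K L (fun v => (OrderDual.ofDual a v : ℕ))
      · have hb : Good K L (fun v => (OrderDual.ofDual b v : ℕ)) := h.antitone fun v => hab v
        rw [if_pos h, if_pos hb]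
      · rw [if_neg h]; split_ifs <;> norm_num)
    (fun a b => by
      simp only [bmu, ← prod_mul_distrib]
      refine le_of_eq (prod_congr rfl fun v _ => ?_)
      simp only [_root_.ofDual_inf, _root_.ofDual_sup, Pi.sup_apply, Pi.inf_apply]
      rcases le_total (OrderDual.ofDual a v) (OrderDual.ofDual b v) with h | h
      · rw [sup_eq_right.2 h, inf_eq_left.2 h, mul_comm]
      · rw [sup_eq_left.2 h, inf_eq_right.2 h])
  have conv : ∀ F : (Fin n → Fin n) → ℝ,
      ∑ a : (Fin n → Fin n)ᵒᵈ, F (OrderDual.ofDual a) = ∑ a, F a :=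
    fun F => Equiv.sum_comp OrderDual.ofDual F
  rw [conv (fun a => bmu q a * cnt (fun v => (a v : ℕ)) ∅),
    conv (fun a => bmu q a * if Good K L (fun v => (a v : ℕ)) then 1 else 0), conv (fun a => bmu q a),
    conv (fun a => bmu q a * (cnt (fun v => (a v : ℕ)) ∅ *
      if Good K L (fun v => (a v : ℕ)) then 1 else 0)), sum_bmu, one_mul] at key
  have e : ∀ a : Fin n → Fin n, (if Good K L (fun v => (a v : ℕ)) then (0 : ℝ) else 1)
      = 1 - (if Good K L (fun v => (a v : ℕ)) then 1 else 0) := by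
    intro a; split_ifs <;> norm_num
  simp only [e, mul_sub, mul_one, sum_sub_distrib, sum_bmu]
  linarith

/-! ### Concentration, and the probability of lying in one cycle -/

lemma exp_neg_le_inv_sq {m : ℕ} (hm : 0 < m) :
    Real.exp (-(m / 32 : ℝ)) ≤ 2048 * ((m : ℝ) ^ 2)⁻¹ := by
  have hm' : (0 : ℝ) < m := by exact_mod_cast hm
  have h := Real.quadratic_le_exp_of_nonneg (x := (m / 32 : ℝ)) (by positivity)
  rw [Real.exp_neg, ← div_eq_mul_inv, inv_eq_one_div, div_le_div_iff₀ (Real.exp_pos _) (by positivity)]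
  nlinarith

/-- Chernoff bound for the number of values available to `i`, a sum of independent indicators; among
the first `min (n - i) L` of them each has probability at least `exp (-2)`. -/
lemma chernoff {β : ℝ} (hβ : 0 < β) {K L n : ℕ} (hL0 : 0 < L) (hL : β * L ≤ 1) (i : Fin n)
    (hi : K < n - (i : ℕ)) :
    ∑ a : Fin n → Fin n, bmu (Real.exp (-2 * β)) a *
        (if min (n - i) L ≤ 32 * #(avail (fun v => (a v : ℕ)) i) then 0 else 1)
      ≤ 2048 * step K L (n - i) := by
  set q := Real.exp (-2 * β) with hq
  have hq0 : 0 ≤ q := (Real.exp_pos _).le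
  have hq1 : q ≤ 1 := Real.exp_le_one_iff.2 (by linarith)
  set m := min (n - (i : ℕ)) L with hm
  have hm0 : 0 < m := lt_min (by omega) hL0
  have hiv := i.2
  have him : (i : ℕ) + m ≤ n := by omega
  have he1 : Real.exp (-1) ≤ 1 / 2 := by
    rw [Real.exp_neg, inv_eq_one_div]
    exact one_div_le_one_div_of_le (by norm_num) (by linarith [Real.exp_one_gt_d9])
  have he2 : 1 / 8 ≤ Real.exp (-2) := by
    rw [Real.exp_neg, inv_eq_one_div]
    refine one_div_le_one_div_of_le (Real.exp_pos _) ?_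
    rw [show (2 : ℝ) = 1 + 1 by norm_num, Real.exp_add]
    have h1 := Real.exp_one_lt_d9
    have h2 := Real.exp_pos 1
    nlinarith
  -- the moment generating function at `-1`
  have hmgf : ∀ a : Fin n → Fin n, Real.exp (-(#(avail (fun v => (a v : ℕ)) i) : ℝ))
      = ∏ v, (if i ≤ v ∧ (a v : ℕ) ≤ i then Real.exp (-1) else 1) := by
    intro a
    rw [← prod_filter, prod_const, ← Real.exp_nat_mul]
    congr 1
    simp [avail]
  have hcoord : ∀ v : Fin n, ∑ x : Fin n, bw q v x *
      (if i ≤ v ∧ (x : ℕ) ≤ i then Real.exp (-1) else 1)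
        ≤ if (i : ℕ) ≤ v ∧ (v : ℕ) < i + m then Real.exp (-(1 / 16)) else 1 := by
    intro v
    by_cases hiv : i ≤ v
    · have e : ∑ x : Fin n, bw q v x * (if i ≤ v ∧ (x : ℕ) ≤ i then Real.exp (-1) else 1)
          = 1 - (1 - Real.exp (-1)) * q ^ ((v : ℕ) - i) := by
        have e' : ∑ x : Fin n, bw q v x * (if i ≤ v ∧ (x : ℕ) ≤ i then Real.exp (-1) else 1)
            = ∑ x : Fin n, bw q v x
              - (1 - Real.exp (-1)) * ∑ x : Fin n, bw q v x * (if (x : ℕ) ≤ i then 1 else 0) := by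
          rw [mul_sum, ← sum_sub_distrib]
          refine sum_congr rfl fun x _ => ?_
          by_cases hx : (x : ℕ) ≤ i
          · rw [if_pos ⟨hiv, hx⟩, if_pos hx]; ring
          · rw [if_neg (fun h => hx h.2), if_neg hx]; ring
        rw [e', sum_bw, sum_bw_le]
      rw [e]
      have hpow : 0 ≤ q ^ ((v : ℕ) - i) := by positivity
      split_ifs with hv
      · have h1 : Real.exp (-2) ≤ q ^ ((v : ℕ) - i) := by
          rw [hq, ← Real.exp_nat_mul]
          refine Real.exp_le_exp.2 ?_
          have : (((v : ℕ) - i : ℕ) : ℝ) ≤ L := by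
            have h1 := hv.2
            have h2 : m ≤ L := min_le_right _ _
            exact_mod_cast (show (v : ℕ) - i ≤ L by omega)
          nlinarith
        have h2 := Real.add_one_le_exp (-(1 / 16) : ℝ)
        nlinarith
      · nlinarith
    · have hiv' : ¬ (i : ℕ) ≤ v := hiv
      simp [hiv, hiv', sum_bw]
  have hE : ∑ a : Fin n → Fin n, bmu q a * Real.exp (-(#(avail (fun v => (a v : ℕ)) i) : ℝ))
      ≤ Real.exp (-(m / 16)) := by
    simp only [hmgf]
    rw [sum_bmu_mul_prod q fun v x => if i ≤ v ∧ (x : ℕ) ≤ i then Real.exp (-1) else 1]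
    refine (prod_le_prod (fun v _ => sum_nonneg fun x _ => ?_) fun v _ => hcoord v).trans ?_
    · refine mul_nonneg (bw_nonneg hq0 hq1 _ _) ?_
      split_ifs <;> positivity
    · rw [← prod_filter, prod_const, ← Real.exp_nat_mul]
      refine Real.exp_le_exp.2 ?_
      have : m ≤ #{v : Fin n | (i : ℕ) ≤ v ∧ (v : ℕ) < i + m} := by
        have := card_le_card_of_injOn (s := range m)
          (t := univ.filter fun v : Fin n => (i : ℕ) ≤ v ∧ (v : ℕ) < i + m)
          (fun j => if h : (i : ℕ) + j < n then ⟨i + j, h⟩ else i) (by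
            intro j hj
            have hj := mem_range.1 (mem_coe.1 hj)
            simp only [coe_filter, mem_univ, true_and, Set.mem_ofPred_eq]
            rw [dif_pos (by omega)]
            simp only
            omega) (by
            intro j hj k hk hjk
            have hj := mem_range.1 (mem_coe.1 hj)
            have hk := mem_range.1 (mem_coe.1 hk)
            simp only at hjk
            rw [dif_pos (by omega), dif_pos (by omega), Fin.mk.injEq] at hjk
            omega)
        simpa using this
      have : (m : ℝ) ≤ #{v : Fin n | (i : ℕ) ≤ v ∧ (v : ℕ) < i + m} := by exact_mod_cast this
      linarith
  calc ∑ a : Fin n → Fin n, bmu q a * (if m ≤ 32 * #(avail (fun v => (a v : ℕ)) i) then 0 else 1)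
      ≤ ∑ a : Fin n → Fin n, bmu q a *
          (Real.exp (m / 32) * Real.exp (-(#(avail (fun v => (a v : ℕ)) i) : ℝ))) := by
        refine sum_le_sum fun a _ => mul_le_mul_of_nonneg_left ?_ (bmu_nonneg hq0 hq1 a)
        split_ifs with h
        · positivity
        · rw [← Real.exp_add, Real.one_le_exp_iff]
          have : (32 * #(avail (fun v => (a v : ℕ)) i) : ℝ) ≤ m := by
            exact_mod_cast (not_le.1 h).le
          linarith
    _ = Real.exp (m / 32) * ∑ a : Fin n → Fin n, bmu q a *
          Real.exp (-(#(avail (fun v => (a v : ℕ)) i) : ℝ)) := by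
        rw [mul_sum]; exact sum_congr rfl fun a _ => by ring
    _ ≤ Real.exp (m / 32) * Real.exp (-(m / 16)) := by gcongr
    _ = Real.exp (-(m / 32 : ℝ)) := by rw [← Real.exp_add]; congr 1; ring
    _ ≤ 2048 * ((m : ℝ) ^ 2)⁻¹ := exp_neg_le_inv_sq hm0
    _ ≤ _ := by
        gcongr
        exact inv_min_sq_le_step hi.le

/-- Everything is available to the last `K` positions with high probability: each of at
most `K` independent barriers complies with probability at least `q ^ K`. -/
lemma full_prob {β : ℝ} (hβ : 0 < β) (K n : ℕ) :
    ∑ a : Fin n → Fin n, bmu (Real.exp (-2 * β)) a *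
        (if ∀ v : Fin n, n - K ≤ (v : ℕ) → (a v : ℕ) ≤ n - K then 0 else 1)
      ≤ 2 * β * K ^ 2 := by
  set q := Real.exp (-2 * β) with hq
  have hq0 : 0 ≤ q := (Real.exp_pos _).le
  have hq1 : q ≤ 1 := Real.exp_le_one_iff.2 (by linarith)
  have hind : ∀ a : Fin n → Fin n,
      (if ∀ v : Fin n, n - K ≤ (v : ℕ) → (a v : ℕ) ≤ n - K then (0 : ℝ) else 1)
        = 1 - ∏ v : Fin n, (if n - K ≤ (v : ℕ) → (a v : ℕ) ≤ n - K then 1 else 0) := by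
    intro a
    rw [prod_ite_zero]
    simp only [prod_const_one, mem_univ, true_imp_iff]
    by_cases h : ∀ v : Fin n, n - K ≤ (v : ℕ) → (a v : ℕ) ≤ n - K
    · rw [if_pos h, if_pos h]; norm_num
    · rw [if_neg h, if_neg h]; norm_num
  simp only [hind, mul_sub, mul_one, sum_sub_distrib, sum_bmu]
  rw [sum_bmu_mul_prod q fun v x => if n - K ≤ (v : ℕ) → (x : ℕ) ≤ n - K then 1 else 0]
  have hcoord : ∀ v : Fin n, (if n - K ≤ (v : ℕ) then q ^ K else 1) ≤
      ∑ x : Fin n, bw q v x * (if n - K ≤ (v : ℕ) → (x : ℕ) ≤ n - K then 1 else 0) := by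
    intro v
    by_cases hv : n - K ≤ (v : ℕ)
    · simp only [hv, true_imp_iff, if_true]
      rw [sum_bw_le]
      have := v.2
      exact pow_le_pow_of_le_one hq0 hq1 (by omega)
    · simp [hv, sum_bw]
  have hprod : q ^ (K * K) ≤
      ∏ v : Fin n, ∑ x : Fin n, bw q v x * (if n - K ≤ (v : ℕ) → (x : ℕ) ≤ n - K then 1 else 0) := by
    refine le_trans ?_ (prod_le_prod (fun v _ => ?_) fun v _ => hcoord v)
    · rw [← prod_filter, prod_const, ← pow_mul]
      refine pow_le_pow_of_le_one hq0 hq1 (Nat.mul_le_mul_left _ ?_)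
      have := card_le_card_of_injOn (s := univ.filter fun v : Fin n => n - K ≤ (v : ℕ))
        (t := range K) (fun v => (v : ℕ) - (n - K)) (by
          intro v hv
          have h1 := (mem_filter.1 (mem_coe.1 hv)).2
          have h2 := v.2
          simp only [coe_range, Set.mem_Iio]
          omega) (by
          intro v hv w hw h
          have h1 := (mem_filter.1 (mem_coe.1 hv)).2
          have h2 := (mem_filter.1 (mem_coe.1 hw)).2
          simp only at h
          exact Fin.ext (by omega))
      simpa using this
    · split_ifs <;> positivity
  have hexp : 1 - 2 * β * K ^ 2 ≤ q ^ (K * K) := by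
    rw [hq, ← Real.exp_nat_mul]
    have := Real.add_one_le_exp (((K * K : ℕ) : ℝ) * (-2 * β))
    push_cast at this ⊢
    linarith
  linarith

/-- Independent barriers are typical with high probability. -/
lemma bad_prob {β : ℝ} (hβ : 0 < β) {K L : ℕ} (hK : 0 < K) (hL0 : 0 < L) (hL : β * L ≤ 1) (n : ℕ) :
    ∑ a : Fin n → Fin n, bmu (Real.exp (-2 * β)) a *
        (if Good K L (fun v => (a v : ℕ)) then 0 else 1)
      ≤ 2 * β * K ^ 2 + 2048 * (2 / K + n / (L : ℝ) ^ 2) := by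
  set q := Real.exp (-2 * β) with hq
  have hq0 : 0 ≤ q := (Real.exp_pos _).le
  have hq1 : q ≤ 1 := Real.exp_le_one_iff.2 (by linarith)
  have hunion : ∀ a : Fin n → Fin n, (if Good K L (fun v => (a v : ℕ)) then (0 : ℝ) else 1)
      ≤ (if ∀ v : Fin n, n - K ≤ (v : ℕ) → (a v : ℕ) ≤ n - K then 0 else 1)
        + ∑ i ∈ univ.filter (fun i : Fin n => K < n - (i : ℕ)),
          (if min (n - i) L ≤ 32 * #(avail (fun v => (a v : ℕ)) i) then (0 : ℝ) else 1) := by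
    intro a
    have hnn : ∀ i : Fin n, (0 : ℝ) ≤
        (if min (n - (i : ℕ)) L ≤ 32 * #(avail (fun v => (a v : ℕ)) i) then 0 else 1) :=
      fun i => by split_ifs <;> norm_num
    have hs := sum_nonneg fun i (_ : i ∈ univ.filter fun i : Fin n => K < n - (i : ℕ)) => hnn i
    by_cases h1 : ∀ v : Fin n, n - K ≤ (v : ℕ) → (a v : ℕ) ≤ n - K
    · by_cases h2 : ∀ i : Fin n, K < n - i → min (n - i) L ≤ 32 * #(avail (fun v => (a v : ℕ)) i)
      · rw [if_pos (show Good K L (fun v => (a v : ℕ)) from ⟨h1, h2⟩), if_pos h1, zero_add]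
        exact hs
      · push Not at h2
        obtain ⟨i, hi, hi'⟩ := h2
        rw [if_neg (fun h => absurd (h.2 i hi) (not_le.2 hi')), if_pos h1, zero_add]
        have := single_le_sum (fun i (_ : i ∈ univ.filter fun i : Fin n => K < n - (i : ℕ)) => hnn i)
          (mem_filter.2 ⟨mem_univ i, hi⟩)
        rwa [if_neg (not_le.2 hi')] at this
    · rw [if_neg (fun h => h1 h.1), if_neg h1]
      linarith
  calc _ ≤ ∑ a : Fin n → Fin n, bmu q a *
        ((if ∀ v : Fin n, n - K ≤ (v : ℕ) → (a v : ℕ) ≤ n - K then 0 else 1)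
        + ∑ i ∈ univ.filter (fun i : Fin n => K < n - (i : ℕ)),
          (if min (n - i) L ≤ 32 * #(avail (fun v => (a v : ℕ)) i) then (0 : ℝ) else 1)) :=
        sum_le_sum fun a _ => mul_le_mul_of_nonneg_left (hunion a) (bmu_nonneg hq0 hq1 a)
    _ ≤ 2 * β * K ^ 2 + ∑ i ∈ univ.filter (fun i : Fin n => K < n - (i : ℕ)), 2048 * step K L (n - i) := by
        simp only [mul_add, sum_add_distrib, mul_sum]
        rw [sum_comm]
        refine add_le_add (full_prob hβ K n) (sum_le_sum fun i hi => ?_)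
        exact chernoff hβ hL0 hL i (mem_filter.1 hi).2
    _ ≤ 2 * β * K ^ 2 + ∑ i : Fin n, 2048 * step K L (n - i) := by
        refine add_le_add le_rfl (sum_le_sum_of_subset_of_nonneg (filter_subset _ _) ?_)
        intro i _ _
        exact mul_nonneg (by norm_num) (step_nonneg _ _ _)
    _ ≤ _ := by
        refine add_le_add le_rfl ?_
        rw [← mul_sum]
        refine mul_le_mul_of_nonneg_left (le_trans (le_of_eq ?_) (sum_step_le hK L n)) (by norm_num)
        rw [Fin.sum_univ_eq_sum_range (fun i => step K L (n - i)), ← sum_range_reflect]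
        refine sum_congr rfl fun j hj => ?_
        rw [mem_range] at hj
        congr 1
        omega

/-- Under the Mallows model, the points of `T` lie in one cycle with probability about `1 / #T`. -/
lemma oneCycle_approx {β : ℝ} (hβ : 0 < β) {K L : ℕ} (hK : 33 ≤ K) (hL0 : 33 ≤ L)
    (hL : β * L ≤ 1) {n : ℕ} (T : Finset (Fin n)) (hT : T.Nonempty) :
    |∑ σ, mallowsWeight n β σ * (if OneCycle σ T then 1 else 0)
        - (∑ σ, mallowsWeight n β σ) / #T|
      ≤ (∑ σ, mallowsWeight n β σ) *
        (2 * β * K ^ 2 + (4096 * #T + 2048) * (2 / K + n / (L : ℝ) ^ 2)) := by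
  rw [sum_mallowsWeight_oneCycle, sum_mallowsWeight]
  set q := Real.exp (-2 * β) with hq
  have hq0 : 0 ≤ q := (Real.exp_pos _).le
  have hq1 : q ≤ 1 := Real.exp_le_one_iff.2 (by linarith)
  set Z := ∑ a : Fin n → Fin n, bmu q a * cnt (fun v => (a v : ℕ)) ∅ with hZ
  have hZ0 : 0 ≤ Z := sum_nonneg fun a _ => mul_nonneg (bmu_nonneg hq0 hq1 a) (cnt_nonneg _ _)
  set η : ℝ := 2 / K + n / (L : ℝ) ^ 2 with hη
  have hη0 : 0 ≤ η := by positivity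
  have hj1 : (1 : ℝ) ≤ #T := by exact_mod_cast hT.card_pos
  have hpt : ∀ a : Fin n → Fin n,
      |bmu q a * cnt (fun v => (a v : ℕ)) T - bmu q a * cnt (fun v => (a v : ℕ)) ∅ / #T|
      ≤ bmu q a * cnt (fun v => (a v : ℕ)) ∅ * (4096 * #T * η) +
        bmu q a * (cnt (fun v => (a v : ℕ)) ∅ *
          (if Good K L (fun v => (a v : ℕ)) then 0 else 1)) := by
    intro a
    have hμ := bmu_nonneg hq0 hq1 a
    by_cases hμ0 : bmu q a = 0
    · simp [hμ0]
    have hC := cnt_nonneg (fun v => (a v : ℕ)) ∅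
    rw [mul_div_assoc, ← mul_sub, abs_mul, abs_of_nonneg hμ, mul_assoc, ← mul_add]
    refine mul_le_mul_of_nonneg_left ?_ hμ
    have ha := le_of_bmu_ne_zero hμ0
    split_ifs with hG
    · rw [mul_zero, add_zero]
      refine (cnt_approx n (fun v => (a v : ℕ)) ha (pot K L) (pot_nonneg K L)
        (hG.potential hK hL0 _ ha) T hT).trans (mul_le_mul_of_nonneg_left ?_ hC)
      have h1 : ∑ t ∈ T, pot K L (n - t) ≤ #T • pot K L n :=
        sum_le_card_nsmul _ _ _ fun t _ => pot_mono K L (Nat.sub_le _ _)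
      have h2 : pot K L n ≤ 4096 * η :=
        mul_le_mul_of_nonneg_left (sum_step_le (by omega) L n) (by norm_num)
      rw [nsmul_eq_mul] at h1
      nlinarith
    · rw [mul_one]
      have h1 := cnt_nonneg (fun v => (a v : ℕ)) T
      have h2 := cnt_le (fun v => (a v : ℕ)) T
      have h3 : 0 ≤ cnt (fun v => (a v : ℕ)) ∅ / #T := by positivity
      have h4 : cnt (fun v => (a v : ℕ)) ∅ / #T ≤ cnt (fun v => (a v : ℕ)) ∅ :=
        div_le_self hC hj1
      have h5 : 0 ≤ cnt (fun v => (a v : ℕ)) ∅ * (4096 * #T * η) := by positivity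
      rw [abs_le]
      constructor <;> linarith
  have hbad := mul_le_mul_of_nonneg_left
    (bad_prob hβ (K := K) (L := L) (by omega) (by omega) hL n) hZ0
  have hfkg := fkg_good hq0 hq1 K L n
  calc _ = |∑ a : Fin n → Fin n, (bmu q a * cnt (fun v => (a v : ℕ)) T
        - bmu q a * cnt (fun v => (a v : ℕ)) ∅ / #T)| := by
        rw [sum_sub_distrib, hZ, sum_div]
    _ ≤ _ := (abs_sum_le_sum_abs _ _).trans (sum_le_sum fun a _ => hpt a)
    _ = Z * (4096 * #T * η) + ∑ a : Fin n → Fin n, bmu q a * (cnt (fun v => (a v : ℕ)) ∅ *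
          (if Good K L (fun v => (a v : ℕ)) then 0 else 1)) := by
        rw [sum_add_distrib, ← sum_mul]
    _ ≤ _ := by
        rw [← hZ] at hfkg
        linarith

/-! ### Convergence to the uniform law by the method of moments -/

lemma tendsto_poly {Ω : ℕ → Type} [∀ n, Fintype (Ω n)] {w X : ∀ n, Ω n → ℝ}
    (hm : ∀ m : ℕ, Filter.Tendsto (fun n => ∑ ω, w n ω * X n ω ^ m) Filter.atTop
      (nhds (1 / ((m : ℝ) + 1)))) (p : Polynomial ℝ) :
    Filter.Tendsto (fun n => ∑ ω, w n ω * p.eval (X n ω)) Filter.atTop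
      (nhds (∫ y in (0 : ℝ)..1, p.eval y)) := by
  induction p using Polynomial.induction_on' with
  | add p r hp hr =>
    simp only [Polynomial.eval_add, mul_add, sum_add_distrib]
    rw [intervalIntegral.integral_add (p.continuous.intervalIntegrable _ _)
      (r.continuous.intervalIntegrable _ _)]
    exact hp.add hr
  | monomial m c =>
    simp only [Polynomial.eval_monomial]
    rw [intervalIntegral.integral_const_mul, integral_pow]
    have := (hm m).const_mul c
    simp only [mul_sum] at this
    convert this using 2
    · exact sum_congr rfl fun ω _ => by ring
    · simp

lemma tendsto_continuous {Ω : ℕ → Type} [∀ n, Fintype (Ω n)] {w X : ∀ n, Ω n → ℝ}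
    (hw : ∀ n ω, 0 ≤ w n ω) (hw1 : ∀ n, ∑ ω, w n ω = 1)
    (hX : ∀ n ω, X n ω ∈ Set.Icc (0 : ℝ) 1)
    (hm : ∀ m : ℕ, Filter.Tendsto (fun n => ∑ ω, w n ω * X n ω ^ m) Filter.atTop
      (nhds (1 / ((m : ℝ) + 1)))) {f : ℝ → ℝ} (hf : Continuous f) :
    Filter.Tendsto (fun n => ∑ ω, w n ω * f (X n ω)) Filter.atTop
      (nhds (∫ y in (0 : ℝ)..1, f y)) := by
  rw [Metric.tendsto_atTop]
  intro ε hε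
  obtain ⟨p, hp⟩ := exists_polynomial_near_of_continuousOn 0 1 f hf.continuousOn (ε / 4) (by linarith)
  obtain ⟨N, hN⟩ := Metric.tendsto_atTop.1 (tendsto_poly hm p) (ε / 4) (by linarith)
  refine ⟨N, fun n hn => ?_⟩
  have h1 := hN n hn
  rw [Real.dist_eq] at h1 ⊢
  have h2 : |∑ ω, w n ω * f (X n ω) - ∑ ω, w n ω * p.eval (X n ω)| ≤ ε / 4 := by
    rw [← sum_sub_distrib]
    refine (abs_sum_le_sum_abs _ _).trans ?_
    calc _ ≤ ∑ ω, w n ω * (ε / 4) := by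
          refine sum_le_sum fun ω _ => ?_
          rw [← mul_sub, abs_mul, abs_of_nonneg (hw n ω), abs_sub_comm]
          exact mul_le_mul_of_nonneg_left (hp _ (hX n ω)).le (hw n ω)
      _ = ε / 4 := by rw [← sum_mul, hw1, one_mul]
  have h3 : |(∫ y in (0 : ℝ)..1, p.eval y) - ∫ y in (0 : ℝ)..1, f y| ≤ ε / 4 := by
    rw [← intervalIntegral.integral_sub (p.continuous.intervalIntegrable _ _)
      (hf.intervalIntegrable _ _)]
    have := intervalIntegral.norm_integral_le_of_norm_le_const (a := 0) (b := 1) (C := ε / 4)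
      (f := fun y => p.eval y - f y) (fun y hy => by
        rw [Set.uIoc_of_le zero_le_one] at hy
        exact (hp y ⟨hy.1.le, hy.2⟩).le)
    simpa using this
  rw [abs_lt] at h1 ⊢
  rw [abs_le] at h2 h3
  constructor <;> linarith [h1.1, h1.2, h2.1, h2.2, h3.1, h3.2]

/-- A continuous cutoff, equal to `1` below `a` and to `0` above `b`. -/
noncomputable def ramp (a b y : ℝ) : ℝ := max 0 (min 1 ((b - y) / (b - a)))

lemma ramp_continuous (a b : ℝ) : Continuous (ramp a b) := by unfold ramp; fun_prop

lemma ramp_nonneg (a b y : ℝ) : 0 ≤ ramp a b y := le_max_left _ _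

lemma ramp_le_one (a b y : ℝ) : ramp a b y ≤ 1 := max_le zero_le_one (min_le_left _ _)

lemma ramp_of_le {a b y : ℝ} (hab : a < b) (h : y ≤ a) : ramp a b y = 1 := by
  unfold ramp
  rw [min_eq_left ((one_le_div (by linarith)).2 (by linarith)), max_eq_right zero_le_one]

lemma ramp_of_ge {a b y : ℝ} (hab : a < b) (h : b ≤ y) : ramp a b y = 0 := by
  unfold ramp
  exact max_eq_left ((min_le_right _ _).trans
    (div_nonpos_of_nonpos_of_nonneg (by linarith) (by linarith)))

lemma integral_ramp_le {a b : ℝ} (hab : a < b) (hb : 0 ≤ b) :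
    ∫ y in (0 : ℝ)..1, ramp a b y ≤ b := by
  have hc := ramp_continuous a b
  have hone : ∀ c : ℝ, 0 ≤ c → ∫ y in (0 : ℝ)..c, ramp a b y ≤ c := fun c hc0 => by
    have := intervalIntegral.integral_mono_on (μ := MeasureTheory.volume) hc0 (hc.intervalIntegrable 0 c)
      (continuous_const.intervalIntegrable (u := fun _ => (1 : ℝ)) 0 c) (fun y _ => ramp_le_one a b y)
    simpa using this
  rcases le_total 1 b with h | h
  · exact (hone 1 zero_le_one).trans h
  · rw [← intervalIntegral.integral_add_adjacent_intervals (hc.intervalIntegrable 0 b)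
      (hc.intervalIntegrable b 1)]
    have : ∫ y in b..1, ramp a b y = 0 := by
      rw [intervalIntegral.integral_congr (g := fun _ => (0 : ℝ))]
      · simp
      · intro y hy
        rw [Set.uIcc_of_le h] at hy
        exact ramp_of_ge hab hy.1
    rw [this, add_zero]
    exact hone b hb

lemma le_integral_ramp {a b : ℝ} (hab : a < b) (ha : a ≤ 1) :
    a ≤ ∫ y in (0 : ℝ)..1, ramp a b y := by
  have hc := ramp_continuous a b
  rcases le_total a 0 with h | h
  · exact h.trans (intervalIntegral.integral_nonneg zero_le_one fun y _ => ramp_nonneg a b y)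
  · rw [← intervalIntegral.integral_add_adjacent_intervals (hc.intervalIntegrable 0 a)
      (hc.intervalIntegrable a 1)]
    have h1 : ∫ y in (0 : ℝ)..a, ramp a b y = a := by
      rw [intervalIntegral.integral_congr (g := fun _ => (1 : ℝ))]
      · simp
      · intro y hy
        rw [Set.uIcc_of_le h] at hy
        exact ramp_of_le hab hy.2
    have h2 : 0 ≤ ∫ y in a..1, ramp a b y :=
      intervalIntegral.integral_nonneg ha fun y _ => ramp_nonneg a b y
    linarith

/-- Method of moments: random variables in `[0, 1]` whose moments converge to `1 / (m + 1)` converge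
in distribution to the uniform law. -/
lemma tendsto_cdf {Ω : ℕ → Type} [∀ n, Fintype (Ω n)] {w X : ∀ n, Ω n → ℝ}
    (hw : ∀ n ω, 0 ≤ w n ω) (hw1 : ∀ n, ∑ ω, w n ω = 1)
    (hX : ∀ n ω, X n ω ∈ Set.Icc (0 : ℝ) 1)
    (hm : ∀ m : ℕ, Filter.Tendsto (fun n => ∑ ω, w n ω * X n ω ^ m) Filter.atTop
      (nhds (1 / ((m : ℝ) + 1)))) {x : ℝ} (hx0 : 0 ≤ x) (hx1 : x ≤ 1) :
    Filter.Tendsto (fun n => ∑ ω, if X n ω ≤ x then w n ω else 0) Filter.atTop (nhds x) := by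
  rw [Metric.tendsto_atTop]
  intro ε hε
  have hlo := tendsto_continuous hw hw1 hX hm (ramp_continuous (x - ε / 2) x)
  have hhi := tendsto_continuous hw hw1 hX hm (ramp_continuous x (x + ε / 2))
  obtain ⟨N₁, hN₁⟩ := Metric.tendsto_atTop.1 hlo (ε / 2) (by linarith)
  obtain ⟨N₂, hN₂⟩ := Metric.tendsto_atTop.1 hhi (ε / 2) (by linarith)
  refine ⟨max N₁ N₂, fun n hn => ?_⟩
  have h1 := hN₁ n (le_of_max_le_left hn)
  have h2 := hN₂ n (le_of_max_le_right hn)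
  rw [Real.dist_eq, abs_lt] at h1 h2 ⊢
  have h3 := le_integral_ramp (a := x - ε / 2) (b := x) (by linarith) (by linarith)
  have h4 := integral_ramp_le (a := x) (b := x + ε / 2) (by linarith) (by linarith)
  have h5 : ∑ ω, w n ω * ramp (x - ε / 2) x (X n ω) ≤ ∑ ω, if X n ω ≤ x then w n ω else 0 := by
    refine sum_le_sum fun ω _ => ?_
    split_ifs with h
    · exact mul_le_of_le_one_right (hw n ω) (ramp_le_one _ _ _)
    · rw [ramp_of_ge (by linarith) (not_le.1 h).le, mul_zero]
  have h6 : ∑ ω, (if X n ω ≤ x then w n ω else 0) ≤ ∑ ω, w n ω * ramp x (x + ε / 2) (X n ω) := by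
    refine sum_le_sum fun ω _ => ?_
    split_ifs with h
    · rw [ramp_of_le (by linarith) h, mul_one]
    · exact mul_nonneg (hw n ω) (ramp_nonneg _ _ _)
  constructor <;> linarith [h1.1, h1.2, h2.1, h2.2]

/-! ### Moments of the cycle length -/

lemma mem_cycleFinset {n : ℕ} (σ : Perm (Fin n)) (s x : Fin n) :
    x ∈ cycleFinset n σ s ↔ σ.SameCycle s x := by
  simp only [cycleFinset, mem_filter, mem_univ, true_and]
  constructor
  · rintro ⟨k, hk⟩
    exact ⟨k, by rw [zpow_natCast]; exact hk⟩
  · intro h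
    exact h.exists_nat_pow_eq

/-- The powers of the cycle length count tuples of points in the cycle. -/
lemma card_cycleFinset_pow {n : ℕ} (σ : Perm (Fin n)) (s : Fin n) (m : ℕ) :
    (#(cycleFinset n σ s) : ℝ) ^ m
      = ∑ t : Fin m → Fin n, if OneCycle σ (insert s (univ.image t)) then 1 else 0 := by
  have h : (univ.filter fun t : Fin m → Fin n => OneCycle σ (insert s (univ.image t)))
      = Fintype.piFinset fun _ => cycleFinset n σ s := by
    ext t
    simp only [mem_filter, mem_univ, true_and, Fintype.mem_piFinset, mem_cycleFinset]
    constructor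
    · intro h i
      exact h s (mem_insert_self _ _) (t i) (mem_insert_of_mem (mem_image_of_mem _ (mem_univ i)))
    · intro h
      have hs : ∀ x ∈ insert s (univ.image t), σ.SameCycle s x := by
        intro x hx
        rcases mem_insert.1 hx with rfl | hx
        · exact (sameCycle_equivalence σ).refl _
        · obtain ⟨i, -, rfl⟩ := mem_image.1 hx
          exact h i
      intro x hx y hy
      exact (hs x hx).symm.trans (hs y hy)
  rw [sum_boole, h, Fintype.card_piFinset]
  simp

/-- Few tuples have a repetition or meet `s`. -/
lemma card_degenerate_le {n : ℕ} (s : Fin (n + 1)) (m : ℕ) :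
    (#(univ.filter fun t : Fin m → Fin (n + 1) => #(insert s (univ.image t)) ≠ m + 1) : ℝ)
      ≤ ((n : ℝ) + 1) ^ m * ((m : ℝ) ^ 2 / ((n : ℝ) + 1)) := by
  have hn : (0 : ℝ) < (n : ℝ) + 1 := by positivity
  have htot := card_filter_add_card_filter_not (s := (univ : Finset (Fin m → Fin (n + 1))))
    (fun t => #(insert s (univ.image t)) = m + 1)
  have hgood : n.descFactorial m
      ≤ #(univ.filter fun t : Fin m → Fin (n + 1) => #(insert s (univ.image t)) = m + 1) := by
    have hc : Fintype.card (Fin m ↪ {x : Fin (n + 1) // x ≠ s}) = n.descFactorial m := by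
      rw [Fintype.card_embedding_eq]
      simp [Fintype.card_subtype_compl]
    rw [← hc, ← card_univ]
    refine card_le_card_of_injOn (fun e i => (e i : Fin (n + 1))) ?_ ?_
    · intro e _
      have hi : Function.Injective fun i => (e i : Fin (n + 1)) :=
        Subtype.val_injective.comp e.injective
      simp only [coe_filter, mem_univ, true_and, Set.mem_ofPred_eq]
      rw [card_insert_of_notMem, card_image_of_injective _ hi, card_univ, Fintype.card_fin]
      intro h
      obtain ⟨i, -, hi⟩ := mem_image.1 h
      exact (e i).2 hi
    · intro e _ f _ h
      ext i
      exact congrArg Fin.val (congrFun h i)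
  have hpow : ((n : ℝ) + 1) ^ m * (1 - (m : ℝ) ^ 2 / ((n : ℝ) + 1)) ≤ n.descFactorial m := by
    rcases le_total m (n + 1) with hmn | hmn
    · have h1 : (((n + 1 - m) ^ m : ℕ) : ℝ) ≤ n.descFactorial m := by
        exact_mod_cast Nat.pow_sub_le_descFactorial n m
      refine le_trans ?_ h1
      have hmn' : (m : ℝ) ≤ (n : ℝ) + 1 := by exact_mod_cast hmn
      have h2 := one_add_mul_le_pow (a := -((m : ℝ) / ((n : ℝ) + 1))) (by
        have := (div_le_one hn).2 hmn'
        linarith) m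
      have h3 : ((n : ℝ) + 1) * (1 + -((m : ℝ) / ((n : ℝ) + 1))) = (n : ℝ) + 1 - m := by
        field_simp
        ring
      push_cast [Nat.cast_sub hmn]
      rw [← h3, mul_pow]
      refine mul_le_mul_of_nonneg_left (le_trans (le_of_eq ?_) h2) (by positivity)
      ring
    · have hmn' : (n : ℝ) + 1 ≤ m := by exact_mod_cast hmn
      have h1 : 1 ≤ (m : ℝ) ^ 2 / ((n : ℝ) + 1) := by
        rw [one_le_div hn]
        nlinarith
      refine le_trans (mul_nonpos_of_nonneg_of_nonpos (by positivity) (by linarith)) ?_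
      positivity
  rw [card_univ, Fintype.card_fun, Fintype.card_fin, Fintype.card_fin] at htot
  have htot' : (#(univ.filter fun t : Fin m → Fin (n + 1) => #(insert s (univ.image t)) = m + 1) : ℝ)
      + #(univ.filter fun t : Fin m → Fin (n + 1) => #(insert s (univ.image t)) ≠ m + 1)
      = ((n : ℝ) + 1) ^ m := by exact_mod_cast htot
  have hgood' : (n.descFactorial m : ℝ)
      ≤ #(univ.filter fun t : Fin m → Fin (n + 1) => #(insert s (univ.image t)) = m + 1) := by
    exact_mod_cast hgood
  linarith

lemma mallowsWeight_pos (n : ℕ) (β : ℝ) (σ : Perm (Fin n)) : 0 < mallowsWeight n β σ :=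
  Real.exp_pos _

lemma sum_mallowsWeight_pos (n : ℕ) (β : ℝ) : 0 < ∑ σ, mallowsWeight n β σ :=
  sum_pos (fun σ _ => mallowsWeight_pos n β σ) univ_nonempty

lemma sum_mallowsProb (n : ℕ) (β : ℝ) : ∑ σ, mallowsProb n β σ = 1 := by
  simp only [mallowsProb]
  rw [← sum_div, div_self (sum_mallowsWeight_pos n β).ne']

lemma oneCycle_prob {β : ℝ} (hβ : 0 < β) {K L : ℕ} (hK : 33 ≤ K) (hL0 : 33 ≤ L)
    (hL : β * L ≤ 1) {n : ℕ} (T : Finset (Fin n)) (hT : T.Nonempty) :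
    |∑ σ, mallowsProb n β σ * (if OneCycle σ T then 1 else 0) - 1 / #T|
      ≤ 2 * β * K ^ 2 + (4096 * #T + 2048) * (2 / K + n / (L : ℝ) ^ 2) := by
  have hZ := sum_mallowsWeight_pos n β
  have h := oneCycle_approx hβ hK hL0 hL T hT
  set Z := ∑ σ, mallowsWeight n β σ with hZdef
  have e : ∑ σ, mallowsProb n β σ * (if OneCycle σ T then 1 else 0) - 1 / #T
      = (∑ σ, mallowsWeight n β σ * (if OneCycle σ T then 1 else 0) - Z / #T) / Z := by
    rw [sub_div, sum_div]
    congr 1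
    · refine sum_congr rfl fun σ _ => ?_
      rw [mallowsProb, ← hZdef]
      ring
    · field_simp
  rw [e, abs_div, abs_of_pos hZ, div_le_iff₀ hZ, mul_comm _ Z]
  exact h

lemma moment_approx {β : ℝ} (hβ : 0 < β) {K L : ℕ} (hK : 33 ≤ K) (hL0 : 33 ≤ L)
    (hL : β * L ≤ 1) {n : ℕ} (s : Fin (n + 1)) (m : ℕ) :
    |∑ σ, mallowsProb (n + 1) β σ * (#(cycleFinset (n + 1) σ s) / ((n : ℝ) + 1)) ^ m
        - 1 / ((m : ℝ) + 1)|
      ≤ 2 * β * K ^ 2 + (4096 * ((m : ℝ) + 1) + 2048) * (2 / K + ((n : ℝ) + 1) / (L : ℝ) ^ 2)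
        + (m : ℝ) ^ 2 / ((n : ℝ) + 1) := by
  have hn : (0 : ℝ) < (n : ℝ) + 1 := by positivity
  set η : ℝ := 2 / K + ((n : ℝ) + 1) / (L : ℝ) ^ 2 with hη
  have hη0 : 0 ≤ η := by positivity
  set E : ℝ := 2 * β * K ^ 2 + (4096 * ((m : ℝ) + 1) + 2048) * η with hE
  have hterm : ∀ t : Fin m → Fin (n + 1),
      |∑ σ, mallowsProb (n + 1) β σ * (if OneCycle σ (insert s (univ.image t)) then 1 else 0)
        - 1 / ((m : ℝ) + 1)|
      ≤ E + if #(insert s (univ.image t)) ≠ m + 1 then 1 else 0 := by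
    intro t
    set T := insert s (univ.image t) with hT
    have hne : T.Nonempty := ⟨s, mem_insert_self _ _⟩
    have hTm : #T ≤ m + 1 := by
      refine (card_insert_le _ _).trans (Nat.add_le_add_right ?_ 1)
      simpa using (card_image_le (s := univ) (f := t))
    have hTm' : (#T : ℝ) ≤ (m : ℝ) + 1 := by exact_mod_cast hTm
    have hT1 : (1 : ℝ) ≤ #T := by exact_mod_cast hne.card_pos
    have h1 := oneCycle_prob hβ hK hL0 hL T hne
    have h2 : 2 * β * K ^ 2 + (4096 * #T + 2048) * (2 / K + ((n + 1 : ℕ) : ℝ) / (L : ℝ) ^ 2) ≤ E := by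
      rw [hE, hη]
      push_cast
      gcongr
    have h3 : |1 / (#T : ℝ) - 1 / ((m : ℝ) + 1)| ≤ if #T ≠ m + 1 then 1 else 0 := by
      split_ifs with h
      · have a1 : 1 / (#T : ℝ) ≤ 1 := (div_le_one (by linarith)).2 hT1
        have a2 : 0 ≤ 1 / (#T : ℝ) := by positivity
        have a3 : 1 / ((m : ℝ) + 1) ≤ 1 := (div_le_one (by positivity)).2 (by linarith)
        have a4 : 0 ≤ 1 / ((m : ℝ) + 1) := by positivity
        rw [abs_le]
        constructor <;> linarith
      · push Not at h
        rw [h]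
        simp
    exact (abs_sub_le _ _ _).trans (add_le_add (h1.trans h2) h3)
  have hexp : ∑ σ, mallowsProb (n + 1) β σ * (#(cycleFinset (n + 1) σ s) / ((n : ℝ) + 1)) ^ m
      - 1 / ((m : ℝ) + 1)
      = (∑ t : Fin m → Fin (n + 1), (∑ σ, mallowsProb (n + 1) β σ *
          (if OneCycle σ (insert s (univ.image t)) then 1 else 0) - 1 / ((m : ℝ) + 1)))
        / ((n : ℝ) + 1) ^ m := by
    rw [sum_sub_distrib, sum_comm, sub_div, sum_div]
    congr 1
    · refine sum_congr rfl fun σ _ => ?_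
      rw [div_pow, card_cycleFinset_pow, ← mul_sum, mul_div_assoc]
    · rw [sum_const, card_univ, Fintype.card_fun, Fintype.card_fin, Fintype.card_fin, nsmul_eq_mul]
      push_cast
      rw [mul_div_cancel_left₀ _ (by positivity)]
  rw [hexp, abs_div, abs_of_pos (show 0 < ((n : ℝ) + 1) ^ m by positivity),
    div_le_iff₀ (by positivity)]
  refine (abs_sum_le_sum_abs _ _).trans ((sum_le_sum fun t _ => hterm t).trans ?_)
  rw [sum_add_distrib, sum_boole, sum_const, card_univ, Fintype.card_fun, Fintype.card_fin,
    Fintype.card_fin, nsmul_eq_mul]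
  have := card_degenerate_le s m
  push_cast
  linarith

/-- With `√n β_n → 0` one may take `L = ⌊1 / β_n⌋`, for which `n / L ^ 2 → 0`; the remaining error
`1 / K` is made small by fixing a large `K`. -/
lemma tendsto_moment (β : ℕ → ℝ) (hβpos : ∀ n : ℕ, 0 < β n)
    (hβlim : Filter.Tendsto (fun n : ℕ => Real.sqrt n * β n) Filter.atTop (nhds 0))
    (s : (n : ℕ) → Fin (n + 1)) (m : ℕ) :
    Filter.Tendsto (fun n => ∑ σ, mallowsProb (n + 1) (β (n + 1)) σ *
      (#(cycleFinset (n + 1) σ (s n)) / ((n : ℝ) + 1)) ^ m) Filter.atTop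
      (nhds (1 / ((m : ℝ) + 1))) := by
  have hlim' := hβlim.comp (Filter.tendsto_add_atTop_nat 1)
  have hsq : Filter.Tendsto (fun n : ℕ => ((n : ℝ) + 1) * β (n + 1) ^ 2) Filter.atTop (nhds 0) := by
    have h := hlim'.pow 2
    rw [zero_pow two_ne_zero] at h
    refine h.congr fun n => ?_
    simp only [Function.comp_apply]
    rw [mul_pow, Real.sq_sqrt (by positivity)]
    push_cast
    ring
  have hβ0 : Filter.Tendsto (fun n : ℕ => β (n + 1)) Filter.atTop (nhds 0) := by
    refine squeeze_zero (fun n => (hβpos _).le) (fun n => ?_) hlim'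
    simp only [Function.comp_apply]
    refine le_mul_of_one_le_left (hβpos _).le ?_
    rw [Real.one_le_sqrt]
    push_cast
    linarith [(Nat.cast_nonneg n : (0 : ℝ) ≤ n)]
  rw [Metric.tendsto_atTop]
  intro ε hε
  set A : ℝ := 4096 * ((m : ℝ) + 1) + 2048 with hA
  have hA0 : 0 < A := by positivity
  obtain ⟨K₀, hK₀⟩ := exists_nat_gt (A * 2 / ε)
  set K := max K₀ 33 with hK
  have hK0 : (0 : ℝ) < K := by
    have : 33 ≤ K := le_max_right _ _
    exact_mod_cast (by omega : 0 < K)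
  have hKε : A * (2 / K) < ε := by
    have : (K₀ : ℝ) ≤ K := by exact_mod_cast le_max_left _ _
    rw [div_lt_iff₀ hε] at hK₀
    rw [← mul_div_assoc, div_lt_iff₀ hK0]
    nlinarith
  have hbound : Filter.Tendsto (fun n : ℕ => 2 * β (n + 1) * K ^ 2
      + A * (2 / K + 4 * (((n : ℝ) + 1) * β (n + 1) ^ 2)) + (m : ℝ) ^ 2 * (1 / ((n : ℝ) + 1)))
      Filter.atTop (nhds (2 * 0 * K ^ 2 + A * (2 / K + 4 * 0) + (m : ℝ) ^ 2 * 0)) :=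
    (((hβ0.const_mul 2).mul_const _).add (((hsq.const_mul 4).const_add _).const_mul A)).add
      (tendsto_one_div_add_atTop_nhds_zero_nat.const_mul _)
  have hev := (hbound.eventually_lt_const (u := ε) (by simpa using hKε)).and
    (hβ0.eventually_lt_const (u := (1 / 34 : ℝ)) (by norm_num))
  obtain ⟨N, hN⟩ := Filter.eventually_atTop.1 hev
  refine ⟨N, fun n hn => ?_⟩
  obtain ⟨h1, h2⟩ := hN n hn
  have hb := hβpos (n + 1)
  set b := β (n + 1) with hbdef
  set L := ⌊1 / b⌋₊ with hLdef
  have hL33 : 33 ≤ L := by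
    refine Nat.le_floor ?_
    rw [le_div_iff₀ hb]
    push_cast
    linarith
  have hL0 : (0 : ℝ) < L := by exact_mod_cast (by omega : 0 < L)
  have hL : b * L ≤ 1 := by
    have := Nat.floor_le (show 0 ≤ 1 / b by positivity)
    rw [← hLdef, le_div_iff₀ hb] at this
    linarith
  have hL' : 1 ≤ 2 * (b * L) := by
    have := Nat.lt_floor_add_one (1 / b)
    rw [← hLdef, div_lt_iff₀ hb] at this
    linarith
  have hLsq : ((n : ℝ) + 1) / (L : ℝ) ^ 2 ≤ 4 * (((n : ℝ) + 1) * b ^ 2) := by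
    rw [div_le_iff₀ (by positivity)]
    have : 1 ≤ (2 * (b * L)) ^ 2 := one_le_pow₀ hL'
    have hn : (0 : ℝ) < (n : ℝ) + 1 := by positivity
    nlinarith
  rw [Real.dist_eq]
  refine (moment_approx hb (le_max_right K₀ 33) hL33 hL (s n) m).trans_lt (lt_of_le_of_lt ?_ h1)
  rw [← hA, mul_one_div]
  gcongr

end MallowsCycle

/-- If `β_n > 0`, `√n · β_n → 0`, and `s_n ∈ [n]` is deterministic, then under `P_{n,β_n}`
the normalized cycle length `|C_{s_n}(σ)| / n` converges in distribution to `U([0,1])`: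
for every `x ∈ [0,1]`, `P_{n,β_n}(|C_{s_n}(σ)| ≤ x·n) → x`.  (Positive integers `n` are
written as `n + 1` with `n : ℕ` ranging over all naturals.) -/
theorem statement2 (β : ℕ → ℝ) (hβpos : ∀ n : ℕ, 0 < β n)
    (hβlim : Filter.Tendsto (fun n : ℕ => Real.sqrt n * β n) Filter.atTop (nhds 0))
    (s : (n : ℕ) → Fin (n + 1)) :
    ∀ x : ℝ, 0 ≤ x → x ≤ 1 →
      Filter.Tendsto
        (fun n : ℕ =>
          mallowsP (n + 1) (β (n + 1))
            (fun σ => ((cycleFinset (n + 1) σ (s n)).card : ℝ) ≤ x * ((n : ℝ) + 1)))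
        Filter.atTop (nhds x) := by
  intro x hx0 hx1
  have hX : ∀ n (σ : Equiv.Perm (Fin (n + 1))),
      ((cycleFinset (n + 1) σ (s n)).card : ℝ) / ((n : ℝ) + 1) ∈ Set.Icc (0 : ℝ) 1 := by
    intro n σ
    refine ⟨by positivity, (div_le_one (by positivity)).2 ?_⟩
    have := Finset.card_le_univ (cycleFinset (n + 1) σ (s n))
    rw [Fintype.card_fin] at this
    exact_mod_cast this
  have h := MallowsCycle.tendsto_cdf
    (w := fun n σ => mallowsProb (n + 1) (β (n + 1)) σ)
    (X := fun n σ => ((cycleFinset (n + 1) σ (s n)).card : ℝ) / ((n : ℝ) + 1))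
    (fun n σ => div_nonneg (Real.exp_pos _).le (MallowsCycle.sum_mallowsWeight_pos _ _).le)
    (fun n => MallowsCycle.sum_mallowsProb _ _) hX
    (MallowsCycle.tendsto_moment β hβpos hβlim s) hx0 hx1
  refine h.congr fun n => ?_
  have hn : (0 : ℝ) < (n : ℝ) + 1 := by positivity
  simp only [mallowsP, div_le_iff₀ hn]
end

section
/- There exists a positive absolute constant C_0 such that for every positive integer n, every β > 0, every real r ≥ C_0 max{β^{-1}, 1}, and every j ∈ [n], one has P_{n,β}({σ ∈ S_n : |D_j(σ)| ≥ r}) ≤ 3 exp(-r/4). -/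
open scoped BigOperators Classical

/-- `D_j(σ) = {k ∈ [n] : k ≤ j, σ(k) ≥ j + 1}` (in `Fin n` coordinates: `k ≤ j < σ(k)`). -/
def Dset (n : ℕ) (σ : Equiv.Perm (Fin n)) (j : Fin n) : Finset (Fin n) :=
  Finset.univ.filter fun k => k ≤ j ∧ j < σ k

/-- The set of `k` for which exactly one of `k` and `σ k` is `≤ j`. -/
noncomputable def crossSet (n : ℕ) (σ : Equiv.Perm (Fin n)) (j : Fin n) : Finset (Fin n) :=
  Finset.univ.filter fun k => ¬ (k ≤ j ↔ σ k ≤ j)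

/-- The number of points strictly between `k` and the cut separating `j` from `j + 1`. -/
def cutDist {n : ℕ} (j k : Fin n) : ℕ :=
  if k ≤ j then (j : ℕ) - k else (k : ℕ) - j - 1

/-- `s` fixes the complement of `T` pointwise, preserves `T`, and moves every point of `T` to the
other side of the cut at `j`. -/
def IsFlip {n : ℕ} (j : Fin n) (T : Finset (Fin n)) (s : Equiv.Perm (Fin n)) : Prop :=
  (∀ k ∉ T, s k = k) ∧ ∀ k ∈ T, s k ∈ T ∧ ¬ (s k ≤ j ↔ k ≤ j)

/-- A fixed choice of a flip of `T`, depending only on `T` and `j` (the identity when `T` admits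
no flip). -/
noncomputable def cutFlip {n : ℕ} (j : Fin n) (T : Finset (Fin n)) : Equiv.Perm (Fin n) :=
  if h : ∃ s, IsFlip j T s then h.choose else 1

/-- As many points cross the cut from left to right as from right to left. -/
lemma card_left_eq_card_right {n : ℕ} (σ : Equiv.Perm (Fin n)) (j : Fin n) :
    (Finset.univ.filter fun k => k ≤ j ∧ ¬ σ k ≤ j).card
      = (Finset.univ.filter fun k => ¬ k ≤ j ∧ σ k ≤ j).card := by
  have h : (Finset.univ.filter fun k => k ≤ j).card
      = (Finset.univ.filter fun k => σ k ≤ j).card := by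
    symm
    apply Finset.card_bij (fun k _ => σ k)
    · simp
    · intro a _ b _ hab
      exact σ.injective hab
    · intro b hb
      exact ⟨σ.symm b, by simpa using hb, by simp⟩
  have h1 := Finset.card_sdiff_comm h
  convert h1 using 2 <;> ext k <;> simp [and_comm]

lemma card_crossSet (n : ℕ) (σ : Equiv.Perm (Fin n)) (j : Fin n) :
    (crossSet n σ j).card = 2 * (Dset n σ j).card := by
  have hD : Dset n σ j = Finset.univ.filter fun k => k ≤ j ∧ ¬ σ k ≤ j := by
    ext k; simp [Dset]
  have hT : crossSet n σ j = (Finset.univ.filter fun k => k ≤ j ∧ ¬ σ k ≤ j) ∪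
      (Finset.univ.filter fun k => ¬ k ≤ j ∧ σ k ≤ j) := by
    ext k; simp only [crossSet, Finset.mem_filter, Finset.mem_union, Finset.mem_univ, true_and]
    tauto
  rw [hT, Finset.card_union_of_disjoint, ← card_left_eq_card_right, ← hD, two_mul]
  rw [Finset.disjoint_filter]
  tauto

lemma exists_isFlip (n : ℕ) (σ : Equiv.Perm (Fin n)) (j : Fin n) :
    ∃ s, IsFlip j (crossSet n σ j) s := by
  have hc := card_left_eq_card_right σ j
  set A := Finset.univ.filter fun k => k ≤ j ∧ ¬ σ k ≤ j with hA
  set B := Finset.univ.filter fun k => ¬ k ≤ j ∧ σ k ≤ j with hB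
  have hAB : ∀ k, k ∈ A → k ∉ B := by
    intro k; simp only [hA, hB, Finset.mem_filter, Finset.mem_univ, true_and]; tauto
  have hT : ∀ k, k ∈ crossSet n σ j ↔ k ∈ A ∨ k ∈ B := by
    intro k
    simp only [hA, hB, crossSet, Finset.mem_filter, Finset.mem_univ, true_and]; tauto
  have hAj : ∀ k ∈ A, k ≤ j := by intro k hk; simp [hA] at hk; exact hk.1
  have hBj : ∀ k ∈ B, ¬ k ≤ j := by intro k hk; simp [hB] at hk; simpa using hk.1
  let e : A ≃ B := Finset.equivOfCardEq hc
  let f : Fin n → Fin n := fun k =>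
    if h : k ∈ A then (e ⟨k, h⟩ : Fin n) else if h : k ∈ B then (e.symm ⟨k, h⟩ : Fin n) else k
  have fA : ∀ k (h : k ∈ A), f k = e ⟨k, h⟩ := fun k h => by simp [f, h]
  have fB : ∀ k (h : k ∈ B), f k = e.symm ⟨k, h⟩ := fun k h => by
    have : k ∉ A := fun h' => hAB k h' h
    simp [f, h, this]
  have fC : ∀ k, k ∉ A → k ∉ B → f k = k := fun k h h' => by simp [f, h, h']
  have hf : Function.Involutive f := by
    intro k
    by_cases h : k ∈ A
    · rw [fA k h, fB _ (e ⟨k, h⟩).2]; simp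
    · by_cases h' : k ∈ B
      · rw [fB k h', fA _ (e.symm ⟨k, h'⟩).2]; simp
      · rw [fC k h h', fC k h h']
  refine ⟨hf.toPerm, ?_, ?_⟩
  · intro k hk
    rw [hT] at hk
    push Not at hk
    exact fC k hk.1 hk.2
  · intro k hk
    rw [hT] at hk ⊢
    change (f k ∈ A ∨ f k ∈ B) ∧ ¬ (f k ≤ j ↔ k ≤ j)
    rcases hk with h | h
    · rw [fA k h]
      have h1 := (e ⟨k, h⟩).2
      have := hBj _ h1
      have := hAj _ h
      exact ⟨Or.inr h1, by tauto⟩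
    · rw [fB k h]
      have h1 := (e.symm ⟨k, h⟩).2
      have := hAj _ h1
      have := hBj _ h
      exact ⟨Or.inl h1, by tauto⟩

lemma isFlip_cutFlip (n : ℕ) (σ : Equiv.Perm (Fin n)) (j : Fin n) :
    IsFlip j (crossSet n σ j) (cutFlip j (crossSet n σ j)) := by
  have h := exists_isFlip n σ j
  rw [cutFlip, dif_pos h]
  exact h.choose_spec

lemma dist_of_same_side {n : ℕ} (j k l : Fin n) (h : k ≤ j ↔ l ≤ j) :
    |((l : ℕ) : ℝ) - ((k : ℕ) : ℝ)| + 2 * ((min (cutDist j k) (cutDist j l) : ℕ) : ℝ)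
      = (cutDist j k : ℝ) + cutDist j l := by
  have : |((l : ℕ) : ℤ) - ((k : ℕ) : ℤ)| + 2 * ((min (cutDist j k) (cutDist j l) : ℕ) : ℤ)
      = (cutDist j k : ℤ) + cutDist j l := by
    simp only [cutDist, Fin.le_def] at *
    split_ifs <;> grind
  exact_mod_cast this

lemma dist_of_cross {n : ℕ} (j k l : Fin n) (h : ¬ (k ≤ j ↔ l ≤ j)) :
    (cutDist j k : ℝ) + cutDist j l ≤ |((l : ℕ) : ℝ) - ((k : ℕ) : ℝ)| := by
  have : (cutDist j k : ℤ) + cutDist j l ≤ |((l : ℕ) : ℤ) - ((k : ℕ) : ℤ)| := by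
    simp only [cutDist, Fin.le_def] at *
    split_ifs <;> grind
  exact_mod_cast this

/-- Undoing the crossings of `σ` by a flip lowers the cost by at least
`2 ∑ min(e(k), e(σ' k))`, the sum being over the crossing set. -/
lemma cost_le (n : ℕ) (σ s : Equiv.Perm (Fin n)) (j : Fin n)
    (hs : IsFlip j (crossSet n σ j) s) :
    ∑ i : Fin n, |(((σ * s) i : ℕ) : ℝ) - ((i : ℕ) : ℝ)|
      + 2 * ∑ k ∈ crossSet n σ j, ((min (cutDist j k) (cutDist j ((σ * s) k)) : ℕ) : ℝ)
      ≤ ∑ i : Fin n, |((σ i : ℕ) : ℝ) - ((i : ℕ) : ℝ)| := by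
  set T := crossSet n σ j with hT
  have hcross : ∀ k ∈ T, ¬ (k ≤ j ↔ σ k ≤ j) := by
    intro k hk; simpa only [hT, crossSet, Finset.mem_filter, Finset.mem_univ, true_and] using hk
  rw [← Finset.sum_add_sum_compl T, ← Finset.sum_add_sum_compl T
    (fun i : Fin n => |((σ i : ℕ) : ℝ) - ((i : ℕ) : ℝ)|)]
  have h1 : ∑ i ∈ Tᶜ, |(((σ * s) i : ℕ) : ℝ) - ((i : ℕ) : ℝ)|
      = ∑ i ∈ Tᶜ, |((σ i : ℕ) : ℝ) - ((i : ℕ) : ℝ)| := by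
    refine Finset.sum_congr rfl fun i hi => ?_
    rw [Equiv.Perm.mul_apply, hs.1 i (by simpa using hi)]
  have h2 : ∑ i ∈ T, |(((σ * s) i : ℕ) : ℝ) - ((i : ℕ) : ℝ)|
      + 2 * ∑ k ∈ T, ((min (cutDist j k) (cutDist j ((σ * s) k)) : ℕ) : ℝ)
      = ∑ k ∈ T, (cutDist j k : ℝ) + ∑ k ∈ T, (cutDist j (σ (s k)) : ℝ) := by
    rw [Finset.mul_sum, ← Finset.sum_add_distrib, ← Finset.sum_add_distrib]
    refine Finset.sum_congr rfl fun k hk => ?_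
    rw [Equiv.Perm.mul_apply]
    apply dist_of_same_side
    have a := (hs.2 k hk).2
    have b := hcross _ (hs.2 k hk).1
    tauto
  have h3 : ∑ k ∈ T, (cutDist j (σ (s k)) : ℝ) = ∑ k ∈ T, (cutDist j (σ k) : ℝ) := by
    have himg : T.image s = T :=
      Finset.eq_of_subset_of_card_le
        (Finset.image_subset_iff.2 fun k hk => (hs.2 k hk).1)
        (Finset.card_image_of_injective _ s.injective).ge
    conv_rhs => rw [← himg]
    rw [Finset.sum_image (fun a _ b _ h => s.injective h)]
  have h4 : ∑ k ∈ T, (cutDist j k : ℝ) + ∑ k ∈ T, (cutDist j (σ k) : ℝ)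
      ≤ ∑ i ∈ T, |((σ i : ℕ) : ℝ) - ((i : ℕ) : ℝ)| := by
    rw [← Finset.sum_add_distrib]
    exact Finset.sum_le_sum fun k hk => dist_of_cross j k (σ k) (hcross k hk)
  linarith

/-- At most two points lie at any given distance from the cut. -/
lemma sum_pow_cutDist_le {n : ℕ} (j : Fin n) {x : ℝ} (h0 : 0 ≤ x) (h1 : x < 1) :
    ∑ k : Fin n, x ^ cutDist j k ≤ 2 * (1 - x)⁻¹ := by
  have key : ∀ U : Finset (Fin n), Set.InjOn (cutDist j) U →
      ∑ k ∈ U, x ^ cutDist j k ≤ (1 - x)⁻¹ := by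
    intro U hU
    rw [← Finset.sum_image (f := fun i => x ^ i) hU, ← tsum_geometric_of_lt_one h0 h1]
    exact (summable_geometric_of_lt_one h0 h1).sum_le_tsum _ fun i _ => pow_nonneg h0 i
  rw [← Finset.sum_filter_add_sum_filter_not Finset.univ (fun k => k ≤ j), two_mul]
  apply add_le_add <;> apply key
  · intro a ha b hb hab
    simp only [Finset.coe_filter, Finset.mem_univ, true_and, Set.mem_ofPred_eq] at ha hb
    simp only [cutDist, ha, hb, if_true] at hab
    simp only [Fin.le_def, Fin.ext_iff] at *
    omega
  · intro a ha b hb hab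
    simp only [Finset.coe_filter, Finset.mem_univ, true_and, Set.mem_ofPred_eq] at ha hb
    simp only [cutDist, ha, hb, if_false] at hab
    simp only [Fin.le_def, Fin.ext_iff] at *
    omega

lemma sum_pow_min_le {n : ℕ} (j : Fin n) (τ : Equiv.Perm (Fin n)) {x : ℝ} (h0 : 0 ≤ x)
    (h1 : x < 1) :
    ∑ k : Fin n, x ^ min (cutDist j k) (cutDist j (τ k)) ≤ 4 * (1 - x)⁻¹ := by
  have h := sum_pow_cutDist_le j h0 h1
  have hτ : ∑ k : Fin n, x ^ cutDist j (τ k) = ∑ k : Fin n, x ^ cutDist j k :=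
    Equiv.sum_comp τ fun k => x ^ cutDist j k
  calc ∑ k : Fin n, x ^ min (cutDist j k) (cutDist j (τ k))
      ≤ ∑ k : Fin n, (x ^ cutDist j k + x ^ cutDist j (τ k)) := by
        refine Finset.sum_le_sum fun k _ => ?_
        have a := pow_nonneg h0 (cutDist j k)
        have b := pow_nonneg h0 (cutDist j (τ k))
        rcases min_choice (cutDist j k) (cutDist j (τ k)) with h | h <;> rw [h] <;> linarith
    _ ≤ 4 * (1 - x)⁻¹ := by rw [Finset.sum_add_distrib, hτ]; linarith

lemma weight_le (n : ℕ) (β : ℝ) (hβ : 0 < β) (σ : Equiv.Perm (Fin n)) (j : Fin n)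
    (s : Equiv.Perm (Fin n)) (hs : IsFlip j (crossSet n σ j) s) :
    mallowsWeight n β σ * Real.exp ((crossSet n σ j).card : ℝ) ≤
      mallowsWeight n β (σ * s) * ∏ k ∈ crossSet n σ j,
        (Real.exp 1 * Real.exp (-2 * β) ^ min (cutDist j k) (cutDist j ((σ * s) k))) := by
  have hc := cost_le n σ s j hs
  have : ∏ k ∈ crossSet n σ j,
        (Real.exp 1 * Real.exp (-2 * β) ^ min (cutDist j k) (cutDist j ((σ * s) k)))
      = Real.exp ((crossSet n σ j).card : ℝ) * Real.exp (-β * (2 * ∑ k ∈ crossSet n σ j,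
          ((min (cutDist j k) (cutDist j ((σ * s) k)) : ℕ) : ℝ))) := by
    rw [Finset.prod_mul_distrib, Finset.prod_const, ← Real.exp_nat_mul, mul_one,
      Finset.mul_sum, Finset.mul_sum, Real.exp_sum]
    congr 1
    refine Finset.prod_congr rfl fun k _ => ?_
    rw [← Real.exp_nat_mul]
    congr 1
    ring
  rw [this, mallowsWeight, mallowsWeight, ← Real.exp_add, ← Real.exp_add, ← Real.exp_add,
    Real.exp_le_exp]
  nlinarith

/-- The exponential moment bound `E[exp |T(σ)|] ≤ exp(4e / (1 - exp(-2β)))`, in unnormalized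
form. -/
lemma moment_le (n : ℕ) (β : ℝ) (hβ : 0 < β) (j : Fin n) :
    ∑ σ : Equiv.Perm (Fin n), mallowsWeight n β σ * Real.exp ((crossSet n σ j).card : ℝ) ≤
      (∑ σ : Equiv.Perm (Fin n), mallowsWeight n β σ) *
        Real.exp (Real.exp 1 * (4 * (1 - Real.exp (-2 * β))⁻¹)) := by
  set x := Real.exp (-2 * β) with hx
  have hx0 : 0 ≤ x := (Real.exp_pos _).le
  have hx1 : x < 1 := by rw [hx, Real.exp_lt_one_iff]; linarith
  let g : Equiv.Perm (Fin n) → Fin n → ℝ := fun τ k =>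
    Real.exp 1 * x ^ min (cutDist j k) (cutDist j (τ k))
  have hg : ∀ τ k, 0 ≤ g τ k := fun τ k => by positivity
  have hw : ∀ τ, 0 ≤ mallowsWeight n β τ := fun τ => (Real.exp_pos _).le
  let G : Equiv.Perm (Fin n) × Finset (Fin n) → ℝ := fun p =>
    mallowsWeight n β p.1 * ∏ k ∈ p.2, g p.1 k
  let φ : Equiv.Perm (Fin n) → Equiv.Perm (Fin n) × Finset (Fin n) := fun σ =>
    (σ * cutFlip j (crossSet n σ j), crossSet n σ j)
  have hφ : Function.Injective φ := by
    intro a b hab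
    simp only [φ, Prod.mk.injEq] at hab
    obtain ⟨h1, h2⟩ := hab
    rw [h2] at h1
    exact mul_right_cancel h1
  calc ∑ σ : Equiv.Perm (Fin n), mallowsWeight n β σ * Real.exp ((crossSet n σ j).card : ℝ)
      ≤ ∑ σ : Equiv.Perm (Fin n), G (φ σ) :=
        Finset.sum_le_sum fun σ _ => weight_le n β hβ σ j _ (isFlip_cutFlip n σ j)
    _ = ∑ p ∈ Finset.univ.image φ, G p :=
        (Finset.sum_image fun a _ b _ h => hφ h).symm
    _ ≤ ∑ p, G p := by
        refine Finset.sum_le_sum_of_subset_of_nonneg (Finset.subset_univ _) fun p _ _ => ?_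
        exact mul_nonneg (hw _) (Finset.prod_nonneg fun k _ => hg _ k)
    _ = ∑ τ, mallowsWeight n β τ * ∏ k, (1 + g τ k) := by
        rw [Fintype.sum_prod_type]
        refine Finset.sum_congr rfl fun τ _ => ?_
        rw [Finset.prod_one_add, Finset.mul_sum, Finset.powerset_univ]
    _ ≤ ∑ τ, mallowsWeight n β τ * Real.exp (Real.exp 1 * (4 * (1 - x)⁻¹)) := by
        refine Finset.sum_le_sum fun τ _ => mul_le_mul_of_nonneg_left ?_ (hw τ)
        calc ∏ k, (1 + g τ k) ≤ ∏ k, Real.exp (g τ k) :=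
              Finset.prod_le_prod (fun k _ => by linarith [hg τ k])
                fun k _ => by linarith [Real.add_one_le_exp (g τ k)]
          _ = Real.exp (Real.exp 1 * ∑ k, x ^ min (cutDist j k) (cutDist j (τ k))) := by
              rw [← Real.exp_sum, Finset.mul_sum]
          _ ≤ _ := by
              rw [Real.exp_le_exp]
              exact mul_le_mul_of_nonneg_left (sum_pow_min_le j τ hx0 hx1) (Real.exp_pos _).le
    _ = _ := by rw [Finset.sum_mul]

lemma inv_one_sub_exp_le (β : ℝ) (hβ : 0 < β) :
    4 * (1 - Real.exp (-2 * β))⁻¹ ≤ 6 * max β⁻¹ 1 := by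
  have h1 : Real.exp (-2 * β) ≤ (1 + 2 * β)⁻¹ := by
    rw [neg_mul, Real.exp_neg]
    exact inv_anti₀ (by linarith) (by linarith [Real.add_one_le_exp (2 * β)])
  have h2 : 2 * β / (1 + 2 * β) ≤ 1 - Real.exp (-2 * β) := by
    have : 2 * β / (1 + 2 * β) = 1 - (1 + 2 * β)⁻¹ := by field_simp; ring
    linarith
  have h3 : (1 - Real.exp (-2 * β))⁻¹ ≤ (2 * β / (1 + 2 * β))⁻¹ :=
    inv_anti₀ (by positivity) h2
  have h4 : (2 * β / (1 + 2 * β))⁻¹ = β⁻¹ / 2 + 1 := by field_simp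
  linarith [le_max_left β⁻¹ 1, le_max_right β⁻¹ 1]

/-- There is an absolute constant `C₀ > 0` such that for all `n ≥ 1`, `β > 0`,
`r ≥ C₀ max{β⁻¹, 1}` and `j ∈ [n]`: `P_{n,β}(|D_j(σ)| ≥ r) ≤ 3 exp(-r/4)`. -/
theorem statement3 :
    ∃ C₀ : ℝ, 0 < C₀ ∧
      ∀ n : ℕ, 0 < n → ∀ β : ℝ, 0 < β → ∀ r : ℝ, C₀ * max β⁻¹ 1 ≤ r → ∀ j : Fin n,
        mallowsP n β (fun σ => r ≤ ((Dset n σ j).card : ℝ))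
          ≤ 3 * Real.exp (-r / 4) := by
  refine ⟨18, by norm_num, ?_⟩
  intro n _ β hβ r hr j
  have hM := moment_le n β hβ j
  set Z := ∑ τ : Equiv.Perm (Fin n), mallowsWeight n β τ with hZ
  set E := Real.exp 1 * (4 * (1 - Real.exp (-2 * β))⁻¹) with hE
  have hw : ∀ τ, 0 < mallowsWeight n β τ := fun τ => Real.exp_pos _
  have hZ0 : 0 < Z := Finset.sum_pos (fun τ _ => hw τ) ⟨1, Finset.mem_univ _⟩
  have hr0 : 0 < r := lt_of_lt_of_le (by positivity) hr
  -- `e < 3` turns the bound `6 max(1/β, 1)` on the geometric sum into `E ≤ r`.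
  have hEr : E ≤ r := by
    have h1 := inv_one_sub_exp_le β hβ
    have h2 := Real.exp_one_lt_d9
    have h3 : 0 < max β⁻¹ 1 := by positivity
    have h4 : E ≤ Real.exp 1 * (6 * max β⁻¹ 1) :=
      mul_le_mul_of_nonneg_left h1 (Real.exp_pos _).le
    nlinarith
  calc mallowsP n β (fun σ => r ≤ ((Dset n σ j).card : ℝ))
      ≤ ∑ σ, (mallowsWeight n β σ * Real.exp ((crossSet n σ j).card : ℝ))
          * (Real.exp (-2 * r) / Z) := by
        refine Finset.sum_le_sum fun σ _ => ?_
        have hwσ := hw σ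
        split_ifs with h
        · rw [mallowsProb, ← hZ, card_crossSet]
          have : 1 ≤ Real.exp (((2 * (Dset n σ j).card : ℕ) : ℝ)) * Real.exp (-2 * r) := by
            rw [← Real.exp_add]
            apply Real.one_le_exp
            push_cast
            linarith
          calc mallowsWeight n β σ / Z = mallowsWeight n β σ / Z * 1 := (mul_one _).symm
            _ ≤ mallowsWeight n β σ / Z *
                (Real.exp (((2 * (Dset n σ j).card : ℕ) : ℝ)) * Real.exp (-2 * r)) :=
              mul_le_mul_of_nonneg_left this (div_pos hwσ hZ0).le
            _ = _ := by simp only [div_eq_mul_inv]; ac_rfl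
        · exact mul_nonneg (mul_pos hwσ (Real.exp_pos _)).le
            (div_pos (Real.exp_pos _) hZ0).le
    _ ≤ (Z * Real.exp E) * (Real.exp (-2 * r) / Z) := by
        rw [← Finset.sum_mul]
        exact mul_le_mul_of_nonneg_right hM (by positivity)
    _ = Real.exp (E + -2 * r) := by
        rw [Real.exp_add]; field_simp
    _ ≤ Real.exp (-r / 4) := by
        rw [Real.exp_le_exp]; linarith
    _ ≤ 3 * Real.exp (-r / 4) := by linarith [Real.exp_pos (-r / 4)]
end

section
/- For every fixed constant c_0 > 0 there exists a constant C_0 > 0 depending only on c_0 such that for every positive integer n, every β ≥ c_0, every positive integer r, and every j ∈ [n], one has P_{n,β}({σ ∈ S_n : |D_j(σ)| ≥ r}) ≤ C_0 e^{-2βr}. -/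
/-!
Write `x = e^{-2β}` and let `A r` be the total weight of the permutations with `|D_j| ≥ r`.
If `k ∈ D_j(σ)` and `l` lies in `E_j(σ) = {l > j : σ l ≤ j}`, then `τ = σ ∘ (k l)` satisfies
`|D_j(τ)| ≥ |D_j(σ)| - 1`, and the `L¹` cost of `σ` exceeds that of `τ` by
`2 (min(l, τ l) - max(k, τ k))` (`mallowsWeight_mul_swap`). Since `|E_j| = |D_j|`
(`card_crossing_eq`), each `σ` counted by `A (r + 1)` has at least `r + 1` such pairs `(k, l)`.
Conversely, a fixed `τ` arises from pairs `(k, l)` whose weights factor and add up to at most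
`(∑_k x^{j - max(k, τ k)}) (∑_l x^{min(l, τ l) - j}) ≤ (2 / (1 - x)) (2 x / (1 - x))`,
because `x^{j - max(k, τ k)} ≤ x^{j - k} + x^{j - τ k}` reduces both factors to geometric series.

Hence `(r + 1) A (r + 1) ≤ K x A r` with `K = 4 / (1 - e^{-2c₀})²` (`tailWeight_step`), so
`A r ≤ (K^r / r!) x^r A 0 ≤ e^K e^{-2βr} A 0`, and `A 0` is the partition function.
-/

open scoped BigOperators Classical

/-- The total weight of the permutations with `|D_j(σ)| ≥ r`. -/
noncomputable def tailWeight (n : ℕ) (β : ℝ) (j : Fin n) (r : ℕ) : ℝ :=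
  ∑ σ : Equiv.Perm (Fin n), if r ≤ (Dset n σ j).card then mallowsWeight n β σ else 0

/-- As many points cross the level `j` downwards as upwards. -/
lemma card_crossing_eq {n : ℕ} (σ : Equiv.Perm (Fin n)) (j : Fin n) :
    (Finset.univ.filter fun l => j < l ∧ σ l ≤ j).card = (Dset n σ j).card := by
  have h : (Finset.univ.filter fun l => σ l ≤ j).card
      = (Finset.univ.filter fun l : Fin n => l ≤ j).card := by
    rw [← Finset.card_map σ.symm.toEmbedding (s := Finset.univ.filter fun l : Fin n => l ≤ j)]
    congr 1
    ext l
    simp [Finset.mem_map_equiv]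
  have h2 := Finset.card_sdiff_comm h
  convert h2 using 2
  · ext l
    simp [and_comm]
  · ext l
    simp [Dset]

lemma card_Dset_le_mul_swap {n : ℕ} (τ : Equiv.Perm (Fin n)) {j k l : Fin n} (hl : j < l) :
    (Dset n (τ * Equiv.swap k l) j).card ≤ (Dset n τ j).card + 1 := by
  refine le_trans (Finset.card_le_card (t := insert k (Dset n τ j)) ?_) (Finset.card_insert_le _ _)
  intro m hm
  simp only [Dset, Finset.mem_filter, Finset.mem_univ, true_and, Finset.mem_insert] at hm ⊢
  rw [Equiv.Perm.mul_apply] at hm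
  by_cases hmk : m = k
  · exact Or.inl hmk
  · have hml : m ≠ l := by
      rintro rfl
      exact absurd hm.1 (not_le.mpr hl)
    rw [Equiv.swap_apply_of_ne_of_ne hmk hml] at hm
    exact Or.inr hm

/-- Swapping the values at `k` and `l`, where `k` and `τ k` lie at or below the level `j` and
`l` and `τ l` above it, multiplies the weight by `e^{-2β (min(l, τ l) - max(k, τ k))}`; the
exponent is split at `j`. -/
lemma mallowsWeight_mul_swap {n : ℕ} (β : ℝ) (τ : Equiv.Perm (Fin n)) {j k l : Fin n}
    (hk : k ≤ j) (hτk : τ k ≤ j) (hl : j < l) (hτl : j < τ l) :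
    mallowsWeight n β (τ * Equiv.swap k l) = mallowsWeight n β τ *
      Real.exp (-(2 * β)) ^ ((j : ℕ) - max (k : ℕ) (τ k : ℕ)) *
      Real.exp (-(2 * β)) ^ (min (l : ℕ) (τ l : ℕ) - (j : ℕ)) := by
  have hkl : k ≠ l := (lt_of_le_of_lt hk hl).ne
  have hk' : (k : ℕ) ≤ j := hk
  have hτk' : (τ k : ℕ) ≤ j := hτk
  have hl' : (j : ℕ) < l := hl
  have hτl' : (j : ℕ) < τ l := hτl
  have hsum : ∑ i : Fin n, |(((τ * Equiv.swap k l) i : ℕ) : ℝ) - ((i : ℕ) : ℝ)|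
      - ∑ i : Fin n, |((τ i : ℕ) : ℝ) - ((i : ℕ) : ℝ)|
      = 2 * (((j : ℕ) - max (k : ℕ) (τ k : ℕ) : ℕ) : ℝ)
        + 2 * ((min (l : ℕ) (τ l : ℕ) - (j : ℕ) : ℕ) : ℝ) := by
    rw [← Finset.sum_sub_distrib,
      ← Finset.sum_subset (Finset.subset_univ ({k, l} : Finset (Fin n))), Finset.sum_pair hkl]
    · simp only [Equiv.Perm.mul_apply, Equiv.swap_apply_left, Equiv.swap_apply_right]
      generalize (k : ℕ) = a at *
      generalize (τ k : ℕ) = b at *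
      generalize (l : ℕ) = c at *
      generalize (τ l : ℕ) = d at *
      generalize (j : ℕ) = e at *
      rw [Nat.cast_sub (max_le hk' hτk'), Nat.cast_sub (le_min hl'.le hτl'.le)]
      push_cast
      have h1 : (a : ℝ) ≤ e := by exact_mod_cast hk'
      have h2 : (b : ℝ) ≤ e := by exact_mod_cast hτk'
      have h3 : (e : ℝ) ≤ c := by exact_mod_cast hl'.le
      have h4 : (e : ℝ) ≤ d := by exact_mod_cast hτl'.le
      rw [abs_of_nonneg (by linarith : (0 : ℝ) ≤ d - a),
        abs_of_nonpos (by linarith : (b : ℝ) - c ≤ 0)]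
      rcases le_total (a : ℝ) b with h | h <;> rcases le_total (c : ℝ) d with h' | h' <;>
        simp only [max_eq_left h, max_eq_right h, min_eq_left h', min_eq_right h',
          abs_of_nonneg (sub_nonneg.2 h), abs_of_nonneg (sub_nonneg.2 h'),
          abs_of_nonpos (sub_nonpos.2 h), abs_of_nonpos (sub_nonpos.2 h')] <;> ring
    · intro i _ hi
      simp only [Finset.mem_insert, Finset.mem_singleton, not_or] at hi
      simp [Equiv.Perm.mul_apply, Equiv.swap_apply_of_ne_of_ne hi.1 hi.2]
  unfold mallowsWeight
  rw [← Real.exp_nat_mul, ← Real.exp_nat_mul, ← Real.exp_add, ← Real.exp_add]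
  congr 1
  rw [sub_eq_iff_eq_add.1 hsum]
  ring

lemma sum_pow_le_geometric {ι : Type*} (s : Finset ι) (φ : ι → ℕ) (hφ : Set.InjOn φ s)
    {x : ℝ} (hx0 : 0 ≤ x) (hx1 : x < 1) : ∑ i ∈ s, x ^ φ i ≤ (1 - x)⁻¹ := by
  rw [← Finset.sum_image (f := fun m : ℕ => x ^ m) hφ, ← tsum_geometric_of_lt_one hx0 hx1]
  exact (summable_geometric_of_lt_one hx0 hx1).sum_le_tsum _ fun i _ => pow_nonneg hx0 i

lemma sum_below_le {n : ℕ} (τ : Equiv.Perm (Fin n)) (j : Fin n) {x : ℝ} (hx0 : 0 ≤ x)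
    (hx1 : x < 1) :
    (∑ k : Fin n, if k ≤ j ∧ τ k ≤ j then x ^ ((j : ℕ) - max (k : ℕ) (τ k : ℕ)) else 0)
      ≤ 2 * (1 - x)⁻¹ := by
  set u : Fin n → ℝ := fun k => if k ≤ j then x ^ ((j : ℕ) - (k : ℕ)) else 0 with hu
  have hu0 : ∀ k, 0 ≤ u k := fun k => by
    simp only [hu]
    split_ifs <;> positivity
  have hsum : ∑ k, u k ≤ (1 - x)⁻¹ := by
    rw [hu, ← Finset.sum_filter]
    refine sum_pow_le_geometric _ (fun k : Fin n => (j : ℕ) - (k : ℕ)) ?_ hx0 hx1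
    intro a ha b hb hab
    simp only [Finset.coe_filter, Finset.mem_univ, true_and, Set.mem_ofPred_eq, Fin.le_def]
      at ha hb hab
    exact Fin.ext (by omega)
  calc _ ≤ ∑ k, (u k + u (τ k)) := by
        refine Finset.sum_le_sum fun k _ => ?_
        split_ifs with h
        · rcases le_total (k : ℕ) (τ k : ℕ) with h' | h'
          · rw [max_eq_right h']
            have : u (τ k) = x ^ ((j : ℕ) - (τ k : ℕ)) := if_pos h.2
            linarith [hu0 k]
          · rw [max_eq_left h']
            have : u k = x ^ ((j : ℕ) - (k : ℕ)) := if_pos h.1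
            linarith [hu0 (τ k)]
        · exact add_nonneg (hu0 _) (hu0 _)
    _ = 2 * ∑ k, u k := by
        rw [Finset.sum_add_distrib, Equiv.sum_comp τ u]
        ring
    _ ≤ _ := by linarith

lemma sum_above_le {n : ℕ} (τ : Equiv.Perm (Fin n)) (j : Fin n) {x : ℝ} (hx0 : 0 ≤ x)
    (hx1 : x < 1) :
    (∑ l : Fin n, if j < l ∧ j < τ l then x ^ (min (l : ℕ) (τ l : ℕ) - (j : ℕ)) else 0)
      ≤ 2 * (x * (1 - x)⁻¹) := by
  set u : Fin n → ℝ := fun l => if j < l then x ^ ((l : ℕ) - (j : ℕ)) else 0 with hu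
  have hu0 : ∀ l, 0 ≤ u l := fun l => by
    simp only [hu]
    split_ifs <;> positivity
  have hsum : ∑ l, u l ≤ x * (1 - x)⁻¹ := by
    rw [hu, ← Finset.sum_filter]
    -- Every exponent `l - j` is at least one, which yields the extra factor `x`.
    have h : ∑ l ∈ Finset.univ.filter (fun l : Fin n => j < l), x ^ ((l : ℕ) - (j : ℕ))
        = x * ∑ l ∈ Finset.univ.filter (fun l : Fin n => j < l), x ^ ((l : ℕ) - (j : ℕ) - 1) := by
      rw [Finset.mul_sum]
      refine Finset.sum_congr rfl fun l hl => ?_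
      simp only [Finset.mem_filter, Finset.mem_univ, true_and, Fin.lt_def] at hl
      rw [← pow_succ']
      congr 1
      omega
    rw [h]
    refine mul_le_mul_of_nonneg_left ?_ hx0
    refine sum_pow_le_geometric _ (fun l : Fin n => (l : ℕ) - (j : ℕ) - 1) ?_ hx0 hx1
    intro a ha b hb hab
    simp only [Finset.coe_filter, Finset.mem_univ, true_and, Set.mem_ofPred_eq, Fin.lt_def]
      at ha hb hab
    exact Fin.ext (by omega)
  calc _ ≤ ∑ l, (u l + u (τ l)) := by
        refine Finset.sum_le_sum fun l _ => ?_
        split_ifs with h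
        · rcases le_total (l : ℕ) (τ l : ℕ) with h' | h'
          · rw [min_eq_left h']
            have : u l = x ^ ((l : ℕ) - (j : ℕ)) := if_pos h.1
            linarith [hu0 (τ l)]
          · rw [min_eq_right h']
            have : u (τ l) = x ^ ((τ l : ℕ) - (j : ℕ)) := if_pos h.2
            linarith [hu0 l]
        · exact add_nonneg (hu0 _) (hu0 _)
    _ = 2 * ∑ l, u l := by
        rw [Finset.sum_add_distrib, Equiv.sum_comp τ u]
        ring
    _ ≤ _ := by linarith

lemma tailWeight_nonneg (n : ℕ) (β : ℝ) (j : Fin n) (r : ℕ) : 0 ≤ tailWeight n β j r := by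
  refine Finset.sum_nonneg fun σ _ => ?_
  split_ifs
  · exact (Real.exp_pos _).le
  · exact le_rfl

/-- The double count of the triples `(σ, k, l)` with `|D_j(σ)| ≥ r + 1`, `k ∈ D_j(σ)`, `j < l`
and `σ l ≤ j`, organised by `σ` and by `τ = σ ∘ (k l)`. -/
lemma tailWeight_step {n : ℕ} {β : ℝ} (hβ : 0 < β) (j : Fin n) (r : ℕ) :
    ((r : ℝ) + 1) * tailWeight n β j (r + 1) ≤
      4 / (1 - Real.exp (-(2 * β))) ^ 2 * Real.exp (-(2 * β)) * tailWeight n β j r := by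
  set x := Real.exp (-(2 * β)) with hx
  have hx0 : 0 ≤ x := (Real.exp_pos _).le
  have hx1 : x < 1 := Real.exp_lt_one_iff.2 (by linarith)
  have hw : ∀ σ, 0 ≤ mallowsWeight n β σ := fun σ => (Real.exp_pos _).le
  let T : Equiv.Perm (Fin n) → Fin n → Fin n → ℝ := fun σ k l =>
    if (r + 1 ≤ (Dset n σ j).card) ∧ (k ≤ j ∧ j < σ k) ∧ (j < l ∧ σ l ≤ j) then
      mallowsWeight n β σ else 0
  let f : Equiv.Perm (Fin n) → Fin n → ℝ := fun τ k =>
    if k ≤ j ∧ τ k ≤ j then x ^ ((j : ℕ) - max (k : ℕ) (τ k : ℕ)) else 0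
  let g : Equiv.Perm (Fin n) → Fin n → ℝ := fun τ l =>
    if j < l ∧ j < τ l then x ^ (min (l : ℕ) (τ l : ℕ) - (j : ℕ)) else 0
  let a : Equiv.Perm (Fin n) → ℝ := fun τ =>
    if r ≤ (Dset n τ j).card then mallowsWeight n β τ else 0
  have ha : ∀ τ, 0 ≤ a τ := fun τ => by
    simp only [a]
    split_ifs
    exacts [hw _, le_rfl]
  have hf : ∀ τ k, 0 ≤ f τ k := fun τ k => by
    simp only [f]
    split_ifs <;> positivity
  have hg : ∀ τ k, 0 ≤ g τ k := fun τ k => by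
    simp only [g]
    split_ifs <;> positivity
  have lower : ((r : ℝ) + 1) * tailWeight n β j (r + 1) ≤ ∑ σ, ∑ k, ∑ l, T σ k l := by
    rw [tailWeight, Finset.mul_sum]
    refine Finset.sum_le_sum fun σ _ => ?_
    by_cases h : r + 1 ≤ (Dset n σ j).card
    · have e : ∑ k, ∑ l, T σ k l =
          ((Dset n σ j).card : ℝ) * ((Dset n σ j).card * mallowsWeight n β σ) := by
        have e1 : ∀ k, ∑ l, T σ k l = if k ≤ j ∧ j < σ k then
            ((Dset n σ j).card : ℝ) * mallowsWeight n β σ else 0 := by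
          intro k
          by_cases hk : k ≤ j ∧ j < σ k
          · rw [if_pos hk, ← card_crossing_eq σ j, ← nsmul_eq_mul, ← Finset.sum_const,
              Finset.sum_filter]
            refine Finset.sum_congr rfl fun l _ => ?_
            simp only [T, h, hk, true_and]
          · simp only [T, hk, false_and, and_false, if_false, Finset.sum_const_zero]
        simp only [e1]
        rw [← Finset.sum_filter, Finset.sum_const, nsmul_eq_mul]
        rfl
      rw [if_pos h, e]
      have h1 : (r : ℝ) + 1 ≤ (Dset n σ j).card := by exact_mod_cast h
      have hr : (0 : ℝ) ≤ r := Nat.cast_nonneg r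
      refine mul_le_mul h1 ?_ (hw σ) (by linarith)
      exact le_mul_of_one_le_left (hw σ) (by linarith)
    · rw [if_neg h, mul_zero]
      refine Finset.sum_nonneg fun k _ => Finset.sum_nonneg fun l _ => ?_
      simp only [T]
      split_ifs
      exacts [hw _, le_rfl]
  have key : ∀ k l τ, T (τ * Equiv.swap k l) k l ≤ a τ * (f τ k * g τ l) := by
    intro k l τ
    have hnn : 0 ≤ a τ * (f τ k * g τ l) := mul_nonneg (ha _) (mul_nonneg (hf _ _) (hg _ _))
    simp only [T]
    split_ifs with h
    · obtain ⟨hc, ⟨hk, hτl⟩, hl, hτk⟩ := h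
      simp only [Equiv.Perm.mul_apply, Equiv.swap_apply_left, Equiv.swap_apply_right] at hτl hτk
      have hc' : r ≤ (Dset n τ j).card := by
        have := card_Dset_le_mul_swap τ (k := k) hl
        omega
      have e1 : a τ = mallowsWeight n β τ := if_pos hc'
      have e2 : f τ k = _ := if_pos ⟨hk, hτk⟩
      have e3 : g τ l = _ := if_pos ⟨hl, hτl⟩
      rw [e1, e2, e3, mallowsWeight_mul_swap β τ hk hτk hl hτl, mul_assoc]
    · exact hnn
  calc _ ≤ ∑ σ, ∑ k, ∑ l, T σ k l := lower
    _ = ∑ k, ∑ l, ∑ σ, T σ k l := by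
        rw [Finset.sum_comm]
        exact Finset.sum_congr rfl fun k _ => Finset.sum_comm
    _ = ∑ k, ∑ l, ∑ τ, T (τ * Equiv.swap k l) k l := by
        refine Finset.sum_congr rfl fun k _ => Finset.sum_congr rfl fun l _ => ?_
        exact (Equiv.sum_comp (Equiv.mulRight (Equiv.swap k l)) fun σ => T σ k l).symm
    _ ≤ ∑ k, ∑ l, ∑ τ, a τ * (f τ k * g τ l) :=
        Finset.sum_le_sum fun k _ => Finset.sum_le_sum fun l _ =>
          Finset.sum_le_sum fun τ _ => key k l τ
    _ = ∑ τ, a τ * ((∑ k, f τ k) * ∑ l, g τ l) := by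
        simp only [Finset.sum_mul_sum]
        simp only [Finset.mul_sum]
        rw [Finset.sum_comm (s := Finset.univ (α := Equiv.Perm (Fin n)))]
        exact Finset.sum_congr rfl fun k _ => Finset.sum_comm
    _ ≤ ∑ τ, a τ * ((2 * (1 - x)⁻¹) * (2 * (x * (1 - x)⁻¹))) := by
        refine Finset.sum_le_sum fun τ _ => mul_le_mul_of_nonneg_left ?_ (ha τ)
        have : 0 ≤ (1 - x)⁻¹ := inv_nonneg.2 (by linarith)
        exact mul_le_mul (sum_below_le τ j hx0 hx1) (sum_above_le τ j hx0 hx1)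
          (Finset.sum_nonneg fun l _ => hg τ l) (by positivity)
    _ = _ := by
        rw [← Finset.sum_mul, tailWeight]
        simp only [a]
        rw [div_eq_mul_inv, ← inv_pow]
        ring


/-- For every `c₀ > 0` there is `C₀ > 0` (depending only on `c₀`) such that for all
`n ≥ 1`, `β ≥ c₀`, positive integers `r`, and `j ∈ [n]`:
`P_{n,β}(|D_j(σ)| ≥ r) ≤ C₀ e^{-2βr}`. -/
theorem statement4 (c₀ : ℝ) (hc₀ : 0 < c₀) :
    ∃ C₀ : ℝ, 0 < C₀ ∧
      ∀ n : ℕ, 0 < n → ∀ β : ℝ, c₀ ≤ β → ∀ r : ℕ, 0 < r → ∀ j : Fin n,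
        mallowsP n β (fun σ => r ≤ (Dset n σ j).card)
          ≤ C₀ * Real.exp (-(2 * β * (r : ℝ))) := by
  have hx1 : Real.exp (-(2 * c₀)) < 1 := Real.exp_lt_one_iff.2 (by linarith)
  set K : ℝ := 4 / (1 - Real.exp (-(2 * c₀))) ^ 2 with hK
  have hK0 : 0 ≤ K := by positivity
  refine ⟨Real.exp K, Real.exp_pos _, fun n _ β hβ r _ j => ?_⟩
  set x := Real.exp (-(2 * β)) with hx
  have hx0 : 0 ≤ x := (Real.exp_pos _).le
  have hstep : ∀ s : ℕ, ((s : ℝ) + 1) * tailWeight n β j (s + 1) ≤ K * x * tailWeight n β j s := by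
    intro s
    refine (tailWeight_step (lt_of_lt_of_le hc₀ hβ) j s).trans ?_
    have hxc : x ≤ Real.exp (-(2 * c₀)) := Real.exp_le_exp.2 (by linarith)
    have hpos : 0 < 1 - Real.exp (-(2 * c₀)) := by linarith
    refine mul_le_mul_of_nonneg_right (mul_le_mul_of_nonneg_right ?_ hx0)
      (tailWeight_nonneg n β j s)
    rw [hK]
    gcongr
  have hiter : ∀ s : ℕ, tailWeight n β j s ≤ K ^ s / (s.factorial : ℝ) * x ^ s
      * tailWeight n β j 0 := by
    intro s
    induction s with
    | zero => simp
    | succ s ih =>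
      have hs : (0 : ℝ) < (s : ℝ) + 1 := by positivity
      have hfac : (0 : ℝ) < (s.factorial : ℝ) := by exact_mod_cast s.factorial_pos
      have h := (hstep s).trans (mul_le_mul_of_nonneg_left ih (mul_nonneg hK0 hx0))
      rw [← le_div_iff₀' hs] at h
      refine h.trans (le_of_eq ?_)
      rw [Nat.factorial_succ]
      push_cast
      field_simp
      ring
  have hZ : tailWeight n β j 0 = ∑ τ, mallowsWeight n β τ := by simp [tailWeight]
  have hZpos : 0 < ∑ τ, mallowsWeight n β τ :=
    Finset.sum_pos (fun τ _ => Real.exp_pos _) Finset.univ_nonempty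
  have hP : mallowsP n β (fun σ => r ≤ (Dset n σ j).card)
      = tailWeight n β j r / ∑ τ, mallowsWeight n β τ := by
    rw [mallowsP, tailWeight, Finset.sum_div]
    refine Finset.sum_congr rfl fun σ _ => ?_
    split_ifs
    · rfl
    · simp
  have hxr : Real.exp (-(2 * β * (r : ℝ))) = x ^ r := by
    rw [hx, ← Real.exp_nat_mul]
    congr 1
    ring
  rw [hP, hxr, div_le_iff₀ hZpos]
  refine (hiter r).trans ?_
  rw [hZ]
  have := Real.pow_div_factorial_le_exp K hK0 r
  gcongr
end

section
/- For every fixed constant C_0 > 0 there exist positive constants C_1, C_2, C_3, c_1 depending only on C_0 such that for every positive integer n, every β with 0 < β ≤ C_0, every j ∈ [n], every Δ ≥ C_1 β^{-1}, and every r ≥ exp(-C_1^{-1} β Δ), one has max{ P_{n,β}({σ : |R_{j,Δ}(σ)| ≥ C_2 r β^{-1}}), P_{n,β}({σ : |R'_{j,Δ}(σ)| ≥ C_2 r β^{-1}}) } ≤ C_3 max{β r^{-1}, Δ} exp(-c_1 min{r, 1} β^{-1}). -/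
/-!
The proof compares weights of permutations along single swaps `σ ↦ σ * swap k x`. Write
`down σ a b` for the set of `x > b` with `σ(x) ≤ a`; thus `|down σ t t|` is the number of points
crossing the cut `t` downwards, which equals the number crossing it upwards.

*Cuts are crossed `O(1/β)` times.* Exchanging the values of an upward and a downward crossing of
`t` removes both crossings and increases the weight. There are `h²` ways to do this when
`|down σ t t| = h`, while the images, weighted by the gain in weight, have multiplicity
`O(β⁻²)`. Hence `P(|down σ t t| ≥ h + 1) ≤ (C / (βh))² P(|down σ t t| ≥ h)` (`cross_tail_step`), and
the number of crossings exceeds `K`, of order `1/β`, with probability at most `exp(-c/β)`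
(`cross_tail`).

*Long crossings die out geometrically.* Let `a ≤ b` and `b' = b + 4K`, and suppose the cuts `a`
and `b'` are crossed at most `K` times. At least `2K` positions `k` in the window `(b, b']` have
values in `(a, b']`. Swapping such a `k` with some `x ∈ down σ a b'` does not decrease the weight,
preserves `|down σ a b|` and both cut counts, and lowers `|down σ a b'|` by one. Counting
preimages shows that, given `|down σ a b| = p`, the tail of `|down σ a b'|` beyond `p / 2` decays
like `2⁻ˢ` (`window_step`, `window_tail`), so `|down σ a b'| < (3/4) |down σ a b|` outside an event
of exponentially small probability (`window_shrink`).

Splitting `[j - Δ, j]` into about `βΔ` such windows (`multi_window`), the number of points of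
`R_{j,Δ}` is at most `(3/4)^(cβΔ) K`, or else is smaller than `C₂ r / β` anyway, up to an event
whose probability is bounded by a union bound over the windows (`Rset_bound`). The set `R'_{j,Δ}` is
handled by the symmetry `σ ↦ σ⁻¹`.
-/

open scoped BigOperators Classical

/-- `R_{j,Δ}(σ) = S(σ) ∩ {(x,y) ∈ [n]² : x ≥ j + Δ, y ≤ j - Δ}`, identified with the
set of first coordinates of its points (in `Fin n` coordinates; the inequalities are
invariant under the common shift of indices by one). -/
noncomputable def Rset (n : ℕ) (σ : Equiv.Perm (Fin n)) (j : Fin n) (Δ : ℝ) :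
    Finset (Fin n) :=
  Finset.univ.filter fun i =>
    ((j : ℕ) : ℝ) + Δ ≤ ((i : ℕ) : ℝ) ∧ ((σ i : ℕ) : ℝ) ≤ ((j : ℕ) : ℝ) - Δ

/-- `R'_{j,Δ}(σ) = S(σ) ∩ {(x,y) ∈ [n]² : x ≤ j - Δ, y ≥ j + Δ}`. -/
noncomputable def Rset' (n : ℕ) (σ : Equiv.Perm (Fin n)) (j : Fin n) (Δ : ℝ) :
    Finset (Fin n) :=
  Finset.univ.filter fun i =>
    ((i : ℕ) : ℝ) ≤ ((j : ℕ) : ℝ) - Δ ∧ ((j : ℕ) : ℝ) + Δ ≤ ((σ i : ℕ) : ℝ)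

open Equiv Finset

namespace MallowsAux

variable {n : ℕ}

/-! ### Swaps and weights -/

/-- Double counting by swaps: for fixed `k, x`, right multiplication by the transposition
`(k x)` permutes the group, so a pointwise comparison of `f` before the swap with `g` after it
gives a comparison of the total sums. -/
lemma swap_sum_le (f g : Perm (Fin n) → Fin n → Fin n → ℝ)
    (h : ∀ σ k x, f σ k x ≤ g (σ * swap k x) k x) :
    ∑ σ, ∑ k, ∑ x, f σ k x ≤ ∑ σ, ∑ k, ∑ x, g σ k x := by
  calc ∑ σ, ∑ k, ∑ x, f σ k x ≤ ∑ σ : Perm (Fin n), ∑ k, ∑ x, g (σ * swap k x) k x :=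
        sum_le_sum fun σ _ => sum_le_sum fun k _ => sum_le_sum fun x _ => h σ k x
    _ = ∑ k, ∑ x, ∑ σ : Perm (Fin n), g (σ * swap k x) k x := by
        rw [sum_comm]
        exact sum_congr rfl fun k _ => sum_comm
    _ = ∑ k, ∑ x, ∑ σ, g σ k x := by
        refine sum_congr rfl fun k _ => sum_congr rfl fun x _ => ?_
        exact Equiv.sum_comp (Equiv.mulRight (swap k x)) fun σ => g σ k x
    _ = ∑ σ, ∑ k, ∑ x, g σ k x := by
        rw [sum_comm (s := (univ : Finset (Perm (Fin n))))]
        exact sum_congr rfl fun k _ => sum_comm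

/-- The `L¹` distance `∑ᵢ |σ(i) - i|` from `σ` to the identity. -/
noncomputable def cost (σ : Perm (Fin n)) : ℝ :=
  ∑ i : Fin n, |((σ i : ℕ) : ℝ) - ((i : ℕ) : ℝ)|

lemma cost_swap (σ : Perm (Fin n)) {k x : Fin n} (hkx : k ≠ x) :
    cost (σ * swap k x) = cost σ
      - |((σ k : ℕ) : ℝ) - ((k : ℕ) : ℝ)| - |((σ x : ℕ) : ℝ) - ((x : ℕ) : ℝ)|
      + |((σ x : ℕ) : ℝ) - ((k : ℕ) : ℝ)| + |((σ k : ℕ) : ℝ) - ((x : ℕ) : ℝ)| := by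
  have hx : x ∈ univ.erase k := by simp [hkx.symm]
  unfold cost
  rw [← add_sum_erase univ _ (mem_univ k), ← add_sum_erase _ _ hx,
    ← add_sum_erase univ (fun i : Fin n => |((σ i : ℕ) : ℝ) - ((i : ℕ) : ℝ)|) (mem_univ k),
    ← add_sum_erase _ (fun i : Fin n => |((σ i : ℕ) : ℝ) - ((i : ℕ) : ℝ)|) hx]
  have : ∑ i ∈ (univ.erase k).erase x, |(((σ * swap k x) i : ℕ) : ℝ) - ((i : ℕ) : ℝ)|
      = ∑ i ∈ (univ.erase k).erase x, |((σ i : ℕ) : ℝ) - ((i : ℕ) : ℝ)| := by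
    refine sum_congr rfl fun i hi => ?_
    simp only [mem_erase, mem_univ, and_true] at hi
    rw [Perm.mul_apply, swap_apply_of_ne_of_ne hi.2 hi.1]
  rw [this]
  simp only [Perm.mul_apply, swap_apply_left, swap_apply_right]
  ring

/-- The set of positions `x > b` with `σ(x) ≤ a`. -/
def down (σ : Perm (Fin n)) (a b : ℕ) : Finset (Fin n) :=
  univ.filter fun x => b < (x : ℕ) ∧ (σ x : ℕ) ≤ a

/-- The positions `u ≤ t` with `σ(u) > t`. -/
def up (σ : Perm (Fin n)) (t : ℕ) : Finset (Fin n) :=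
  univ.filter fun u => (u : ℕ) ≤ t ∧ t < (σ u : ℕ)

lemma mem_down {σ : Perm (Fin n)} {a b : ℕ} {x : Fin n} :
    x ∈ down σ a b ↔ b < (x : ℕ) ∧ (σ x : ℕ) ≤ a := by simp [down]

lemma mem_up {σ : Perm (Fin n)} {t : ℕ} {u : Fin n} :
    u ∈ up σ t ↔ (u : ℕ) ≤ t ∧ t < (σ u : ℕ) := by simp [up]

/-- As many points cross a cut upwards as downwards. -/
lemma card_up (σ : Perm (Fin n)) (t : ℕ) : (up σ t).card = (down σ t t).card := by
  have h1 : (univ.filter fun i : Fin n => (σ i : ℕ) ≤ t).card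
      = (univ.filter fun i : Fin n => (i : ℕ) ≤ t).card := by
    refine card_bij (fun i _ => σ i) ?_ ?_ ?_
    · intro i hi; simpa using hi
    · intro i _ j _ h; exact σ.injective h
    · intro i hi; exact ⟨σ.symm i, by simpa using hi, by simp⟩
  have h2 : (univ.filter fun i : Fin n => (σ i : ℕ) ≤ t).card = (down σ t t).card
      + (univ.filter fun i : Fin n => (i : ℕ) ≤ t ∧ (σ i : ℕ) ≤ t).card := by
    rw [← card_union_of_disjoint]
    · congr 1; ext i; simp [down]; omega
    · rw [disjoint_left]; intro i; simp [down]; omega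
  have h3 : (univ.filter fun i : Fin n => (i : ℕ) ≤ t).card = (up σ t).card
      + (univ.filter fun i : Fin n => (i : ℕ) ≤ t ∧ (σ i : ℕ) ≤ t).card := by
    rw [← card_union_of_disjoint]
    · congr 1; ext i; simp [up]; omega
    · rw [disjoint_left]; intro i; simp [up]; omega
  omega

/-- The total Mallows weight of the event `p`. -/
noncomputable def wt (n : ℕ) (β : ℝ) (p : Perm (Fin n) → Prop) : ℝ :=
  ∑ σ : Perm (Fin n), if p σ then mallowsWeight n β σ else 0

lemma weight_pos (β : ℝ) (σ : Perm (Fin n)) : 0 < mallowsWeight n β σ := Real.exp_pos _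

lemma weight_eq (β : ℝ) (σ : Perm (Fin n)) : mallowsWeight n β σ = Real.exp (-β * cost σ) := rfl

lemma wt_nonneg (β : ℝ) (p : Perm (Fin n) → Prop) : 0 ≤ wt n β p :=
  sum_nonneg fun σ _ => by split_ifs <;> [exact (weight_pos β σ).le; exact le_rfl]

lemma wt_mono (β : ℝ) {p q : Perm (Fin n) → Prop} (h : ∀ σ, p σ → q σ) :
    wt n β p ≤ wt n β q := by
  refine sum_le_sum fun σ _ => ?_
  have := (weight_pos β σ).le
  have := h σ
  split_ifs <;> tauto

/-! ### Crossings of a single cut -/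

lemma geom_bound {β C₀ : ℝ} (hβ : 0 < β) (hC : β ≤ C₀) (t : ℕ) :
    ∑ d ∈ range t, Real.exp (-2 * β * d) ≤ (1 + 2 * C₀) / (2 * β) := by
  have hq : Real.exp (-2 * β) < 1 := by rw [Real.exp_lt_one_iff]; linarith
  have h0 := Real.exp_pos (-2 * β)
  have h1 : ∑ d ∈ range t, Real.exp (-2 * β * d) = ∑ d ∈ range t, Real.exp (-2 * β) ^ d := by
    refine sum_congr rfl fun d _ => ?_
    rw [← Real.exp_nat_mul]; ring_nf
  have h3 : Real.exp (-2 * β) * (1 + 2 * β) ≤ 1 := by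
    have h4 : 1 + 2 * β ≤ Real.exp (2 * β) := by linarith [Real.add_one_le_exp (2 * β)]
    calc Real.exp (-2 * β) * (1 + 2 * β) ≤ Real.exp (-2 * β) * Real.exp (2 * β) := by gcongr
      _ = 1 := by rw [← Real.exp_add]; simp
  have h5 : ∑ d ∈ range t, Real.exp (-2 * β) ^ d ≤ (1 - Real.exp (-2 * β))⁻¹ := by
    rw [← tsum_geometric_of_lt_one h0.le hq]
    exact (summable_geometric_of_lt_one h0.le hq).sum_le_tsum _ fun _ _ => by positivity
  rw [h1]
  refine h5.trans ?_
  rw [inv_eq_one_div, div_le_div_iff₀ (by linarith) (by linarith)]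
  nlinarith

lemma exp_sum_low {β C₀ : ℝ} (hβ : 0 < β) (hC : β ≤ C₀) (t : ℕ) :
    ∑ u : Fin n, (if (u : ℕ) ≤ t then Real.exp (-2 * β * ((t : ℝ) - (u : ℕ))) else 0)
      ≤ (1 + 2 * C₀) / (2 * β) := by
  refine le_trans ?_ (geom_bound hβ hC (t + 1))
  rw [← sum_filter]
  refine le_of_eq_of_le ?_ (sum_le_sum_of_subset_of_nonneg
    (s := (univ.filter fun u : Fin n => (u : ℕ) ≤ t).image fun u : Fin n => t - (u : ℕ)) ?_ ?_)
  · rw [sum_image]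
    · refine sum_congr rfl fun u hu => ?_
      rw [Nat.cast_sub (by simpa using hu)]
    · intro u hu v hv h
      simp at hu hv h
      ext; omega
  · intro d; simp only [mem_image, mem_range]; rintro ⟨u, _, rfl⟩; omega
  · intros; positivity

lemma exp_sum_high {β C₀ : ℝ} (hβ : 0 < β) (hC : β ≤ C₀) (t : ℕ) :
    ∑ x : Fin n, (if t < (x : ℕ) then Real.exp (-2 * β * (((x : ℕ) : ℝ) - t - 1)) else 0)
      ≤ (1 + 2 * C₀) / (2 * β) := by
  refine le_trans ?_ (geom_bound hβ hC n)
  rw [← sum_filter]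
  refine le_of_eq_of_le ?_ (sum_le_sum_of_subset_of_nonneg
    (s := (univ.filter fun u : Fin n => t < (u : ℕ)).image fun u : Fin n => (u : ℕ) - (t + 1)) ?_ ?_)
  · rw [sum_image]
    · refine sum_congr rfl fun u hu => ?_
      have : t + 1 ≤ (u : ℕ) := by simpa using hu
      rw [Nat.cast_sub this]; push_cast; ring_nf
    · intro u hu v hv h
      simp at hu hv h
      ext; omega
  · intro d; simp only [mem_image, mem_range]; rintro ⟨u, _, rfl⟩; omega
  · intros; positivity

/-- `exp(-2β (t - max(u, σ(u))))` for a point `(u, σ(u))` below the cut `t` in both coordinates,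
and `0` otherwise. -/
noncomputable def lowFac (β : ℝ) (t : ℕ) (σ : Perm (Fin n)) (u : Fin n) : ℝ :=
  if (u : ℕ) ≤ t ∧ (σ u : ℕ) ≤ t then
    Real.exp (-2 * β * ((t : ℝ) - max ((u : ℕ) : ℝ) ((σ u : ℕ) : ℝ))) else 0

/-- `exp(-2β (min(x, σ(x)) - t - 1))` for a point `(x, σ(x))` above the cut `t` in both
coordinates, and `0` otherwise. -/
noncomputable def highFac (β : ℝ) (t : ℕ) (σ : Perm (Fin n)) (x : Fin n) : ℝ :=
  if t < (x : ℕ) ∧ t < (σ x : ℕ) then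
    Real.exp (-2 * β * (min ((x : ℕ) : ℝ) ((σ x : ℕ) : ℝ) - t - 1)) else 0

lemma lowFac_nonneg (β : ℝ) (t : ℕ) (σ : Perm (Fin n)) (u : Fin n) : 0 ≤ lowFac β t σ u := by
  unfold lowFac; split_ifs <;> positivity

lemma highFac_nonneg (β : ℝ) (t : ℕ) (σ : Perm (Fin n)) (u : Fin n) : 0 ≤ highFac β t σ u := by
  unfold highFac; split_ifs <;> positivity

lemma sum_lowFac {β C₀ : ℝ} (hβ : 0 < β) (hC : β ≤ C₀) (t : ℕ) (σ : Perm (Fin n)) :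
    ∑ u, lowFac β t σ u ≤ (1 + 2 * C₀) / β := by
  have h1 := exp_sum_low (n := n) hβ hC t
  have h2 := h1
  rw [← Equiv.sum_comp σ] at h2
  have h3 : (1 + 2 * C₀) / β = (1 + 2 * C₀) / (2 * β) + (1 + 2 * C₀) / (2 * β) := by
    field_simp; ring
  rw [h3]
  refine le_trans ?_ (add_le_add h1 h2)
  rw [← sum_add_distrib]
  refine sum_le_sum fun u _ => ?_
  unfold lowFac
  split_ifs with h ha hb <;> try (first | positivity | (exfalso; omega))
  rcases max_choice ((u : ℕ) : ℝ) ((σ u : ℕ) : ℝ) with e | e <;> rw [e]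
  · exact le_add_of_nonneg_right (Real.exp_pos _).le
  · exact le_add_of_nonneg_left (Real.exp_pos _).le

lemma sum_highFac {β C₀ : ℝ} (hβ : 0 < β) (hC : β ≤ C₀) (t : ℕ) (σ : Perm (Fin n)) :
    ∑ u, highFac β t σ u ≤ (1 + 2 * C₀) / β := by
  have h1 := exp_sum_high (n := n) hβ hC t
  have h2 := h1
  rw [← Equiv.sum_comp σ] at h2
  have h3 : (1 + 2 * C₀) / β = (1 + 2 * C₀) / (2 * β) + (1 + 2 * C₀) / (2 * β) := by
    field_simp; ring
  rw [h3]
  refine le_trans ?_ (add_le_add h1 h2)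
  rw [← sum_add_distrib]
  refine sum_le_sum fun u _ => ?_
  unfold highFac
  split_ifs with h ha hb <;> try (first | positivity | (exfalso; omega))
  rcases min_choice ((u : ℕ) : ℝ) ((σ u : ℕ) : ℝ) with e | e <;> rw [e]
  · exact le_add_of_nonneg_right (Real.exp_pos _).le
  · exact le_add_of_nonneg_left (Real.exp_pos _).le

/-- One step of the tail bound for the number of crossings of the cut `t`. An upward crossing at
`u` and a downward crossing at `x` are removed together by exchanging their values; this lowers the
distance by `2 (min(x, σ(u)) - max(u, σ(x)))`, and there are at least `(h + 1)²` pairs to choose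
from. The multiplicity of the images, weighted by the gain in weight, is at most
`(∑ lowFac)(∑ highFac)`, which is of order `β⁻²`. -/
lemma cross_tail_step {β C₀ : ℝ} (hβ : 0 < β) (hC : β ≤ C₀) (t h : ℕ) :
    ((h : ℝ) + 1) ^ 2 * wt n β (fun σ => h + 1 ≤ (down σ t t).card)
      ≤ ((1 + 2 * C₀) / β) ^ 2 * wt n β (fun σ => h ≤ (down σ t t).card) := by
  have key := swap_sum_le (n := n)
    (fun σ u x => if h + 1 ≤ (down σ t t).card ∧ u ∈ up σ t ∧ x ∈ down σ t t
      then mallowsWeight n β σ else 0)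
    (fun σ u x => (if h ≤ (down σ t t).card then mallowsWeight n β σ else 0) *
      (lowFac β t σ u * highFac β t σ x)) ?_
  · refine le_trans ?_ (key.trans ?_)
    · rw [wt, mul_sum]
      refine sum_le_sum fun σ _ => ?_
      by_cases hσ : h + 1 ≤ (down σ t t).card
      · have e : ∑ u, ∑ x, (if h + 1 ≤ (down σ t t).card ∧ u ∈ up σ t ∧ x ∈ down σ t t
            then mallowsWeight n β σ else 0)
            = ((up σ t).card : ℝ) * (((down σ t t).card : ℝ) * mallowsWeight n β σ) := by
          simp only [hσ, true_and, ite_and]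
          simp [sum_const]
        rw [e, card_up, if_pos hσ]
        have h1 : (h : ℝ) + 1 ≤ ((down σ t t).card : ℝ) := by exact_mod_cast hσ
        have := weight_pos β σ
        rw [← mul_assoc]
        gcongr
        nlinarith
      · simp [hσ]
    · rw [wt, mul_sum]
      refine sum_le_sum fun σ _ => ?_
      simp only [← mul_sum, ← sum_mul]
      have h0 : 0 ≤ (if h ≤ (down σ t t).card then mallowsWeight n β σ else 0) := by
        split_ifs <;> [exact (weight_pos β σ).le; exact le_rfl]
      rw [mul_comm (_ ^ 2), sq]
      have h1 := sum_lowFac (n := n) hβ hC t σ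
      have h2 := sum_highFac (n := n) hβ hC t σ
      have h3 : 0 ≤ ∑ x, highFac β t σ x := sum_nonneg fun x _ => highFac_nonneg β t σ x
      have h4 : 0 ≤ (1 + 2 * C₀) / β := by have := hβ.trans_le hC; positivity
      convert mul_le_mul_of_nonneg_left (mul_le_mul h1 h2 h3 h4) h0
  · intro σ u x
    split_ifs with hf hg
    · obtain ⟨h1, h2, h3⟩ := hf
      rw [mem_up] at h2; rw [mem_down] at h3
      have hux : u ≠ x := by rintro rfl; omega
      rw [lowFac, highFac]
      simp only [Perm.mul_apply, swap_apply_left, swap_apply_right]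
      rw [if_pos ⟨h2.1, h3.2⟩, if_pos ⟨h3.1, h2.2⟩, weight_eq, weight_eq, ← Real.exp_add,
        ← Real.exp_add, cost_swap σ hux]
      apply Real.exp_le_exp.mpr
      have a1 : ((u : ℕ) : ℝ) ≤ t := by exact_mod_cast h2.1
      have a2 : (t : ℝ) + 1 ≤ ((σ u : ℕ) : ℝ) := by exact_mod_cast h2.2
      have a3 : (t : ℝ) + 1 ≤ ((x : ℕ) : ℝ) := by exact_mod_cast h3.1
      have a4 : ((σ x : ℕ) : ℝ) ≤ t := by exact_mod_cast h3.2
      rw [abs_of_nonneg (by linarith : 0 ≤ ((σ u : ℕ) : ℝ) - ((u : ℕ) : ℝ)),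
        abs_of_nonpos (by linarith : ((σ x : ℕ) : ℝ) - ((x : ℕ) : ℝ) ≤ 0)]
      have b1 : |((σ x : ℕ) : ℝ) - ((u : ℕ) : ℝ)|
          = 2 * max ((u : ℕ) : ℝ) ((σ x : ℕ) : ℝ) - ((u : ℕ) : ℝ) - ((σ x : ℕ) : ℝ) := by
        rcases le_total ((u : ℕ) : ℝ) ((σ x : ℕ) : ℝ) with h | h
        · rw [max_eq_right h, abs_of_nonneg (by linarith)]; ring
        · rw [max_eq_left h, abs_of_nonpos (by linarith)]; ring
      have b2 : |((σ u : ℕ) : ℝ) - ((x : ℕ) : ℝ)|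
          = ((x : ℕ) : ℝ) + ((σ u : ℕ) : ℝ) - 2 * min ((x : ℕ) : ℝ) ((σ u : ℕ) : ℝ) := by
        rcases le_total ((x : ℕ) : ℝ) ((σ u : ℕ) : ℝ) with h | h
        · rw [min_eq_left h, abs_of_nonneg (by linarith)]; ring
        · rw [min_eq_right h, abs_of_nonpos (by linarith)]; ring
      rw [b1, b2]
      nlinarith
    · exfalso
      obtain ⟨h1, h2, h3⟩ := hf
      apply hg
      have : down (σ * swap u x) t t = (down σ t t).erase x := by
        have h2 := mem_up.mp h2
        have h3 := mem_down.mp h3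
        ext i
        rw [mem_erase, mem_down, mem_down, Perm.mul_apply]
        by_cases hx : i = x
        · subst hx; simp; omega
        · by_cases hu : i = u
          · subst hu; simp [hx]; omega
          · rw [swap_apply_of_ne_of_ne hu hx]; simp [hx]
      have hc := card_erase_of_mem h3
      rw [this, hc]; omega
    · exact mul_nonneg (weight_pos β _).le (mul_nonneg (lowFac_nonneg _ _ _ _) (highFac_nonneg _ _ _ _))
    · simp

/-- Iterating `cross_tail_step`: above `2(1 + 2C₀)/β` the tail of the number of crossings of a
cut decays at least like `4⁻ˢ`. -/
lemma cross_tail {β C₀ : ℝ} (hβ : 0 < β) (hC : β ≤ C₀) (t h₀ s : ℕ)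
    (hh : 2 * (1 + 2 * C₀) / β ≤ h₀) :
    wt n β (fun σ => h₀ + s ≤ (down σ t t).card) ≤ (1 / 4) ^ s * wt n β (fun _ => True) := by
  induction s with
  | zero => simpa using wt_mono β fun _ _ => trivial
  | succ s ih =>
    have h1 := cross_tail_step (n := n) hβ hC t (h₀ + s)
    have h2 := wt_nonneg β (fun σ : Perm (Fin n) => h₀ + s + 1 ≤ (down σ t t).card)
    have h3 := wt_nonneg β (fun σ : Perm (Fin n) => h₀ + s ≤ (down σ t t).card)
    have hA : 0 < (1 + 2 * C₀) / β := by have := hβ.trans_le hC; positivity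
    have h4 : 2 * ((1 + 2 * C₀) / β) ≤ ((h₀ + s : ℕ) : ℝ) + 1 := by
      push_cast; rw [← mul_div_assoc]; have : (0 : ℝ) ≤ s := by positivity
      linarith
    have h5 : (2 * ((1 + 2 * C₀) / β)) ^ 2 ≤ (((h₀ + s : ℕ) : ℝ) + 1) ^ 2 := by gcongr
    have h6 := (mul_le_mul_of_nonneg_right h5 h2).trans h1
    have h7 : 4 * wt n β (fun σ : Perm (Fin n) => h₀ + s + 1 ≤ (down σ t t).card)
        ≤ wt n β (fun σ : Perm (Fin n) => h₀ + s ≤ (down σ t t).card) := by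
      refine le_of_mul_le_mul_left ?_ (pow_pos hA 2)
      linarith
    rw [← add_assoc, pow_succ]
    linarith

/-! ### Attrition of the crossing points in a window -/

lemma card_down_split (σ : Perm (Fin n)) {a b b' : ℕ} (hb : b ≤ b') :
    (down σ a b).card = (down σ a b').card
      + (univ.filter fun k : Fin n => (b < (k : ℕ) ∧ (k : ℕ) ≤ b') ∧ (σ k : ℕ) ≤ a).card := by
  rw [← card_union_of_disjoint]
  · congr 1; ext i; simp only [mem_down, mem_union, mem_filter, mem_univ, true_and]; omega
  · rw [disjoint_left]; intro i; simp only [mem_down, mem_filter, mem_univ, true_and]; omega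

lemma card_window {b b' : ℕ} (hb' : b' < n) :
    (univ.filter fun k : Fin n => b < (k : ℕ) ∧ (k : ℕ) ≤ b').card = b' - b := by
  rw [← Nat.card_Ioc b b']
  refine card_bij (fun i _ => (i : ℕ)) ?_ ?_ ?_
  · intro i hi; simpa using hi
  · intro i _ j _ h; exact Fin.ext h
  · intro i hi
    rw [mem_Ioc] at hi
    exact ⟨⟨i, by omega⟩, by simpa using hi, rfl⟩

/-- The positions `k` in the window `(b, b']` whose value lies in `(a, b']`. -/
def mid (σ : Perm (Fin n)) (a b b' : ℕ) : Finset (Fin n) :=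
  univ.filter fun k => (b < (k : ℕ) ∧ (k : ℕ) ≤ b') ∧ a < (σ k : ℕ) ∧ (σ k : ℕ) ≤ b'

lemma mem_mid {σ : Perm (Fin n)} {a b b' : ℕ} {k : Fin n} : k ∈ mid σ a b b' ↔
    (b < (k : ℕ) ∧ (k : ℕ) ≤ b') ∧ a < (σ k : ℕ) ∧ (σ k : ℕ) ≤ b' := by simp [mid]

lemma card_mid (σ : Perm (Fin n)) {a b b' : ℕ} (hab : a ≤ b) (hb' : b' < n) :
    b' - b ≤ (mid σ a b b').card + (down σ a a).card + (down σ b' b').card := by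
  rw [← card_window hb', ← card_up σ b']
  refine le_trans (card_le_card (t := (mid σ a b b' ∪ down σ a a) ∪ up σ b') ?_) ?_
  · intro k
    simp only [mem_union, mem_mid, mem_down, mem_up, mem_filter, mem_univ, true_and]
    omega
  · exact (card_union_le _ _).trans (Nat.add_le_add_right (card_union_le _ _) _)

lemma down_swap_erase {σ : Perm (Fin n)} {a b : ℕ} {k x : Fin n} (hk : (k : ℕ) ≤ b)
    (hkv : a < (σ k : ℕ)) (hx : x ∈ down σ a b) :
    (down (σ * swap k x) a b).card + 1 = (down σ a b).card := by
  have e : down (σ * swap k x) a b = (down σ a b).erase x := by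
    have h3 := mem_down.mp hx
    ext i
    rw [mem_erase, mem_down, mem_down, Perm.mul_apply]
    by_cases hx : i = x
    · subst hx; simp; omega
    · by_cases hu : i = k
      · subst hu; simp [hx]; omega
      · rw [swap_apply_of_ne_of_ne hu hx]; simp [hx]
  rw [e]; exact card_erase_add_one hx

lemma down_swap_same {σ : Perm (Fin n)} {a b : ℕ} {k x : Fin n}
    (h : (b < (k : ℕ) ↔ b < (x : ℕ)) ∨ ((σ k : ℕ) ≤ a ↔ (σ x : ℕ) ≤ a)) :
    (down (σ * swap k x) a b).card = (down σ a b).card := by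
  rcases h with h | h
  · refine card_bij (fun i _ => swap k x i) ?_ ?_ ?_
    · intro i hi
      rw [mem_down, Perm.mul_apply] at hi
      rw [mem_down]
      refine ⟨?_, hi.2⟩
      have h1 := hi.1
      by_cases hx : i = x
      · subst hx; rw [swap_apply_right]; exact h.mpr h1
      · by_cases hk : i = k
        · subst hk; rw [swap_apply_left]; exact h.mp h1
        · rwa [swap_apply_of_ne_of_ne hk hx]
    · intro i _ j _ e; exact (swap k x).injective e
    · intro i hi
      rw [mem_down] at hi
      refine ⟨swap k x i, ?_, by simp⟩
      rw [mem_down, Perm.mul_apply, swap_apply_self]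
      refine ⟨?_, hi.2⟩
      have h1 := hi.1
      by_cases hx : i = x
      · subst hx; rw [swap_apply_right]; exact h.mpr h1
      · by_cases hk : i = k
        · subst hk; rw [swap_apply_left]; exact h.mp h1
        · rwa [swap_apply_of_ne_of_ne hk hx]
  · congr 1
    ext i
    rw [mem_down, mem_down, Perm.mul_apply]
    by_cases hx : i = x
    · subst hx; rw [swap_apply_right, h]
    · by_cases hk : i = k
      · subst hk; rw [swap_apply_left, h]
      · rw [swap_apply_of_ne_of_ne hk hx]

/-- Removing the inversion `(k, x)` does not increase the `L¹` distance to the identity. -/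
lemma weight_swap {β : ℝ} (hβ : 0 < β) {σ : Perm (Fin n)} {k x : Fin n} (h1 : (k : ℕ) < x)
    (h2 : (σ x : ℕ) < σ k) : mallowsWeight n β σ ≤ mallowsWeight n β (σ * swap k x) := by
  have hkx : k ≠ x := by rintro rfl; omega
  rw [weight_eq, weight_eq, cost_swap σ hkx]
  apply Real.exp_le_exp.mpr
  have a1 : ((k : ℕ) : ℝ) < ((x : ℕ) : ℝ) := by exact_mod_cast h1
  have a2 : ((σ x : ℕ) : ℝ) < ((σ k : ℕ) : ℝ) := by exact_mod_cast h2
  have : |((σ x : ℕ) : ℝ) - ((k : ℕ) : ℝ)| + |((σ k : ℕ) : ℝ) - ((x : ℕ) : ℝ)|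
      ≤ |((σ k : ℕ) : ℝ) - ((k : ℕ) : ℝ)| + |((σ x : ℕ) : ℝ) - ((x : ℕ) : ℝ)| := by
    generalize ((σ x : ℕ) : ℝ) = p at *
    generalize ((σ k : ℕ) : ℝ) = q at *
    generalize ((x : ℕ) : ℝ) = r at *
    generalize ((k : ℕ) : ℝ) = s at *
    rcases abs_cases (p - s) with h | h <;> rcases abs_cases (q - r) with h' | h' <;>
    rcases abs_cases (q - s) with h'' | h'' <;> rcases abs_cases (p - r) with h''' | h''' <;>
    linarith
  nlinarith

/-- The cuts at `a` and `b'` are crossed downwards at most `K` times each, and exactly `p`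
points of the graph of `σ` have `x > b` and `y ≤ a`. -/
def Good (σ : Perm (Fin n)) (K p a b b' : ℕ) : Prop :=
  (down σ a a).card ≤ K ∧ (down σ b' b').card ≤ K ∧ (down σ a b).card = p

/-- One step of the tail bound in the window `(b, b']`, `b' = b + 4K`. Swapping the value at a
position `k ∈ mid σ a b b'` with that at `x ∈ down σ a b'` preserves `Good`, does not decrease the
weight and lowers `|down σ a b'|` by one. There are at least `2K(q + 1)` such pairs `(k, x)`,
while a permutation arises from at most `(p - q)K ≤ (q + 1)K` of them: `k` is one of the positions
in the window with value `≤ a`, and `x` crosses the cut `b'` downwards. -/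
lemma window_step {β : ℝ} (hβ : 0 < β) {K p q a b : ℕ} (hab : a ≤ b) (hK : 0 < K)
    (hb : b + 4 * K < n) (hpq : p ≤ 2 * q + 1) :
    2 * wt n β (fun σ => Good σ K p a b (b + 4 * K) ∧ q + 1 ≤ (down σ a (b + 4 * K)).card)
      ≤ wt n β (fun σ => Good σ K p a b (b + 4 * K) ∧ q ≤ (down σ a (b + 4 * K)).card) := by
  set b' := b + 4 * K with hb'
  have key := swap_sum_le (n := n)
    (fun σ k x => if (Good σ K p a b b' ∧ q + 1 ≤ (down σ a b').card) ∧
      k ∈ mid σ a b b' ∧ x ∈ down σ a b' then mallowsWeight n β σ else 0)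
    (fun σ k x => if (Good σ K p a b b' ∧ q ≤ (down σ a b').card) ∧
      k ∈ (univ.filter fun k : Fin n => (b < (k : ℕ) ∧ (k : ℕ) ≤ b') ∧ (σ k : ℕ) ≤ a) ∧
      x ∈ down σ b' b' then mallowsWeight n β σ else 0) ?_
  · have hK' : (0 : ℝ) < (q + 1) * K := by positivity
    refine le_of_mul_le_mul_left ?_ hK'
    refine le_trans ?_ (key.trans ?_)
    · rw [wt, mul_sum, mul_sum]
      refine sum_le_sum fun σ _ => ?_
      by_cases hσ : Good σ K p a b b' ∧ q + 1 ≤ (down σ a b').card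
      · have e : ∑ k, ∑ x, (if (Good σ K p a b b' ∧ q + 1 ≤ (down σ a b').card) ∧
            k ∈ mid σ a b b' ∧ x ∈ down σ a b' then mallowsWeight n β σ else 0)
            = ((mid σ a b b').card : ℝ) * (((down σ a b').card : ℝ) * mallowsWeight n β σ) := by
          simp only [hσ, true_and, ite_and]
          simp [sum_const]
        rw [e, if_pos hσ]
        obtain ⟨⟨g1, g2, g3⟩, g4⟩ := hσ
        have h1 : (q : ℝ) + 1 ≤ ((down σ a b').card : ℝ) := by exact_mod_cast g4
        have h2 : 2 * (K : ℝ) ≤ ((mid σ a b b').card : ℝ) := by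
          have := card_mid σ (b := b) hab hb
          exact_mod_cast (by omega : 2 * K ≤ (mid σ a b b').card)
        have := weight_pos β σ
        calc ((q : ℝ) + 1) * K * (2 * mallowsWeight n β σ)
            = (2 * K) * ((q + 1) * mallowsWeight n β σ) := by ring
          _ ≤ _ := by gcongr
      · simp only [hσ, false_and, if_false]
        simp
    · rw [wt, mul_sum]
      refine sum_le_sum fun σ _ => ?_
      by_cases hσ : Good σ K p a b b' ∧ q ≤ (down σ a b').card
      · simp only [hσ, and_self, true_and, ite_and, if_true]
        have e := card_down_split σ (a := a) (b := b) (b' := b') (by omega)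
        obtain ⟨⟨g1, g2, g3⟩, g4⟩ := hσ
        set S := univ.filter fun k : Fin n => (b < (k : ℕ) ∧ (k : ℕ) ≤ b') ∧ (σ k : ℕ) ≤ a
        have h1 : (S.card : ℝ) ≤ (q : ℝ) + 1 := by
          exact_mod_cast (by omega : S.card ≤ q + 1)
        have h2 : ((down σ b' b').card : ℝ) ≤ K := by exact_mod_cast g2
        have := weight_pos β σ
        have e2 : ∑ k, ∑ x, (if k ∈ S then if x ∈ down σ b' b' then mallowsWeight n β σ
            else 0 else 0) = (S.card : ℝ) * (((down σ b' b').card : ℝ) * mallowsWeight n β σ) := by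
          simp [sum_const]
        rw [e2, mul_assoc]
        gcongr
      · simp [hσ]
  · intro σ k x
    split_ifs with hf hg
    · obtain ⟨-, h2, h3⟩ := hf
      rw [mem_mid] at h2
      rw [mem_down] at h3
      exact weight_swap hβ (by omega) (by omega)
    · exfalso
      apply hg
      obtain ⟨⟨⟨g1, g2, g3⟩, g4⟩, h2, h3⟩ := hf
      have h2' := mem_mid.mp h2
      have h3' := mem_down.mp h3
      have e1 := down_swap_erase (a := a) (b := b') h2'.1.2 h2'.2.1 h3
      have e2 := down_swap_same (σ := σ) (a := a) (b := a) (k := k) (x := x) (by left; omega)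
      have e3 := down_swap_same (σ := σ) (a := a) (b := b) (k := k) (x := x) (by left; omega)
      have e4 := down_swap_same (σ := σ) (a := b') (b := b') (k := k) (x := x) (by right; omega)
      refine ⟨⟨⟨by omega, by omega, by omega⟩, by omega⟩, ?_, ?_⟩
      · rw [mem_filter]
        refine ⟨mem_univ _, h2'.1, ?_⟩
        rw [Perm.mul_apply, swap_apply_left]; omega
      · rw [mem_down, Perm.mul_apply, swap_apply_right]; omega
    · exact (weight_pos β _).le
    · exact le_rfl

lemma window_tail {β : ℝ} (hβ : 0 < β) {K p a b : ℕ} (hab : a ≤ b) (hK : 0 < K)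
    (hb : b + 4 * K < n) (s : ℕ) :
    wt n β (fun σ => Good σ K p a b (b + 4 * K) ∧ p / 2 + s ≤ (down σ a (b + 4 * K)).card)
      ≤ (1 / 2) ^ s * wt n β (fun σ => (down σ a b).card = p) := by
  induction s with
  | zero => simpa using wt_mono β fun σ h => h.1.2.2
  | succ s ih =>
    have h1 := window_step (n := n) hβ (p := p) (q := p / 2 + s) hab hK hb (by omega)
    rw [← add_assoc, pow_succ]
    linarith

lemma sum_wt_fiber (β : ℝ) (N : Perm (Fin n) → ℕ) (hN : ∀ σ, N σ ≤ n)
    (E : Perm (Fin n) → Prop) :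
    wt n β E = ∑ p ∈ range (n + 1), wt n β (fun σ => E σ ∧ N σ = p) := by
  unfold wt
  rw [sum_comm]
  refine sum_congr rfl fun σ _ => ?_
  rw [sum_eq_single (N σ)]
  · simp
  · intro p _ hp; simp [Ne.symm hp]
  · intro h; exact absurd (mem_range.mpr (Nat.lt_succ_of_le (hN σ))) h

lemma card_down_le (σ : Perm (Fin n)) (a b : ℕ) : (down σ a b).card ≤ n := by
  simpa using card_le_univ (down σ a b)

/-- Apart from crowded cuts, and when at least `4s` points have `x > b` and `y ≤ a`, three quarters
of these points survive to `x > b + 4K` with probability at most `2⁻ˢ`. -/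
lemma window_shrink {β : ℝ} (hβ : 0 < β) {K a b s : ℕ} (hab : a ≤ b) (hK : 0 < K)
    (hb : b + 4 * K < n) :
    wt n β (fun σ => ((down σ a a).card ≤ K ∧ (down σ (b + 4 * K) (b + 4 * K)).card ≤ K) ∧
        3 * (down σ a b).card ≤ 4 * (down σ a (b + 4 * K)).card ∧ 4 * s ≤ (down σ a b).card)
      ≤ (1 / 2) ^ s * wt n β (fun _ => True) := by
  rw [sum_wt_fiber β (fun σ => (down σ a b).card) (fun σ => card_down_le σ a b),
    sum_wt_fiber β (fun σ => (down σ a b).card) (fun σ => card_down_le σ a b) (fun _ => True),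
    mul_sum]
  refine sum_le_sum fun p _ => ?_
  have h := window_tail (n := n) hβ (p := p) hab hK hb s
  simp only [true_and]
  refine le_trans (wt_mono β ?_) h
  rintro σ ⟨⟨⟨h1, h2⟩, h3, h4⟩, h5⟩
  exact ⟨⟨h1, h2, h5⟩, by omega⟩

lemma wt_or_le (β : ℝ) (p q : Perm (Fin n) → Prop) :
    wt n β (fun σ => p σ ∨ q σ) ≤ wt n β p + wt n β q := by
  unfold wt
  rw [← sum_add_distrib]
  refine sum_le_sum fun σ _ => ?_
  have := weight_pos β σ
  by_cases hp : p σ <;> by_cases hq : q σ <;> simp [hp, hq]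
  linarith

lemma wt_exists_le (β : ℝ) (E : ℕ → Perm (Fin n) → Prop) (c : ℝ) (m : ℕ)
    (h : ∀ i < m, wt n β (E i) ≤ c) :
    wt n β (fun σ => ∃ i < m, E i σ) ≤ m * c := by
  induction m with
  | zero => simp [wt]
  | succ m ih =>
    have h1 := ih fun i hi => h i (by omega)
    have h2 := h m (by omega)
    have h3 := wt_or_le β (fun σ => ∃ i < m, E i σ) (E m)
    push_cast
    refine (wt_mono β ?_).trans (h3.trans (by linarith))
    rintro σ ⟨i, hi, hE⟩
    rcases Nat.lt_succ_iff_lt_or_eq.mp hi with h | rfl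
    · exact Or.inl ⟨i, h, hE⟩
    · exact Or.inr hE

/-- Union bound over the cuts `a + 4Ki`, `i ≤ l`, with `K = 2h₀`. If no cut is crossed too often
and every window shrinks `|down σ a ·|` by the factor `3/4`, then at most `(3/4)ˡ K` points
have `y ≤ a` and `x > a + 4Kl`. -/
lemma multi_window {β C₀ : ℝ} (hβ : 0 < β) (hC : β ≤ C₀) {h₀ a l s : ℕ} (m : ℝ)
    (hh : 2 * (1 + 2 * C₀) / β ≤ h₀) (h0 : 0 < h₀) (hl : a + 4 * (2 * h₀) * l < n)
    (hs : 4 * (s : ℝ) ≤ m) (hm : (3 / 4 : ℝ) ^ l * (2 * h₀ : ℕ) < m) :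
    wt n β (fun σ => m ≤ ((down σ a (a + 4 * (2 * h₀) * l)).card : ℝ))
      ≤ ((l + 1 : ℕ) * (1 / 4) ^ h₀ + l * (1 / 2) ^ s) * wt n β (fun _ => True) := by
  set K := 2 * h₀ with hK
  have h1 := wt_exists_le (n := n) β
    (fun i σ => h₀ + h₀ ≤ (down σ (a + 4 * K * i) (a + 4 * K * i)).card) _ (l + 1)
    fun i _ => cross_tail hβ hC (a + 4 * K * i) h₀ h₀ hh
  have h2 := wt_exists_le (n := n) β (fun i σ => ((down σ a a).card ≤ K ∧
      (down σ (a + 4 * K * i + 4 * K) (a + 4 * K * i + 4 * K)).card ≤ K) ∧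
        3 * (down σ a (a + 4 * K * i)).card ≤ 4 * (down σ a (a + 4 * K * i + 4 * K)).card ∧
        4 * s ≤ (down σ a (a + 4 * K * i)).card) _ l
    fun i hi => window_shrink hβ (by omega) (by omega) (by nlinarith)
  rw [add_mul, mul_assoc ((l + 1 : ℕ) : ℝ), mul_assoc (l : ℝ)]
  refine le_trans (wt_mono β ?_) ((wt_or_le β _ _).trans (add_le_add h1 h2))
  intro σ hσ
  by_contra hcon
  push Not at hcon
  obtain ⟨c1, c2⟩ := hcon
  have mono : ∀ i ≤ l, m ≤ ((down σ a (a + 4 * K * i)).card : ℝ) := by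
    intro i hi
    refine hσ.trans ?_
    have := card_down_split σ (a := a) (b := a + 4 * K * i) (b' := a + 4 * K * l)
      (by have := Nat.mul_le_mul_left (4 * K) hi; omega)
    exact_mod_cast (by omega)
  have dec : ∀ i ≤ l, ((down σ a (a + 4 * K * i)).card : ℝ) ≤ (3 / 4 : ℝ) ^ i * (K : ℕ) := by
    intro i
    induction i with
    | zero =>
      intro _
      have := c1 0 (by omega)
      simp only [mul_zero, add_zero, pow_zero, one_mul] at this ⊢
      exact_mod_cast (by omega)
    | succ i ih =>
      intro hi
      have e1 := ih (by omega)
      have e2 := mono i (by omega)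
      have e3 := c2 i (by omega)
      have a1 := c1 0 (by omega)
      have a2 := c1 (i + 1) (by omega)
      have e4 : a + 4 * K * (i + 1) = a + 4 * K * i + 4 * K := by ring
      rw [e4] at a2 ⊢
      simp only [mul_zero, add_zero] at a1
      have e5 : 4 * s ≤ (down σ a (a + 4 * K * i)).card := by
        have : ((4 * s : ℕ) : ℝ) ≤ ((down σ a (a + 4 * K * i)).card : ℝ) := by
          push_cast; linarith
        exact_mod_cast this
      have e6 : ¬ (3 * (down σ a (a + 4 * K * i)).card
          ≤ 4 * (down σ a (a + 4 * K * i + 4 * K)).card) := by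
        intro h
        have := e3 ⟨by omega, by omega⟩ h
        omega
      have e7 : (4 : ℝ) * ((down σ a (a + 4 * K * i + 4 * K)).card : ℝ)
          ≤ 3 * ((down σ a (a + 4 * K * i)).card : ℝ) := by exact_mod_cast (by omega)
      rw [pow_succ]
      linarith
  have := dec l le_rfl
  linarith

/-! ### The bound for `R_{j,Δ}` and the reflection to `R'_{j,Δ}` -/

lemma mallowsP_eq (β : ℝ) (p : Perm (Fin n) → Prop) :
    mallowsP n β p = wt n β p / wt n β (fun _ => True) := by
  unfold mallowsP wt mallowsProb
  rw [sum_div]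
  refine sum_congr rfl fun σ _ => ?_
  split_ifs <;> simp

lemma wt_true_pos (β : ℝ) : 0 < wt n β (fun _ => True) := by
  unfold wt
  simp only [if_true]
  exact sum_pos (fun σ _ => weight_pos β σ) univ_nonempty

lemma cost_inv (σ : Perm (Fin n)) : cost σ⁻¹ = cost σ := by
  unfold cost
  rw [← Equiv.sum_comp σ]
  refine sum_congr rfl fun i _ => ?_
  rw [Perm.coe_inv, Equiv.symm_apply_apply, abs_sub_comm]

lemma mallowsP_inv (β : ℝ) (p : Perm (Fin n) → Prop) :
    mallowsP n β (fun σ => p σ⁻¹) = mallowsP n β p := by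
  rw [mallowsP_eq, mallowsP_eq]
  congr 1
  unfold wt
  rw [← Equiv.sum_comp (Equiv.inv (Perm (Fin n)))]
  refine sum_congr rfl fun σ _ => ?_
  simp only [Equiv.inv_apply, inv_inv, weight_eq, cost_inv]

lemma card_Rset' (σ : Perm (Fin n)) (j : Fin n) (Δ : ℝ) :
    (Rset' n σ j Δ).card = (Rset n σ⁻¹ j Δ).card := by
  refine card_bij (fun i _ => σ i) ?_ ?_ ?_
  · intro i hi
    simp only [Rset', Rset, mem_filter, mem_univ, true_and, Perm.coe_inv, Equiv.symm_apply_apply] at hi ⊢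
    exact ⟨hi.2, hi.1⟩
  · intro i _ k _ h; exact σ.injective h
  · intro i hi
    refine ⟨σ⁻¹ i, ?_, by simp⟩
    simp only [Rset', Rset, mem_filter, mem_univ, true_and, Perm.coe_inv, Equiv.apply_symm_apply] at hi ⊢
    exact ⟨hi.2, hi.1⟩

lemma exp_quarter_le : Real.exp (1 / 4) ≤ 4 / 3 := by
  have h1 := Real.add_one_le_exp (-(1 / 4) : ℝ)
  have h2 : Real.exp (1 / 4) * Real.exp (-(1 / 4)) = 1 := by rw [← Real.exp_add]; simp
  nlinarith [Real.exp_pos (1 / 4)]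

lemma exp_half_le : Real.exp (1 / 2) ≤ 2 := by
  have h1 := Real.add_one_le_exp (-(1 / 2) : ℝ)
  have h2 : Real.exp (1 / 2) * Real.exp (-(1 / 2)) = 1 := by rw [← Real.exp_add]; simp
  nlinarith [Real.exp_pos (1 / 2)]

/-- The bound for `R_{j,Δ}` with explicit constants. The cuts are `a = ⌊j - Δ⌋` and its translates
by multiples of `L = 8h₀`, `h₀ = ⌈2(1 + 2C₀)/β⌉`; the last one, `a + Ll`, does not exceed `j`, so
that `R_{j,Δ}(σ) ⊆ down σ a (a + Ll)`. -/
lemma Rset_bound {C₀ β Δ r : ℝ} (hβ : 0 < β) (hC : β ≤ C₀) (j : Fin n)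
    (hΔ : 80 * (1 + 2 * C₀) * β⁻¹ ≤ Δ)
    (hr : Real.exp (-(80 * (1 + 2 * C₀))⁻¹ * β * Δ) ≤ r) :
    mallowsP n β (fun σ => 7 * (1 + 2 * C₀) * r * β⁻¹ ≤ ((Rset n σ j Δ).card : ℝ))
      ≤ 4 * max (β * r⁻¹) Δ * Real.exp (-(1 / 2) * min r 1 * β⁻¹) := by
  have hC0 : 0 < C₀ := hβ.trans_le hC
  set A := 1 + 2 * C₀ with hA
  have hA1 : 1 < A := by linarith
  have hr0 : 0 < r := (Real.exp_pos _).trans_le hr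
  have hβi : 0 < β⁻¹ := inv_pos.mpr hβ
  set m := 7 * A * r * β⁻¹ with hm
  have hm0 : 0 < m := by positivity
  have hΔ1 : 160 ≤ Δ := by
    refine le_trans ?_ hΔ
    rw [← div_eq_mul_inv, le_div_iff₀ hβ]; linarith
  have hmin0 : 0 < min r 1 := lt_min hr0 one_pos
  have hmax : Δ ≤ max (β * r⁻¹) Δ := le_max_right _ _
  have hrhs : 0 ≤ 4 * max (β * r⁻¹) Δ * Real.exp (-(1 / 2) * min r 1 * β⁻¹) := by
    have : 0 ≤ max (β * r⁻¹) Δ := by linarith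
    positivity
  by_cases hj : ((j : ℕ) : ℝ) < Δ
  -- If `j < Δ` no value is at most `j - Δ`, so the set is empty for every `σ`.
  · have : mallowsP n β (fun σ => m ≤ ((Rset n σ j Δ).card : ℝ)) = 0 := by
      unfold mallowsP
      refine sum_eq_zero fun σ _ => if_neg ?_
      have : Rset n σ j Δ = ∅ := by
        ext i
        simp only [Rset, mem_filter, mem_univ, true_and, notMem_empty, iff_false, not_and, not_le]
        intro _
        have : (0 : ℝ) ≤ ((σ i : ℕ) : ℝ) := by positivity
        linarith
      simpa [this] using hm0
    rw [this]; exact hrhs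
  push Not at hj
  set h₀ := ⌈2 * A / β⌉₊ with hh₀
  have hh : 2 * A / β ≤ h₀ := Nat.le_ceil _
  have hh0 : 0 < h₀ := Nat.ceil_pos.mpr (by positivity)
  have hK : ((2 * h₀ : ℕ) : ℝ) ≤ 5 * A * β⁻¹ := by
    have h1 := (Nat.ceil_lt_add_one (a := 2 * A / β) (by positivity)).le
    rw [← hh₀] at h1
    have h2 : (1 : ℝ) ≤ C₀ * β⁻¹ := by rw [← div_eq_mul_inv, le_div_iff₀ hβ]; linarith
    push_cast
    rw [div_eq_mul_inv] at h1
    nlinarith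
  set L := 4 * (2 * h₀) with hL
  have hL1 : (1 : ℝ) ≤ L := by exact_mod_cast (by omega : 1 ≤ L)
  have hL0 : (0 : ℝ) < L := by linarith
  have hL2 : (L : ℝ) ≤ 20 * A * β⁻¹ := by
    rw [hL, Nat.cast_mul]; push_cast at hK ⊢; linarith
  set a := ⌊((j : ℕ) : ℝ) - Δ⌋₊ with ha
  set l := ⌊Δ / L⌋₊ with hl
  have ha1 : (a : ℝ) ≤ (j : ℕ) - Δ := Nat.floor_le (by linarith)
  have hl1 : (l : ℝ) ≤ Δ / L := Nat.floor_le (by positivity)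
  have hl1' : (L : ℝ) * l ≤ Δ := by rw [le_div_iff₀ hL0] at hl1; linarith
  have hl2 : Δ / L < l + 1 := Nat.lt_floor_add_one _
  have hlΔ : (l : ℝ) ≤ Δ := hl1.trans (div_le_self (by linarith) hL1)
  have hlj : a + L * l ≤ (j : ℕ) := by
    have : (a : ℝ) + L * l ≤ (j : ℕ) := by linarith
    exact_mod_cast this
  set s := ⌊m / 4⌋₊ with hs
  have hs1 : 4 * (s : ℝ) ≤ m := by
    have := Nat.floor_le (a := m / 4) (by positivity)
    rw [← hs] at this; linarith
  have hs2 : m / 4 < s + 1 := Nat.lt_floor_add_one _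
  have e34 : (3 / 4 : ℝ) ≤ Real.exp (-(1 / 4)) := by
    linarith [Real.add_one_le_exp (-(1 / 4) : ℝ)]
  have e43 := exp_quarter_le
  have hpow : (3 / 4 : ℝ) ^ l ≤ 4 / 3 * r := by
    calc (3 / 4 : ℝ) ^ l ≤ Real.exp (-(1 / 4)) ^ l := by gcongr
      _ = Real.exp (-(1 / 4) * l) := by rw [← Real.exp_nat_mul]; ring_nf
      _ ≤ Real.exp (1 / 4 + -(80 * A)⁻¹ * β * Δ) := by
          apply Real.exp_le_exp.mpr
          have h1 : Δ / (20 * A * β⁻¹) ≤ Δ / L := by gcongr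
          have h2 : Δ / (20 * A * β⁻¹) = 4 * ((80 * A)⁻¹ * β * Δ) := by field_simp; norm_num
          linarith
      _ = Real.exp (1 / 4) * Real.exp (-(80 * A)⁻¹ * β * Δ) := Real.exp_add _ _
      _ ≤ 4 / 3 * r := by gcongr
  have hm1 : (3 / 4 : ℝ) ^ l * (2 * h₀ : ℕ) < m := by
    calc (3 / 4 : ℝ) ^ l * (2 * h₀ : ℕ) ≤ (4 / 3 * r) * (5 * A * β⁻¹) := by gcongr
      _ = 20 / 3 * (A * r * β⁻¹) := by ring
      _ < 7 * (A * r * β⁻¹) := by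
          have : 0 < A * r * β⁻¹ := by positivity
          linarith
      _ = m := by rw [hm]; ring
  have main := multi_window (n := n) hβ hC (a := a) (l := l) m hh hh0
    (lt_of_le_of_lt hlj j.isLt) hs1 hm1
  have hsub : wt n β (fun σ => m ≤ ((Rset n σ j Δ).card : ℝ))
      ≤ wt n β (fun σ => m ≤ ((down σ a (a + 4 * (2 * h₀) * l)).card : ℝ)) := by
    refine wt_mono β fun σ hσ => hσ.trans ?_
    norm_cast
    refine card_le_card fun i hi => ?_
    simp only [Rset, mem_filter, mem_univ, true_and] at hi
    rw [mem_down]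
    refine ⟨?_, Nat.le_floor (by linarith)⟩
    have : ((j : ℕ) : ℝ) < (i : ℕ) := by linarith [hi.1]
    have : (j : ℕ) < (i : ℕ) := by exact_mod_cast this
    exact lt_of_le_of_lt hlj this
  rw [mallowsP_eq, div_le_iff₀ (wt_true_pos β)]
  refine (hsub.trans main).trans ?_
  refine mul_le_mul_of_nonneg_right ?_ (wt_true_pos β).le
  set T := Real.exp (-(1 / 2) * min r 1 * β⁻¹) with hT
  have hT0 : 0 < T := Real.exp_pos _
  have half : (1 / 2 : ℝ) ≤ Real.exp (-(1 / 2)) := by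
    linarith [Real.add_one_le_exp (-(1 / 2) : ℝ)]
  have t1 : (1 / 4 : ℝ) ^ h₀ ≤ T := by
    have q : (1 / 4 : ℝ) ≤ Real.exp (-(1 / 2)) := by linarith
    calc (1 / 4 : ℝ) ^ h₀ ≤ Real.exp (-(1 / 2)) ^ h₀ := by gcongr
      _ = Real.exp (-(1 / 2) * h₀) := by rw [← Real.exp_nat_mul]; ring_nf
      _ ≤ T := by
          apply Real.exp_le_exp.mpr
          have h1 : min r 1 * β⁻¹ ≤ 2 * A / β := by
            rw [div_eq_mul_inv]
            have : min r 1 ≤ 2 * A := (min_le_right _ _).trans (by linarith)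
            gcongr
          linarith
  have t2 : (1 / 2 : ℝ) ^ s ≤ 2 * T := by
    calc (1 / 2 : ℝ) ^ s ≤ Real.exp (-(1 / 2)) ^ s := by gcongr
      _ = Real.exp (-(1 / 2) * s) := by rw [← Real.exp_nat_mul]; ring_nf
      _ ≤ Real.exp (1 / 2 + -(1 / 2) * min r 1 * β⁻¹) := by
          apply Real.exp_le_exp.mpr
          have h1 : min r 1 * β⁻¹ ≤ r * β⁻¹ := by gcongr; exact min_le_left _ _
          have h2 : 4 * (r * β⁻¹) ≤ m := by
            rw [hm]
            have h3 : 4 ≤ 7 * A := by linarith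
            calc 4 * (r * β⁻¹) ≤ 7 * A * (r * β⁻¹) := by gcongr
              _ = 7 * A * r * β⁻¹ := by ring
          linarith
      _ = Real.exp (1 / 2) * T := Real.exp_add _ _
      _ ≤ 2 * T := by
          have := exp_half_le
          gcongr
  calc ((l + 1 : ℕ) : ℝ) * (1 / 4) ^ h₀ + l * (1 / 2) ^ s
      ≤ ((l + 1 : ℕ) : ℝ) * T + l * (2 * T) := by gcongr
    _ = (3 * l + 1) * T := by push_cast; ring
    _ ≤ 4 * max (β * r⁻¹) Δ * T := by
        gcongr
        linarith

end MallowsAux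

/-- For every `C₀ > 0` there are `C₁, C₂, C₃, c₁ > 0` (depending only on `C₀`) such that
for all `n ≥ 1`, `0 < β ≤ C₀`, `j ∈ [n]`, `Δ ≥ C₁ β⁻¹`, `r ≥ exp(-C₁⁻¹ β Δ)`:
`max{P_{n,β}(|R_{j,Δ}(σ)| ≥ C₂ r β⁻¹), P_{n,β}(|R'_{j,Δ}(σ)| ≥ C₂ r β⁻¹)}
  ≤ C₃ max{β r⁻¹, Δ} exp(-c₁ min{r,1} β⁻¹)`. -/
theorem statement5 (C₀ : ℝ) (hC₀ : 0 < C₀) :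
    ∃ C₁ C₂ C₃ c₁ : ℝ, 0 < C₁ ∧ 0 < C₂ ∧ 0 < C₃ ∧ 0 < c₁ ∧
      ∀ n : ℕ, 0 < n → ∀ β : ℝ, 0 < β → β ≤ C₀ → ∀ j : Fin n,
        ∀ Δ : ℝ, C₁ * β⁻¹ ≤ Δ → ∀ r : ℝ, Real.exp (-C₁⁻¹ * β * Δ) ≤ r →
          max (mallowsP n β fun σ => C₂ * r * β⁻¹ ≤ ((Rset n σ j Δ).card : ℝ))
              (mallowsP n β fun σ => C₂ * r * β⁻¹ ≤ ((Rset' n σ j Δ).card : ℝ))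
            ≤ C₃ * max (β * r⁻¹) Δ * Real.exp (-c₁ * min r 1 * β⁻¹) := by
  refine ⟨80 * (1 + 2 * C₀), 7 * (1 + 2 * C₀), 4, 1 / 2, by positivity, by positivity,
    by norm_num, by norm_num, ?_⟩
  intro n _ β hβ hC j Δ hΔ r hr
  have h := MallowsAux.Rset_bound hβ hC j hΔ hr
  refine max_le h ?_
  simp only [MallowsAux.card_Rset']
  rw [MallowsAux.mallowsP_inv β fun σ =>
    7 * (1 + 2 * C₀) * r * β⁻¹ ≤ ((Rset n σ j Δ).card : ℝ)]
  exact h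
end
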